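/- arXiv:2212.01273 — 5 statements merged into one kernel-verified Lean document; each statement's English description precedes it below -/
import Mathlib

section
/- Let g be a finite-dimensional complex sympathetic Lie algebra admitting a simple Levi subalgebra s, and suppose the radical h = Rad(g) decomposes into exactly 4 simple s-modules, satisfying the convention that every nonzero bracket of two of these submodules equals one of them. Then dim_C g ≥ 25. -/
namespace Symp

variable (g : Type*) [LieRing g] [LieAlgebra ℂ g]

/-- A derivation of `g` is inner if it is given by the adjoint action of some element. -/
def IsInnerDer {g : Type*} [LieRing g] [LieAlgebra ℂ g] (D : LieDerivation ℂ g g) : Prop :=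
  ∃ x : g, ∀ y : g, D y = ⁅x, y⁆

/-- `g` is perfect: `[g,g] = g`. -/
def IsPerfectLie : Prop :=
  ⁅(⊤ : LieIdeal ℂ g), (⊤ : LieIdeal ℂ g)⁆ = ⊤

/-- A sympathetic Lie algebra: trivial centre, perfect, all derivations inner. -/
def IsSympathetic : Prop :=
  LieAlgebra.center ℂ g = ⊥ ∧ IsPerfectLie g ∧
    ∀ D : LieDerivation ℂ g g, IsInnerDer D

/-- `s` is a simple Levi subalgebra of `g`: it is a simple Lie algebra and a vector-space
complement to the radical. -/
def IsSimpleLevi (s : LieSubalgebra ℂ g) : Prop :=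
  LieAlgebra.IsSimple ℂ s ∧
    IsCompl s.toSubmodule (LieAlgebra.radical ℂ g).toSubmodule

/-- `s` is a Levi subalgebra of `g` isomorphic to `sl₂(ℂ)`. -/
def IsSl2Levi (s : LieSubalgebra ℂ g) : Prop :=
  Nonempty (s ≃ₗ⁅ℂ⁆ LieAlgebra.SpecialLinear.sl (Fin 2) ℂ) ∧
    IsCompl s.toSubmodule (LieAlgebra.radical ℂ g).toSubmodule

/-- The subspace spanned by all brackets `⁅x, y⁆` with `x ∈ A`, `y ∈ B`. -/
def lieSpan2 (A B : Submodule ℂ g) : Submodule ℂ g :=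
  Submodule.span ℂ {z : g | ∃ x ∈ A, ∃ y ∈ B, z = ⁅x, y⁆}

/-- A subspace of `g` invariant under the bracket action of the subalgebra `s`. -/
def Invariant (s : LieSubalgebra ℂ g) (W : Submodule ℂ g) : Prop :=
  ∀ x ∈ s, ∀ w ∈ W, ⁅x, w⁆ ∈ W

/-- `V` is an irreducible `s`-submodule of `g`. -/
def IsIrreducibleSMod (s : LieSubalgebra ℂ g) (V : Submodule ℂ g) : Prop :=
  V ≠ ⊥ ∧ Invariant g s V ∧
    ∀ W : Submodule ℂ g, W ≤ V → Invariant g s W → W = ⊥ ∨ W = V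

/-- The family `V` is a decomposition of the radical of `g` into irreducible `s`-modules. -/
def IsDecomp (s : LieSubalgebra ℂ g) {k : ℕ} (V : Fin k → Submodule ℂ g) : Prop :=
  (∀ i, IsIrreducibleSMod g s (V i)) ∧ iSupIndep V ∧
    (⨆ i, V i) = (LieAlgebra.radical ℂ g).toSubmodule

/-- The convention: any nonzero bracket of two of the modules equals one of them,
for a unique index. -/
def Convention {k : ℕ} (V : Fin k → Submodule ℂ g) : Prop :=
  ∀ i j, lieSpan2 g (V i) (V j) ≠ ⊥ → ∃! q, lieSpan2 g (V i) (V j) = V q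

/-- The centre `Z(h)` of the radical `h = Rad(g)`, as a subspace of `g`. -/
def centerRad : Submodule ℂ g where
  carrier := {x | x ∈ LieAlgebra.radical ℂ g ∧ ∀ y ∈ LieAlgebra.radical ℂ g, ⁅x, y⁆ = 0}
  add_mem' := by
    rintro a b ⟨ha, ha'⟩ ⟨hb, hb'⟩
    exact ⟨add_mem ha hb, fun y hy => by rw [add_lie, ha' y hy, hb' y hy, add_zero]⟩
  zero_mem' := ⟨zero_mem _, fun y _ => zero_lie y⟩
  smul_mem' := by
    rintro c a ⟨ha, ha'⟩
    exact ⟨SMulMemClass.smul_mem c ha, fun y hy => by rw [smul_lie, ha' y hy, smul_zero]⟩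

/-- The derived subalgebra `[h,h]` of the radical `h = Rad(g)`, as a subspace of `g`. -/
def derivedRad : Submodule ℂ g :=
  lieSpan2 g (LieAlgebra.radical ℂ g).toSubmodule (LieAlgebra.radical ℂ g).toSubmodule

end Symp

namespace Symp
open Module LieAlgebra LieAlgebra.IsKilling LieModule

lemma finrank_eq_card_root {L : Type*} [LieRing L] [LieAlgebra ℂ L] [FiniteDimensional ℂ L]
    [IsKilling ℂ L] [Nontrivial L] (H : LieSubalgebra ℂ L) [H.IsCartanSubalgebra] :
    finrank ℂ L = finrank ℂ H + H.root.card := by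
  classical
  have hds := DirectSum.isInternal_submodule_of_iSupIndep_of_iSup_eq_top
    (LieSubmodule.iSupIndep_toSubmodule.mpr <| iSupIndep_genWeightSpace' ℂ H L)
    (by rw [← LieSubmodule.iSup_toSubmodule, iSup_genWeightSpace_eq_top' ℂ H L]; rfl)
  have h1 : finrank ℂ L = ∑ χ : Weight ℂ H L, finrank ℂ (genWeightSpace L χ) := by
    have e := LinearEquiv.ofBijective (DirectSum.coeLinearMap
      fun χ : Weight ℂ H L => (genWeightSpace L χ).toSubmodule) hds
    rw [← e.finrank_eq]
    exact Module.finrank_directSum (R := ℂ) (M := fun χ : Weight ℂ H L => (genWeightSpace L χ).toSubmodule)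
  rw [h1, ← Finset.sum_filter_add_sum_filter_not Finset.univ (fun χ : Weight ℂ H L => χ.IsNonZero)]
  rw [add_comm]
  congr 1
  · have : Finset.univ.filter (fun χ : Weight ℂ H L => ¬ χ.IsNonZero) = {0} := by
      ext χ
      simp [Weight.IsNonZero, Weight.isZero_iff_eq_zero]
    rw [this, Finset.sum_singleton]
    have h2 : ((rootSpace H (0 : H → ℂ)) : Submodule ℂ L) = H.toSubmodule := by
      rw [← coe_zeroRootSubalgebra, zeroRootSubalgebra_eq_of_is_cartan]
    show finrank ℂ ((rootSpace H (0 : H → ℂ)).toSubmodule) = _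
    rw [h2]; rfl
  · have : H.root = Finset.univ.filter (fun χ : Weight ℂ H L => χ.IsNonZero) := by
      ext χ; simp
    rw [this, Finset.card_eq_sum_ones]
    refine Finset.sum_congr rfl fun χ hχ => ?_
    exact finrank_rootSpace_eq_one χ (by simpa using hχ)

lemma simple_dichotomy (L : Type*) [LieRing L] [LieAlgebra ℂ L] [FiniteDimensional ℂ L]
    [IsSimple ℂ L] :
    (finrank ℂ L = 3 ∧ ∃ h e f : L, IsSl2Triple h e f) ∨ 8 ≤ finrank ℂ L := by
  classical
  have : Nontrivial L := by
    by_contra hn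
    rw [not_nontrivial_iff_subsingleton] at hn
    exact IsSimple.non_abelian (R := ℂ) (L := L) ⟨fun x y => Subsingleton.elim _ _⟩
  obtain ⟨x, hx⟩ := LieAlgebra.exists_isCartanSubalgebra_engel ℂ L
  set H := LieSubalgebra.engel ℂ x
  have hcard := finrank_eq_card_root H
  let P := rootSystem H
  have : P.IsIrreducible := inferInstanceAs (rootSystem H).IsIrreducible
  have : P.IsRootSystem := inferInstanceAs (rootSystem H).IsRootSystem
  have : Nontrivial (Dual ℂ H) := RootPairing.IsIrreducible.nontrivial P
  have : Nonempty H.root := by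
    by_contra hn
    rw [not_nonempty_iff] at hn
    have := RootPairing.IsRootSystem.span_root_eq_top (P := P)
    rw [Set.range_eq_empty, Submodule.span_empty] at this
    exact bot_ne_top this
  obtain ⟨α⟩ := this
  have h2 : finrank ℂ (Dual ℂ H) = finrank ℂ H := Subspace.dual_finrank_eq
  by_cases hall : ∀ β : H.root, P.root β = P.root α ∨ P.root β = - P.root α
  · left
    obtain ⟨h, e, f, ht, -, -⟩ := exists_isSl2Triple_of_weight_isNonZero
      (LieSubalgebra.isNonZero_coe_root α)
    refine ⟨?_, h, e, f, ht⟩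
    have hr : finrank ℂ (Dual ℂ H) = 1 := by
      have := RootPairing.IsRootSystem.span_root_eq_top (P := P)
      have h3 : (⊤ : Submodule ℂ (Dual ℂ H)) = Submodule.span ℂ {P.root α} := by
        rw [← this]
        apply le_antisymm
        · rw [Submodule.span_le]
          rintro _ ⟨β, rfl⟩
          rcases hall β with h | h
          · rw [h]; exact Submodule.mem_span_singleton_self _
          · rw [h]; exact Submodule.neg_mem _ (Submodule.mem_span_singleton_self _)
        · exact Submodule.span_mono (by simp)
      rw [← finrank_top, h3, finrank_span_singleton (P.ne_zero α)]
    have hc : H.root.card = 2 := by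
      rw [← Fintype.card_coe]
      have : (Finset.univ : Finset H.root) = {α, P.reflectionPerm α α} := by
        ext β
        simp only [Finset.mem_univ, Finset.mem_insert, Finset.mem_singleton, true_iff]
        rcases hall β with h | h
        · left; exact P.root.injective h
        · right; apply P.root.injective
          rw [h, RootPairing.root_reflectionPerm, RootPairing.reflection_apply_self]
      rw [← Finset.card_univ, this, Finset.card_pair]
      intro h
      have h4 := congrArg P.root h
      rw [RootPairing.root_reflectionPerm, RootPairing.reflection_apply_self] at h4
      have h6 : (2:ℂ) • P.root α = 0 := by
        rw [two_smul]; nth_rewrite 1 [h4]; simp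
      rcases smul_eq_zero.mp h6 with h7 | h7
      · norm_num at h7
      · exact P.ne_zero α h7
    omega
  · right
    push Not at hall
    obtain ⟨β₀, hβ₀⟩ := hall
    have hpm : ∀ β : H.root, P.root β ∈ Submodule.span ℂ {P.root α} →
        P.root β = P.root α ∨ P.root β = - P.root α := by
      intro β hβ
      obtain ⟨k, hk⟩ := Submodule.mem_span_singleton.mp hβ
      have h5 : (β.1 : H → ℂ) = k • (α.1 : H → ℂ) := by
        have := congrArg (fun φ : Dual ℂ H => (φ : H → ℂ)) hk.symm
        exact this
      rcases eq_neg_or_eq_of_eq_smul α.1 β.1 (LieSubalgebra.isNonZero_coe_root β) k h5 with h | h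
      · right
        show (β.1.toLinear : Dual ℂ H) = - α.1.toLinear
        rw [h, Weight.toLinear_neg]
      · left
        show (β.1.toLinear : Dual ℂ H) = α.1.toLinear
        rw [h]
    -- a non-orthogonal root
    have hex : ∃ β : H.root, P.root β ∉ Submodule.span ℂ {P.root α} ∧ ¬ P.IsOrthogonal β α := by
      by_contra hcon
      push Not at hcon
      have := RootPairing.span_root_image_eq_top_of_forall_orthogonal P {α} (by simp)
        (by
          intro j hj i hi
          rw [Set.mem_singleton_iff] at hi
          subst hi
          rw [Set.image_singleton] at hj
          exact hcon j hj)
      rw [Set.image_singleton] at this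
      rcases hpm β₀ (by rw [this]; trivial) with h | h
      · exact hβ₀.1 h
      · exact hβ₀.2 h
    obtain ⟨β, hβ, hort⟩ := hex
    have hk : P.pairing β α ≠ 0 := by
      intro h
      apply hort
      exact ⟨h, RootPairing.pairing_eq_zero_iff'.mp h⟩
    set a := P.root α with ha
    set b := P.root β with hb
    set k := P.pairing β α with hkdef
    have hlin : LinearIndependent ℂ ![a, b] := by
      rw [LinearIndependent.pair_iff' (P.ne_zero α)]
      intro c hc
      exact hβ (Submodule.mem_span_singleton.mpr ⟨c, hc⟩)
    have hind : ∀ s t : ℂ, s • a + t • b = 0 → s = 0 ∧ t = 0 := LinearIndependent.pair_iff.mp hlin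
    have hrank : 2 ≤ finrank ℂ H := by
      rw [← h2]
      simpa using hlin.fintype_card_le_finrank
    have hneg : ∀ γ : H.root, ∃ δ : H.root, P.root δ = - P.root γ := fun γ =>
      ⟨P.reflectionPerm γ γ, by
        rw [RootPairing.root_reflectionPerm, RootPairing.reflection_apply_self]⟩
    obtain ⟨α', hα'⟩ := hneg α
    obtain ⟨β', hβ'⟩ := hneg β
    set γ := P.reflectionPerm α β with hγ
    have hc : P.root γ = b - k • a := by
      rw [hγ, RootPairing.root_reflectionPerm, RootPairing.reflection_apply_root]
    obtain ⟨γ', hγ'⟩ := hneg γ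
    have key : ∀ s t s' t' : ℂ, s • a + t • b = s' • a + t' • b → s = s' ∧ t = t' := by
      intro s t s' t' h
      have := hind (s - s') (t - t') (by
        rw [sub_smul, sub_smul]
        rw [← sub_eq_zero] at h
        rw [← h]; abel)
      exact ⟨sub_eq_zero.mp this.1, sub_eq_zero.mp this.2⟩
    have e1 : P.root α = (1:ℂ) • a + (0:ℂ) • b := by simp [ha]
    have e2 : P.root α' = (-1:ℂ) • a + (0:ℂ) • b := by simp [hα', ha]
    have e3 : P.root β = (0:ℂ) • a + (1:ℂ) • b := by simp [hb]
    have e4 : P.root β' = (0:ℂ) • a + (-1:ℂ) • b := by simp [hβ', hb]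
    have e5 : P.root γ = (-k) • a + (1:ℂ) • b := by rw [hc, neg_smul, one_smul]; abel
    have e6 : P.root γ' = k • a + (-1:ℂ) • b := by rw [hγ', hc, neg_smul, one_smul]; abel
    have ne : ∀ (x y : H.root) (s t s' t' : ℂ), P.root x = s • a + t • b →
        P.root y = s' • a + t' • b → (s ≠ s' ∨ t ≠ t') → x ≠ y := by
      rintro x y s t s' t' hx hy h rfl
      have := key _ _ _ _ (hx.symm.trans hy)
      rcases h with h | h
      · exact h this.1
      · exact h this.2
    have hsix : 6 ≤ H.root.card := by
      rw [← Fintype.card_coe]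
      have : ({α, α', β, β', γ, γ'} : Finset H.root).card = 6 := by
        rw [Finset.card_insert_of_notMem, Finset.card_insert_of_notMem,
          Finset.card_insert_of_notMem, Finset.card_insert_of_notMem,
          Finset.card_insert_of_notMem, Finset.card_singleton]
        · simp only [Finset.mem_singleton]
          exact ne _ _ _ _ _ _ e5 e6 (Or.inr (by norm_num))
        · simp only [Finset.mem_singleton, Finset.mem_insert, not_or]
          exact ⟨ne _ _ _ _ _ _ e4 e5 (Or.inr (by norm_num)), ne _ _ _ _ _ _ e4 e6 (Or.inl hk.symm)⟩
        · simp only [Finset.mem_singleton, Finset.mem_insert, not_or]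
          exact ⟨ne _ _ _ _ _ _ e3 e4 (Or.inr (by norm_num)),
            ne _ _ _ _ _ _ e3 e5 (Or.inl (by simpa using hk)),
            ne _ _ _ _ _ _ e3 e6 (Or.inr (by norm_num))⟩
        · simp only [Finset.mem_singleton, Finset.mem_insert, not_or]
          exact ⟨ne _ _ _ _ _ _ e2 e3 (Or.inl (by norm_num)),
            ne _ _ _ _ _ _ e2 e4 (Or.inl (by norm_num)),
            ne _ _ _ _ _ _ e2 e5 (Or.inr (by norm_num)),
            ne _ _ _ _ _ _ e2 e6 (Or.inr (by norm_num))⟩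
        · simp only [Finset.mem_singleton, Finset.mem_insert, not_or]
          exact ⟨ne _ _ _ _ _ _ e1 e2 (Or.inl (by norm_num)),
            ne _ _ _ _ _ _ e1 e3 (Or.inl (by norm_num)),
            ne _ _ _ _ _ _ e1 e4 (Or.inl (by norm_num)),
            ne _ _ _ _ _ _ e1 e5 (Or.inr (by norm_num)),
            ne _ _ _ _ _ _ e1 e6 (Or.inr (by norm_num))⟩
      rw [← this]
      exact Finset.card_le_univ _
    omega
end Symp

namespace Symp
open Module LieAlgebra LieModule

lemma trace_zero_of_perfect {L : Type*} [LieRing L] [LieAlgebra ℂ L] (hp : IsPerfectLie L)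
    (M : Type*) [AddCommGroup M] [Module ℂ M] [LieRingModule L M] [LieModule ℂ L M] (x : L) :
    LinearMap.trace ℂ M (toEnd ℂ L M x) = 0 := by
  have hx : x ∈ ⁅(⊤ : LieIdeal ℂ L), (⊤ : LieIdeal ℂ L)⁆ := by rw [hp]; trivial
  rw [← LieSubmodule.mem_toSubmodule, LieSubmodule.lieIdeal_oper_eq_linear_span'] at hx
  induction hx using Submodule.span_induction with
  | mem x h =>
    obtain ⟨y, -, z, -, rfl⟩ := h
    have : toEnd ℂ L M ⁅y, z⁆ = toEnd ℂ L M y * toEnd ℂ L M z - toEnd ℂ L M z * toEnd ℂ L M y := by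
      ext m; simp
    rw [this, map_sub, LinearMap.trace_mul_comm, sub_self]
  | zero => simp
  | add x y _ _ hx hy => rw [map_add, map_add, hx, hy, add_zero]
  | smul c x _ hx => rw [map_smul, map_smul, hx, smul_zero]

lemma exists_killed {L : Type*} [LieRing L] [LieAlgebra ℂ L] [FiniteDimensional ℂ L]
    (hp : IsPerfectLie L)
    (M : Type*) [AddCommGroup M] [Module ℂ M] [LieRingModule L M] [LieModule ℂ L M]
    [FiniteDimensional ℂ M] [Nontrivial M] :
    ∃ W : LieSubmodule ℂ L M, W ≠ ⊥ ∧ ∀ x ∈ radical ℂ L, ∀ w ∈ W, ⁅x, w⁆ = 0 := by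
  obtain ⟨χ, hχ⟩ := LieModule.exists_nontrivial_weightSpace_of_isSolvable ℂ (radical ℂ L) M
  let W : LieSubmodule ℂ L M := weightSpaceOfIsLieTower ℂ M (χ : radical ℂ L → ℂ)
  have hW : Nontrivial W := hχ
  refine ⟨W, ?_, ?_⟩
  · rintro h
    rw [h] at hW
    exact not_subsingleton _ (inferInstance : Subsingleton (⊥ : LieSubmodule ℂ L M))
  intro x hx w hw
  have hw' : ∀ w ∈ W, ⁅x, w⁆ = χ ⟨x, hx⟩ • w := by
    intro w hw
    have := (mem_weightSpace (χ : radical ℂ L → ℂ) w).mp hw ⟨x, hx⟩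
    exact this
  have ht := trace_zero_of_perfect hp W x
  have : toEnd ℂ L W x = χ ⟨x, hx⟩ • LinearMap.id := by
    ext w
    exact hw' w w.2
  rw [this, map_smul, LinearMap.trace_id, smul_eq_mul, mul_eq_zero] at ht
  rcases ht with h | h
  · rw [hw' w hw, h, zero_smul]
  · have := Module.finrank_pos (R := ℂ) (M := W)
    norm_cast at h
    omega

lemma toEnd_nilp {L : Type*} [LieRing L] [LieAlgebra ℂ L] [FiniteDimensional ℂ L]
    (hp : IsPerfectLie L) {x : L} (hx : x ∈ radical ℂ L) (n : ℕ) :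
    ∀ (M : Type*) [AddCommGroup M] [Module ℂ M] [LieRingModule L M] [LieModule ℂ L M]
    [FiniteDimensional ℂ M], finrank ℂ M ≤ n → IsNilpotent (toEnd ℂ L M x) := by
  induction n with
  | zero =>
    intro M _ _ _ _ _ h
    have : Subsingleton M := Module.finrank_zero_iff.mp (Nat.le_zero.mp h)
    exact ⟨1, LinearMap.ext fun m => Subsingleton.elim _ _⟩
  | succ n ih =>
    intro M _ _ _ _ _ h
    rcases subsingleton_or_nontrivial M with hM | hM
    · exact ⟨1, LinearMap.ext fun m => Subsingleton.elim _ _⟩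
    obtain ⟨W, hW, hk⟩ := exists_killed hp M
    have h1 : finrank ℂ (M ⧸ W) ≤ n := by
      have h2 := Submodule.finrank_quotient_add_finrank W.toSubmodule
      have h3 : 0 < finrank ℂ W.toSubmodule := by
        rw [Module.finrank_pos_iff, Submodule.nontrivial_iff_ne_bot]
        simpa using hW
      have h4 : finrank ℂ (M ⧸ W) = finrank ℂ (M ⧸ W.toSubmodule) := rfl
      omega
    obtain ⟨k, hk'⟩ := ih (M ⧸ W) h1
    refine ⟨k + 1, LinearMap.ext fun m => ?_⟩
    have h5 : ∀ (j : ℕ) (m : M), LieSubmodule.Quotient.mk (N := W) ((toEnd ℂ L M x ^ j) m)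
        = (toEnd ℂ L (M ⧸ W) x ^ j) (LieSubmodule.Quotient.mk m) := by
      intro j
      induction j with
      | zero => intro m; simp
      | succ j ihj =>
        intro m
        rw [pow_succ', pow_succ']
        simp only [Module.End.mul_apply]
        rw [← ihj]
        rfl
    have h6 : (toEnd ℂ L M x ^ k) m ∈ W := by
      have := h5 k m
      rw [hk'] at this
      exact (LieSubmodule.Quotient.mk_eq_zero W).mp this
    rw [pow_succ']
    exact hk x hx _ h6

lemma ad_nilp {L : Type*} [LieRing L] [LieAlgebra ℂ L] [FiniteDimensional ℂ L]
    (hp : IsPerfectLie L) {x : L} (hx : x ∈ radical ℂ L) : IsNilpotent (toEnd ℂ L L x) :=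
  toEnd_nilp hp hx _ L le_rfl

lemma exists_depth {g : Type*} [LieRing g] [LieAlgebra ℂ g] [FiniteDimensional ℂ g]
    (hp : IsPerfectLie g) {n : ℕ} (V : Fin n → Submodule ℂ g) (h0 : ∀ i, V i ≠ ⊥)
    (hle : ∀ i, V i ≤ (radical ℂ g).toSubmodule) :
    ∃ d : Fin n → ℕ, ∀ i j q, lieSpan2 g (V i) (V j) = V q → d i < d q ∧ d j < d q := by
  classical
  have hnil : LieModule.IsNilpotent (radical ℂ g) g := by
    rw [LieModule.isNilpotent_iff_forall' (R := ℂ)]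
    intro x
    exact ad_nilp hp x.2
  obtain ⟨N, hN⟩ := (LieModule.isNilpotent_iff ℂ (radical ℂ g) g).mp hnil
  let F : ℕ → Submodule ℂ g := fun k => (lowerCentralSeries ℂ (radical ℂ g) g k).toSubmodule
  have hF0 : F 0 = ⊤ := by simp [F]
  have hFN : F N = ⊥ := by simp [F, hN]
  have hanti : Antitone F := fun a b h => LieModule.antitone_lowerCentralSeries ℂ (radical ℂ g) g h
  have hbr : ∀ k x y, x ∈ (radical ℂ g) → y ∈ F k → ⁅x, y⁆ ∈ F (k + 1) := by
    intro k x y hx hy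
    simp only [F, LieModule.lowerCentralSeries_succ]
    exact LieSubmodule.lie_mem_lie (x := (⟨x, hx⟩ : radical ℂ g)) (LieSubmodule.mem_top _) hy
  have hex : ∀ i, ∃ k, V i ≤ F k ∧ ¬ V i ≤ F (k + 1) := by
    intro i
    have h : ∃ k, ¬ V i ≤ F k := ⟨N, fun h => h0 i (by rw [hFN] at h; exact le_bot_iff.mp h)⟩
    have h1 := Nat.find_spec h
    have h2 : Nat.find h ≠ 0 := by
      intro h3; rw [h3, hF0] at h1; exact h1 le_top
    obtain ⟨k, hk⟩ := Nat.exists_eq_succ_of_ne_zero h2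
    refine ⟨k, ?_, ?_⟩
    · by_contra h4
      exact Nat.find_min h (m := k) (by omega) h4
    · rw [hk] at h1; exact h1
  choose d hd hd' using hex
  have key : ∀ i j q, lieSpan2 g (V i) (V j) ≤ F (d q + 1) → lieSpan2 g (V i) (V j) = V q → False :=
    fun i j q h1 h2 => hd' q (h2 ▸ h1)
  refine ⟨d, fun i j q h => ⟨?_, ?_⟩⟩
  · by_contra hc
    refine key i j q ?_ h
    refine Submodule.span_le.mpr ?_
    rintro _ ⟨x, hx, y, hy, rfl⟩
    rw [← lie_skew]
    exact Submodule.neg_mem _ (hbr _ _ _ (hle j hy) (hanti (not_lt.mp hc) (hd i hx)))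
  · by_contra hc
    refine key i j q ?_ h
    refine Submodule.span_le.mpr ?_
    rintro _ ⟨x, hx, y, hy, rfl⟩
    exact (hbr _ _ _ (hle i hx) (hanti (not_lt.mp hc) (hd j hy)))
end Symp

namespace Symp
open Module LieAlgebra LieModule

/-- The hypotheses of the theorem, bundled. -/
structure Good (g : Type*) [LieRing g] [LieAlgebra ℂ g] (s : LieSubalgebra ℂ g)
    (V : Fin 4 → Submodule ℂ g) : Prop where
  symp : IsSympathetic g
  levi : IsSimpleLevi g s
  dec : IsDecomp g s V
  conv : Convention g V

section
variable {g : Type*} [LieRing g] [LieAlgebra ℂ g] {s : LieSubalgebra ℂ g}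
  {V : Fin 4 → Submodule ℂ g}

lemma lie_mem_span2 {A B : Submodule ℂ g} {x y : g} (hx : x ∈ A) (hy : y ∈ B) :
    ⁅x, y⁆ ∈ lieSpan2 g A B := Submodule.subset_span ⟨x, hx, y, hy, rfl⟩

lemma lieSpan2_comm (A B : Submodule ℂ g) : lieSpan2 g A B = lieSpan2 g B A := by
  have : ∀ A B : Submodule ℂ g, lieSpan2 g A B ≤ lieSpan2 g B A := by
    intro A B
    refine Submodule.span_le.mpr ?_
    rintro _ ⟨x, hx, y, hy, rfl⟩
    rw [← lie_skew]
    exact Submodule.neg_mem _ (lie_mem_span2 hy hx)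
  exact le_antisymm (this _ _) (this _ _)

lemma Good.perm (G : Good g s V) (σ : Equiv.Perm (Fin 4)) : Good g s (V ∘ σ) where
  symp := G.symp
  levi := G.levi
  dec := by
    refine ⟨fun i => G.dec.1 _, G.dec.2.1.comp σ.injective, ?_⟩
    rw [← G.dec.2.2]
    exact σ.iSup_comp (g := V)
  conv := by
    intro i j h
    obtain ⟨q, hq, hu⟩ := G.conv _ _ h
    refine ⟨σ.symm q, by simpa using hq, fun r hr => ?_⟩
    rw [← hu (σ r) hr]; simp

lemma Good.ne_bot (G : Good g s V) (i) : V i ≠ ⊥ := (G.dec.1 i).1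
lemma Good.inv (G : Good g s V) (i) : Invariant g s (V i) := (G.dec.1 i).2.1
lemma Good.irr (G : Good g s V) (i) : ∀ W : Submodule ℂ g, W ≤ V i → Invariant g s W → W = ⊥ ∨ W = V i :=
  (G.dec.1 i).2.2
lemma Good.le_rad (G : Good g s V) (i) : V i ≤ (radical ℂ g).toSubmodule := by
  rw [← G.dec.2.2]; exact le_iSup V i

lemma Good.inj (G : Good g s V) : Function.Injective V :=
  G.dec.2.1.injective G.ne_bot

/-- The pieces: the Levi factor together with the simple modules. -/
def pieces (s : LieSubalgebra ℂ g) (V : Fin 4 → Submodule ℂ g) : Option (Fin 4) → Submodule ℂ g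
  | none => s.toSubmodule
  | some i => V i

lemma Good.pieces_sup (G : Good g s V) : (⨆ o, pieces s V o) = ⊤ := by
  rw [iSup_option]
  show s.toSubmodule ⊔ (⨆ i, V i) = ⊤
  rw [G.dec.2.2]
  exact G.levi.2.sup_eq_top

lemma Good.pieces_sum (G : Good g s V) (x : g) : ∃ a ∈ s, ∃ v : Fin 4 → g, (∀ i, v i ∈ V i) ∧
    x = a + ∑ i, v i := by
  have hx : x ∈ s.toSubmodule ⊔ (⨆ i, V i) := by
    rw [G.dec.2.2, G.levi.2.sup_eq_top]; trivial
  obtain ⟨a, ha, r, hr, rfl⟩ := Submodule.mem_sup.mp hx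
  obtain ⟨v, hv⟩ := (Submodule.mem_iSup_iff_exists_finsupp V r).mp hr
  refine ⟨a, ha, v, hv.1, ?_⟩
  rw [← hv.2, Finsupp.sum_fintype]
  simp

lemma Good.sum_zero (G : Good g s V) {a : g} (ha : a ∈ s) {v : Fin 4 → g} (hv : ∀ i, v i ∈ V i)
    (h : a + ∑ i, v i = 0) : a = 0 ∧ ∀ i, v i = 0 := by
  have h1 : ∑ i, v i ∈ (radical ℂ g).toSubmodule :=
    Submodule.sum_mem _ fun i _ => G.le_rad i (hv i)
  have h2 : a = 0 := by
    have : a ∈ (radical ℂ g).toSubmodule := by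
      rw [eq_neg_of_add_eq_zero_left h]
      exact Submodule.neg_mem _ h1
    exact (Submodule.disjoint_def.mp G.levi.2.disjoint) a ha this
  refine ⟨h2, ?_⟩
  rw [h2, zero_add] at h
  have := (iSupIndep_iff_finsetSum_eq_zero_imp_eq_zero V).mp G.dec.2.1 Finset.univ v
    (fun i _ => hv i) h
  exact fun i => this i (Finset.mem_univ _)

lemma Good.bij (G : Good g s V) : Function.Bijective
    (LinearMap.coprod s.toSubmodule.subtype
      (LinearMap.lsum ℂ (fun i => V i) ℂ (fun i => (V i).subtype))) := by
  classical
  have hind : Function.Injective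
      (LinearMap.coprod s.toSubmodule.subtype (LinearMap.lsum ℂ (fun i => V i) ℂ (fun i => (V i).subtype))) := by
    rw [← LinearMap.ker_eq_bot, LinearMap.ker_eq_bot']
    rintro ⟨a, v⟩ h
    have h' : (a : g) + ∑ i, (v i : g) = 0 := by
      simpa [LinearMap.lsum_apply] using h
    obtain ⟨h1, h2⟩ := G.sum_zero a.2 (fun i => (v i).2) h'
    ext
    · exact h1
    · exact h2 _
  have hsur : Function.Surjective
      (LinearMap.coprod s.toSubmodule.subtype (LinearMap.lsum ℂ (fun i => V i) ℂ (fun i => (V i).subtype))) := by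
    intro x
    obtain ⟨a, ha, v, hv, rfl⟩ := G.pieces_sum x
    refine ⟨(⟨a, ha⟩, fun i => ⟨v i, hv i⟩), ?_⟩
    simp [LinearMap.lsum_apply]
  exact ⟨hind, hsur⟩

lemma Good.exists_linear (G : Good g s V) (ψ : ∀ i, V i →ₗ[ℂ] g) :
    ∃ D : g →ₗ[ℂ] g, (∀ x ∈ s, D x = 0) ∧ ∀ i (x : V i), D x = ψ i x := by
  classical
  let e := LinearEquiv.ofBijective _ G.bij
  refine ⟨(LinearMap.coprod (0 : s.toSubmodule →ₗ[ℂ] g) (LinearMap.lsum ℂ (fun i => V i) ℂ ψ)) ∘ₗ e.symm.toLinearMap, ?_, ?_⟩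
  · intro x hx
    have : e.symm x = (⟨x, hx⟩, 0) := by
      rw [LinearEquiv.symm_apply_eq]
      simp [e]
    simp [this]
  · intro i x
    have : e.symm x = (0, Pi.single i x) := by
      rw [LinearEquiv.symm_apply_eq]
      simp [e, LinearMap.lsum_apply]
      rw [Finset.sum_eq_single i]
      · simp
      · intro j _ hj; simp [Pi.single_eq_of_ne hj]
      · simp
    simp only [LinearMap.coe_comp, Function.comp_apply, LinearEquiv.coe_coe, this,
      LinearMap.coprod_apply, map_zero, zero_add, LinearMap.lsum_apply, LinearMap.sum_apply,
      LinearMap.proj_apply]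
    rw [Finset.sum_eq_single i]
    · simp
    · intro j _ hj; simp [Pi.single_eq_of_ne hj]
    · simp

lemma Good.center_s (G : Good g s V) {a : g} (ha : a ∈ s) (h : ∀ y ∈ s, ⁅a, y⁆ = 0) : a = 0 := by
  have := G.levi.1
  have hc : (⟨a, ha⟩ : s) ∈ LieAlgebra.center ℂ s := by
    rw [LieModule.mem_maxTrivSubmodule]
    intro y
    rw [← lie_skew, neg_eq_zero]
    exact Subtype.ext (h y y.2)
  have h0 : LieAlgebra.center ℂ s = ⊥ := by
    rcases IsSimple.eq_bot_or_eq_top (R := ℂ) (LieAlgebra.center ℂ s) with h | h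
    · exact h
    · exact absurd (by rwa [← LieAlgebra.isLieAbelian_iff_center_eq_top] at h) (IsSimple.non_abelian (R := ℂ) (L := s))
  rw [h0, LieSubmodule.mem_bot] at hc
  exact congrArg Subtype.val hc

lemma rad_ideal {x y : g} (hy : y ∈ (radical ℂ g).toSubmodule) :
    ⁅x, y⁆ ∈ (radical ℂ g).toSubmodule := (radical ℂ g).lie_mem hy

/-- A linear map killing `s`, `s`-equivariant and satisfying the derivation rule on the modules
is given by an element of the radical. -/
lemma Good.inner (G : Good g s V) (D : g →ₗ[ℂ] g) (h0 : ∀ x ∈ s, D x = 0)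
    (h1 : ∀ x ∈ s, ∀ i, ∀ v ∈ V i, D ⁅x, v⁆ = ⁅x, D v⁆)
    (h2 : ∀ i j, ∀ v ∈ V i, ∀ w ∈ V j, D ⁅v, w⁆ = ⁅v, D w⁆ - ⁅w, D v⁆) :
    ∃ x ∈ (radical ℂ g).toSubmodule, (∀ y ∈ s, ⁅x, y⁆ = 0) ∧ ∀ y, D y = ⁅x, y⁆ := by
  have hp : ∀ o o', ∀ x ∈ pieces s V o, ∀ y ∈ pieces s V o', D ⁅x, y⁆ = ⁅x, D y⁆ - ⁅y, D x⁆ := by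
    rintro (_ | i) (_ | j) x hx y hy
    · have hx' : x ∈ s := hx
      have hy' : y ∈ s := hy
      rw [h0 _ (s.lie_mem hx' hy'), h0 x hx', h0 y hy']; simp
    · rw [h1 x hx j y hy, h0 x hx]; simp
    · rw [← lie_skew, map_neg, h1 y hy i x hx, h0 y hy]; simp
    · exact h2 i j x hx y hy
  have hl : ∀ x y, D ⁅x, y⁆ = ⁅x, D y⁆ - ⁅y, D x⁆ := by
    intro x y
    have hx : x ∈ ⨆ o, pieces s V o := by rw [G.pieces_sup]; trivial
    have hy : y ∈ ⨆ o, pieces s V o := by rw [G.pieces_sup]; trivial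
    induction hx using Submodule.iSup_induction' with
    | mem o x hx =>
      induction hy using Submodule.iSup_induction' with
      | mem o' y hy => exact hp o o' x hx y hy
      | zero => simp
      | add y y' _ _ e e' => simp only [lie_add, map_add, add_lie, e, e']; abel
    | zero => simp
    | add x x' _ _ e e' => simp only [lie_add, map_add, add_lie, e, e']; abel
  obtain ⟨x, hx⟩ := G.symp.2.2 ⟨D, hl⟩
  have hx' : ∀ y, D y = ⁅x, y⁆ := hx
  have hsx : x ∈ s.toSubmodule ⊔ (radical ℂ g).toSubmodule := by
    rw [G.levi.2.sup_eq_top]; trivial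
  obtain ⟨a, ha, r, hr, rfl⟩ := Submodule.mem_sup.mp hsx
  have ha0 : a = 0 := by
    refine G.center_s ha fun y hy => ?_
    have e1 : ⁅a, y⁆ + ⁅r, y⁆ = 0 := by rw [← add_lie, ← hx', h0 y hy]
    have e2 : ⁅r, y⁆ ∈ (radical ℂ g).toSubmodule := by
      rw [← lie_skew]; exact Submodule.neg_mem _ (rad_ideal hr)
    refine (Submodule.disjoint_def.mp G.levi.2.disjoint) _ (s.lie_mem ha hy) ?_
    rw [eq_neg_of_add_eq_zero_left e1]
    exact Submodule.neg_mem _ e2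
  subst ha0
  rw [zero_add] at hx'
  exact ⟨r, hr, fun y hy => by rw [← hx', h0 y hy], hx'⟩

lemma Good.weights [FiniteDimensional ℂ g] (G : Good g s V) (w : Fin 4 → ℂ)
    (hw : ∀ i j q, lieSpan2 g (V i) (V j) = V q → w i + w j = w q) : w = 0 := by
  obtain ⟨D, hD0, hD⟩ := G.exists_linear (fun i => w i • (V i).subtype)
  have hD' : ∀ i, ∀ v ∈ V i, D v = w i • v := fun i v hv => hD i ⟨v, hv⟩
  obtain ⟨x, hx, -, hxD⟩ := G.inner D hD0
    (fun x hx i v hv => by rw [hD' i v hv, hD' i _ (G.inv i x hx v hv), lie_smul])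
    (by
      intro i j v hv w' hw'
      rw [hD' i v hv, hD' j w' hw', lie_smul, lie_smul, ← lie_skew v w']
      by_cases hb : lieSpan2 g (V i) (V j) = ⊥
      · have : ⁅v, w'⁆ = 0 := by
          have := lie_mem_span2 hv hw'
          rw [hb] at this; exact this
        rw [← lie_skew, neg_eq_zero] at this
        rw [this]; simp
      · obtain ⟨q, hq, -⟩ := G.conv i j hb
        have : ⁅v, w'⁆ ∈ V q := by rw [← hq]; exact lie_mem_span2 hv hw'
        rw [lie_skew, hD' q _ this, ← hw i j q hq, ← lie_skew w' v]
        module)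
  obtain ⟨k, hk⟩ := ad_nilp G.symp.2.1 hx
  ext i
  obtain ⟨v, hv, hv0⟩ := Submodule.exists_mem_ne_zero_of_ne_bot (G.ne_bot i)
  have hpow : ∀ n : ℕ, (toEnd ℂ g g x ^ n) v = w i ^ n • v := by
    intro n
    induction n with
    | zero => simp
    | succ n ih =>
      rw [pow_succ', Module.End.mul_apply, ih, map_smul, toEnd_apply_apply, ← hxD, hD' i v hv,
        pow_succ, mul_smul]
  have := hpow k
  rw [hk] at this
  have h3 := (smul_eq_zero.mp this.symm).resolve_right hv0
  exact IsReduced.eq_zero _ ⟨k, h3⟩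

/-- no nonzero `s`-invariant vector -/
def NoInv (s : LieSubalgebra ℂ g) (W : Submodule ℂ g) : Prop :=
  ∀ v ∈ W, (∀ y ∈ s, ⁅y, v⁆ = 0) → v = 0

lemma Good.equivariant (G : Good g s V) (hn : ∀ i, NoInv s (V i)) (a d : Fin 4)
    (ha : ∀ i j, lieSpan2 g (V i) (V j) ≠ V a)
    (hd : ∀ i, lieSpan2 g (V i) (V d) = ⊥)
    (φ : V a →ₗ[ℂ] g) (hφ : ∀ x, φ x ∈ V d)
    (heq : ∀ (x : g) (hx : x ∈ s) (v : V a), φ ⟨⁅x, (v : g)⁆, G.inv a x hx v v.2⟩ = ⁅x, φ v⁆) :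
    φ = 0 := by
  classical
  have hd' : ∀ i, ∀ v ∈ V i, ∀ w ∈ V d, ⁅v, w⁆ = 0 := by
    intro i v hv w hw
    have := lie_mem_span2 hv hw
    rw [hd i] at this; exact this
  obtain ⟨D, hD0, hD⟩ := G.exists_linear (fun i => if h : i = a then h ▸ φ else 0)
  have hDa : ∀ v : V a, D v = φ v := fun v => by simpa using hD a v
  have hDi : ∀ i, i ≠ a → ∀ v ∈ V i, D v = 0 := fun i hi v hv => by
    simpa [hi] using hD i ⟨v, hv⟩
  have hDd : ∀ i, ∀ v ∈ V i, D v ∈ V d := by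
    intro i v hv
    by_cases h : i = a
    · subst h
      rw [hDa ⟨v, hv⟩]; exact hφ _
    · rw [hDi i h v hv]; exact zero_mem _
  obtain ⟨x, hx, hxs, hxD⟩ := G.inner D hD0
    (by
      intro x hx i v hv
      by_cases h : i = a
      · subst h
        rw [hDa ⟨v, hv⟩, ← heq x hx ⟨v, hv⟩, ← hDa]
      · rw [hDi i h v hv, hDi i h _ (G.inv i x hx v hv), lie_zero])
    (by
      intro i j v hv w hw
      rw [hd' i v hv _ (hDd j w hw), hd' j w hw _ (hDd i v hv), sub_zero]
      by_cases hb : lieSpan2 g (V i) (V j) = ⊥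
      · have : ⁅v, w⁆ = 0 := by
          have := lie_mem_span2 hv hw
          rw [hb] at this; exact this
        rw [this, map_zero]
      · obtain ⟨q, hq, -⟩ := G.conv i j hb
        have : ⁅v, w⁆ ∈ V q := by rw [← hq]; exact lie_mem_span2 hv hw
        refine hDi q ?_ _ this
        rintro rfl
        exact ha i j hq)
  have hx0 : x = 0 := by
    rw [← G.dec.2.2] at hx
    obtain ⟨v, hv⟩ := (Submodule.mem_iSup_iff_exists_finsupp V x).mp hx
    rw [Finsupp.sum_fintype _ _ (fun _ => rfl)] at hv
    have hz : ∀ i, v i = 0 := by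
      intro i
      refine hn i _ (hv.1 i) fun y hy => ?_
      have h1 : (0 : g) + ∑ i, ⁅y, v i⁆ = 0 := by
        rw [zero_add, ← lie_sum, hv.2, ← lie_skew, hxs y hy, neg_zero]
      exact (G.sum_zero (zero_mem s) (fun i => G.inv i y hy _ (hv.1 i)) h1).2 i
    rw [← hv.2]
    exact Finset.sum_eq_zero fun i _ => hz i
  ext v
  rw [← hDa v, hxD, hx0]; simp

/-- The bracket table. -/
noncomputable def tab (V : Fin 4 → Submodule ℂ g) (i j : Fin 4) : Option (Fin 4) :=
  open Classical in
  if h : ∃ q, lieSpan2 g (V i) (V j) = V q then some h.choose else none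

/-- The module attached to a table entry. -/
def wt (V : Fin 4 → Submodule ℂ g) : Option (Fin 4) → Submodule ℂ g
  | none => ⊥
  | some i => V i

lemma Good.tab_spec (G : Good g s V) (i j : Fin 4) :
    lieSpan2 g (V i) (V j) = wt V (tab V i j) := by
  unfold tab
  split_ifs with h
  · exact h.choose_spec
  · by_contra hb
    obtain ⟨q, hq, -⟩ := G.conv i j hb
    exact h ⟨q, hq⟩

lemma Good.tab_some (G : Good g s V) (i j q : Fin 4) :
    tab V i j = some q ↔ lieSpan2 g (V i) (V j) = V q := by
  rw [G.tab_spec]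
  constructor
  · intro h; rw [h]; rfl
  · intro h
    rcases ho : tab V i j with _ | r
    · rw [ho] at h; exact absurd h.symm (G.ne_bot q)
    · rw [ho] at h; rw [G.inj h]

lemma Good.tab_none (G : Good g s V) (i j : Fin 4) :
    tab V i j = none ↔ lieSpan2 g (V i) (V j) = ⊥ := by
  rw [G.tab_spec]
  constructor
  · intro h; rw [h]; rfl
  · intro h
    rcases ho : tab V i j with _ | r
    · rfl
    · rw [ho] at h; exact absurd h (G.ne_bot r)

lemma Good.tab_symm (G : Good g s V) (i j : Fin 4) : tab V i j = tab V j i := by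
  rcases h : tab V j i with _ | q
  · rw [G.tab_none] at h ⊢; rwa [lieSpan2_comm]
  · rw [G.tab_some] at h ⊢; rwa [lieSpan2_comm]

lemma Good.tab_jac (G : Good g s V) (a c j q : Fin 4)
    (h : (tab V a c).bind (fun i => tab V i j) = some q) :
    (tab V c j).bind (fun r => tab V a r) = some q ∨ (tab V a j).bind (fun r => tab V c r) = some q := by
  by_contra hcon
  push Not at hcon
  obtain ⟨i, hi, hq⟩ := Option.bind_eq_some_iff.mp h
  rw [G.tab_some] at hi hq
  have key : ∀ a c x y z, x ∈ V a → y ∈ V c → z ∈ V j →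
      ⁅x, ⁅y, z⁆⁆ ∈ wt V ((tab V c j).bind (fun r => tab V a r)) := by
    intro a c x y z hx hy hz
    have h1 := lie_mem_span2 hy hz
    rw [G.tab_spec] at h1
    rcases ho : tab V c j with _ | r
    · rw [ho] at h1
      have h1' : ⁅y, z⁆ = 0 := h1
      rw [h1', lie_zero]; exact zero_mem _
    · rw [ho] at h1
      have h2 := lie_mem_span2 hx (show ⁅y, z⁆ ∈ V r from h1)
      rw [G.tab_spec] at h2
      exact h2
  have hle : V q ≤ wt V ((tab V c j).bind (fun r => tab V a r)) ⊔
      wt V ((tab V a j).bind (fun r => tab V c r)) := by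
    rw [← hq, ← hi]
    refine Submodule.span_le.mpr ?_
    rintro _ ⟨u, hu, z, hz, rfl⟩
    induction hu using Submodule.span_induction with
    | mem u h =>
      obtain ⟨x, hx, y, hy, rfl⟩ := h
      rw [lie_lie]
      exact Submodule.sub_mem _ (Submodule.mem_sup_left (key a c x y z hx hy hz))
        (Submodule.mem_sup_right (key c a y x z hy hx hz))
    | zero => simp
    | add u u' _ _ e e' => rw [add_lie]; exact Submodule.add_mem _ e e'
    | smul t u _ e => rw [smul_lie]; exact Submodule.smul_mem _ t e
  have hw : ∀ o : Option (Fin 4), o ≠ some q → wt V o ≤ ⨆ j, ⨆ (_ : j ≠ q), V j := by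
    rintro (_ | r) ho
    · exact bot_le
    · exact le_iSup₂_of_le r (fun h => ho (by rw [h])) le_rfl
  have := (G.dec.2.1 q).mono_right (hle.trans (sup_le (hw _ hcon.1) (hw _ hcon.2)))
  exact G.ne_bot q (disjoint_self.mp this)

end
end Symp

namespace Symp
open Module LieAlgebra LieModule

/-- symmetric table from six entries -/
def mk6 (x00 x01 x02 x11 x12 x22 : Option (Fin 4)) (i j : Fin 4) : Option (Fin 4) :=
  match i, j with
  | 0, 0 => x00
  | 0, 1 => x01
  | 1, 0 => x01
  | 0, 2 => x02
  | 2, 0 => x02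
  | 1, 1 => x11
  | 1, 2 => x12
  | 2, 1 => x12
  | 2, 2 => x22
  | _, _ => none

/-- The surviving bracket tables (generators `0, 1`). -/
def Tgt (b : Fin 4 → Fin 4 → Option (Fin 4)) : Prop :=
  b 0 2 = some 3 ∧ b 2 2 = none ∧ (∀ i, b i 3 = none) ∧ (b 1 2 = none ∨ b 1 2 = some 3) ∧
  (∀ i j, b i j ≠ some 0 ∧ b i j ≠ some 1) ∧
  ((b 0 0 = some 2 ∧ b 1 1 = some 3 ∧ ((b 0 1 = some 3 ∧ b 1 2 = none) ∨ b 0 1 = some 2)) ∨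
   (b 0 1 = some 2 ∧ b 0 0 = some 3 ∧ (b 1 1 = some 3 ∨ (b 1 1 = none ∧ b 1 2 = some 3))))

instance (b) : Decidable (Tgt b) := by unfold Tgt; infer_instance

/-- permuted table -/
def pmt (σ : Equiv.Perm (Fin 4)) (b : Fin 4 → Fin 4 → Option (Fin 4)) (i j : Fin 4) :
    Option (Fin 4) := (b (σ i) (σ j)).map σ.symm

/-- Jacobi rule -/
def JacT (b : Fin 4 → Fin 4 → Option (Fin 4)) : Prop :=
  ∀ a c j, (b a c).bind (fun i => b i j) = none ∨
    (b c j).bind (fun r => b a r) = (b a c).bind (fun i => b i j) ∨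
    (b a j).bind (fun r => b c r) = (b a c).bind (fun i => b i j)

instance (b) : Decidable (JacT b) := by unfold JacT; infer_instance

/-- weight compatibility -/
def Compat (b : Fin 4 → Fin 4 → Option (Fin 4)) (w : Fin 4 → ℤ) : Prop :=
  ∀ i j, match b i j with
    | none => True
    | some q => w i + w j = w q

instance (b w) : Decidable (Compat b w) := by
  unfold Compat
  have : ∀ i j, Decidable (match b i j with
    | none => True
    | some q => w i + w j = w q) := by
    intro i j
    rcases b i j with _ | q
    · exact instDecidableTrue
    · exact inferInstanceAs (Decidable (w i + w j = w q))
  infer_instance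

/-- explicit weights -/
def wlist : List (Fin 4 → ℤ) :=
  [![1, 1, 1, 2], ![-1, -1, -2, -2], ![1, 1, 2, 3], ![1, 2, 3, 4], ![1, 2, 2, 3], ![-1, -2, -1, -2],
   ![0, -1, -1, -2], ![1, 0, 1, 2], ![-2, -1, -2, -3], ![2, 1, 3, 4], ![2, 4, 3, 6], ![2, 3, 4, 6],
   ![3, 2, 4, 6]]

/-- allowed entries -/
def opts (n : ℕ) : List (Option (Fin 4)) :=
  none :: ((List.finRange 4).filter (fun q => n < q.val)).map some

lemma comb_decide : ∀ x00 ∈ opts 0, ∀ x01 ∈ opts 1, ∀ x02 ∈ opts 2, ∀ x11 ∈ opts 1, ∀ x12 ∈ opts 2,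
    ∀ x22 ∈ opts 2, JacT (mk6 x00 x01 x02 x11 x12 x22) →
    (∃ w ∈ wlist, Compat (mk6 x00 x01 x02 x11 x12 x22) w) ∨ Tgt (mk6 x00 x01 x02 x11 x12 x22) ∨
    Tgt (pmt (Equiv.swap 0 1) (mk6 x00 x01 x02 x11 x12 x22)) ∨
    Tgt (pmt (Equiv.swap 1 2) (mk6 x00 x01 x02 x11 x12 x22)) := by
  decide +kernel

lemma wlist_ne : ∀ w ∈ wlist, ∃ i, w i ≠ 0 := by decide

lemma mem_opts (n : ℕ) (o : Option (Fin 4)) (h : ∀ q, o = some q → n < q.val) : o ∈ opts n := by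
  rcases o with _ | q
  · simp [opts]
  · simp [opts, h q rfl]

section
variable {g : Type*} [LieRing g] [LieAlgebra ℂ g] {s : LieSubalgebra ℂ g}
  {V : Fin 4 → Submodule ℂ g}

lemma Good.tab_perm (G : Good g s V) (σ : Equiv.Perm (Fin 4)) : tab (V ∘ σ) = pmt σ (tab V) := by
  funext i j
  unfold pmt
  rcases h : tab V (σ i) (σ j) with _ | q
  · rw [G.tab_none] at h
    exact ((G.perm σ).tab_none i j).mpr h
  · rw [G.tab_some] at h
    refine ((G.perm σ).tab_some i j (σ.symm q)).mpr ?_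
    simpa using h

lemma Good.reduce [FiniteDimensional ℂ g] (G : Good g s V) :
    ∃ σ : Equiv.Perm (Fin 4), Tgt (tab (V ∘ σ)) := by
  obtain ⟨d, hd⟩ := exists_depth G.symp.2.1 V G.ne_bot G.le_rad
  let τ : Equiv.Perm (Fin 4) := Tuple.sort d
  have hmono : Monotone (d ∘ τ) := Tuple.monotone_sort d
  have G' := G.perm τ
  have hlt : ∀ i j q, tab (V ∘ τ) i j = some q → i < q ∧ j < q := by
    intro i j q h
    rw [G'.tab_some] at h
    obtain ⟨h1, h2⟩ := hd _ _ _ h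
    exact ⟨hmono.reflect_lt h1, hmono.reflect_lt h2⟩
  set b := tab (V ∘ τ) with hb
  have hn : ∀ i, b i 3 = none := by
    intro i
    rcases h : b i 3 with _ | q
    · rfl
    · have := (hlt _ _ _ h).2
      omega
  have hs : ∀ i j, b i j = b j i := G'.tab_symm
  have hmk : b = mk6 (b 0 0) (b 0 1) (b 0 2) (b 1 1) (b 1 2) (b 2 2) := by
    funext i j
    fin_cases i <;> fin_cases j <;> simp [mk6, hn, hs 3, hs 1 0, hs 2 0, hs 2 1]
  have hj : JacT b := by
    intro a c j
    rcases h : (b a c).bind (fun i => b i j) with _ | q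
    · exact Or.inl rfl
    · right; exact G'.tab_jac a c j q h
  have := comb_decide (b 0 0) (mem_opts _ _ fun q h => (hlt _ _ _ h).2)
    (b 0 1) (mem_opts _ _ fun q h => (hlt _ _ _ h).2)
    (b 0 2) (mem_opts _ _ fun q h => (hlt _ _ _ h).2)
    (b 1 1) (mem_opts _ _ fun q h => (hlt _ _ _ h).2)
    (b 1 2) (mem_opts _ _ fun q h => (hlt _ _ _ h).2)
    (b 2 2) (mem_opts _ _ fun q h => (hlt _ _ _ h).2)
  rw [← hmk] at this
  rcases this hj with ⟨w, hw, hc⟩ | h | h | h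
  · exfalso
    obtain ⟨i, hi⟩ := wlist_ne w hw
    have := G'.weights (fun i => (w i : ℂ)) (by
      intro i j q h
      rw [← G'.tab_some] at h
      have := hc i j
      rw [show b i j = some q from h] at this
      exact_mod_cast this)
    have : (w i : ℂ) = 0 := congrFun this i
    exact hi (by exact_mod_cast this)
  · exact ⟨τ, h⟩
  · refine ⟨τ * Equiv.swap 0 1, ?_⟩
    rw [hb, ← G'.tab_perm] at h
    exact h
  · refine ⟨τ * Equiv.swap 1 2, ?_⟩
    rw [hb, ← G'.tab_perm] at h
    exact h
end
end Symp

namespace Symp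
open Module LieAlgebra LieModule

section rep
variable {L : Type*} [LieRing L] [LieAlgebra ℂ L] [IsSimple ℂ L]
  {M : Type*} [AddCommGroup M] [Module ℂ M]

lemma perfect_of_simple (L : Type*) [LieRing L] [LieAlgebra ℂ L] [IsSimple ℂ L] : IsPerfectLie L := by
  rcases IsSimple.eq_bot_or_eq_top (R := ℂ) (⁅(⊤ : LieIdeal ℂ L), (⊤ : LieIdeal ℂ L)⁆) with h | h
  · exfalso
    apply IsSimple.non_abelian (R := ℂ) (L := L)
    refine ⟨fun x y => ?_⟩
    have := LieSubmodule.lie_mem_lie (I := (⊤ : LieIdeal ℂ L)) (N := (⊤ : LieIdeal ℂ L))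
      (LieSubmodule.mem_top x) (LieSubmodule.mem_top y)
    rw [h] at this
    exact this
  · exact h

lemma perfect_induction {L : Type*} [LieRing L] [LieAlgebra ℂ L] (hp : IsPerfectLie L)
    (N : Submodule ℂ L) (h : ∀ x y : L, ⁅x, y⁆ ∈ N) : N = ⊤ := by
  rw [eq_top_iff]
  intro x _
  have hx : x ∈ ⁅(⊤ : LieIdeal ℂ L), (⊤ : LieIdeal ℂ L)⁆ := by rw [hp]; trivial
  rw [← LieSubmodule.mem_toSubmodule, LieSubmodule.lieIdeal_oper_eq_linear_span'] at hx
  refine Submodule.span_le.mpr ?_ hx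
  rintro _ ⟨y, -, z, -, rfl⟩
  exact h y z

lemma rep_zero_or_inj (ρ : L →ₗ[ℂ] End ℂ M) (h : ∀ x y, ρ ⁅x, y⁆ = ρ x * ρ y - ρ y * ρ x) :
    ρ = 0 ∨ Function.Injective ρ := by
  let I : LieIdeal ℂ L :=
    { LinearMap.ker ρ with
      lie_mem := by
        intro x y hy
        have hy' : ρ y = 0 := hy
        show ρ ⁅x, y⁆ = 0
        rw [h, hy']; simp }
  rcases IsSimple.eq_bot_or_eq_top (R := ℂ) I with hI | hI
  · right
    rw [← LinearMap.ker_eq_bot, ← le_bot_iff]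
    intro x hx
    have : x ∈ I := hx
    rw [hI] at this
    exact this
  · left
    ext1 x
    have : x ∈ I := by rw [hI]; trivial
    exact this

lemma rep_trace (ρ : L →ₗ[ℂ] End ℂ M) (h : ∀ x y, ρ ⁅x, y⁆ = ρ x * ρ y - ρ y * ρ x) (x : L) :
    LinearMap.trace ℂ M (ρ x) = 0 := by
  have := perfect_induction (perfect_of_simple L) (LinearMap.ker (LinearMap.trace ℂ M ∘ₗ ρ)) (by
    intro x y
    simp only [LinearMap.mem_ker, LinearMap.comp_apply]
    rw [h, map_sub, LinearMap.trace_mul_comm, sub_self])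
  have hx : x ∈ LinearMap.ker (LinearMap.trace ℂ M ∘ₗ ρ) := by rw [this]; trivial
  exact hx

lemma finrank_ker_trace [FiniteDimensional ℂ M] [Nontrivial M] :
    finrank ℂ (LinearMap.ker (LinearMap.trace ℂ M)) + 1 = finrank ℂ M * finrank ℂ M := by
  have h1 := LinearMap.finrank_range_add_finrank_ker (LinearMap.trace ℂ M)
  have h2 : LinearMap.range (LinearMap.trace ℂ M) = ⊤ := by
    rw [LinearMap.range_eq_top]
    have h0 : LinearMap.trace ℂ M ≠ 0 := by
      intro h
      have := LinearMap.trace_id ℂ M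
      rw [h, LinearMap.zero_apply] at this
      have hp := Module.finrank_pos (R := ℂ) (M := M)
      norm_cast at this
      omega
    exact LinearMap.surjective_of_ne_zero h0
  rw [h2, finrank_top, finrank_self, Module.finrank_linearMap] at h1
  omega

lemma rep_dim [FiniteDimensional ℂ L] [FiniteDimensional ℂ M] [Nontrivial M]
    (ρ : L →ₗ[ℂ] End ℂ M) (h : ∀ x y, ρ ⁅x, y⁆ = ρ x * ρ y - ρ y * ρ x)
    (hi : Function.Injective ρ) : finrank ℂ L + 1 ≤ finrank ℂ M * finrank ℂ M := by
  let ρ' : L →ₗ[ℂ] LinearMap.ker (LinearMap.trace ℂ M) :=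
    ρ.codRestrict _ (fun x => rep_trace ρ h x)
  have := LinearMap.finrank_le_finrank_of_injective (f := ρ') (by
    intro x y hxy
    exact hi (congrArg Subtype.val hxy))
  have := finrank_ker_trace (M := M)
  omega

lemma rep_surj [FiniteDimensional ℂ L] [FiniteDimensional ℂ M] [Nontrivial M]
    (ρ : L →ₗ[ℂ] End ℂ M) (h : ∀ x y, ρ ⁅x, y⁆ = ρ x * ρ y - ρ y * ρ x)
    (hi : Function.Injective ρ) (hd : finrank ℂ L + 1 = finrank ℂ M * finrank ℂ M)
    (T : End ℂ M) (hT : LinearMap.trace ℂ M T = 0) : ∃ x, ρ x = T := by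
  let ρ' : L →ₗ[ℂ] LinearMap.ker (LinearMap.trace ℂ M) :=
    ρ.codRestrict _ (fun x => rep_trace ρ h x)
  have hi' : Function.Injective ρ' := by
    intro x y hxy
    exact hi (congrArg Subtype.val hxy)
  have hk := finrank_ker_trace (M := M)
  have hs : Function.Surjective ρ' :=
    (LinearMap.injective_iff_surjective_of_finrank_eq_finrank (by omega)).mp hi'
  obtain ⟨x, hx⟩ := hs ⟨T, hT⟩
  exact ⟨x, congrArg Subtype.val hx⟩
end rep

section
variable {g : Type*} [LieRing g] [LieAlgebra ℂ g] {s : LieSubalgebra ℂ g}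
  {V : Fin 4 → Submodule ℂ g}

/-- the action of `s` on an invariant subspace -/
def act {W : Submodule ℂ g} (hW : Invariant g s W) : s →ₗ[ℂ] End ℂ W where
  toFun x :=
    { toFun := fun w => ⟨⁅(x : g), (w : g)⁆, hW x x.2 w w.2⟩
      map_add' := fun a b => Subtype.ext (by simp)
      map_smul' := fun c a => Subtype.ext (by simp) }
  map_add' x y := by ext w; simp
  map_smul' c x := by ext w; simp

@[simp] lemma act_apply {W : Submodule ℂ g} (hW : Invariant g s W) (x : s) (w : W) :
    ((act hW x w : W) : g) = ⁅(x : g), (w : g)⁆ := rfl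

lemma act_lie {W : Submodule ℂ g} (hW : Invariant g s W) (x y : s) :
    act hW ⁅x, y⁆ = act hW x * act hW y - act hW y * act hW x := by
  ext w; simp

lemma Good.finrank_eq [FiniteDimensional ℂ g] (G : Good g s V) :
    finrank ℂ g = finrank ℂ s + (finrank ℂ (V 0) + finrank ℂ (V 1) + finrank ℂ (V 2) + finrank ℂ (V 3)) := by
  rw [← (LinearEquiv.ofBijective _ G.bij).finrank_eq, Module.finrank_prod, Module.finrank_pi_fintype,
    Fin.sum_univ_four]
  rfl

lemma finrank_one_of_trivial {W : Submodule ℂ g} (h0 : W ≠ ⊥)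
    (hirr : ∀ U : Submodule ℂ g, U ≤ W → Invariant g s U → U = ⊥ ∨ U = W)
    (ht : ∀ x ∈ s, ∀ v ∈ W, ⁅x, v⁆ = 0) : finrank ℂ W = 1 := by
  obtain ⟨v, hv, hv0⟩ := Submodule.exists_mem_ne_zero_of_ne_bot h0
  have hle : Submodule.span ℂ {v} ≤ W := by simpa [Submodule.span_le] using hv
  rcases hirr (Submodule.span ℂ {v}) hle (by
    intro x hx w hw
    rw [ht x hx w (hle hw)]; exact zero_mem _) with h | h
  · simp [hv0] at h
  · rw [← h]; exact finrank_span_singleton hv0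

lemma Good.noInv_or (G : Good g s V) (i : Fin 4) :
    NoInv s (V i) ∨ (finrank ℂ (V i) = 1 ∧ ∀ x ∈ s, ∀ v ∈ V i, ⁅x, v⁆ = 0) := by
  let W : Submodule ℂ g :=
    { carrier := {v | v ∈ V i ∧ ∀ y ∈ s, ⁅y, v⁆ = 0}
      add_mem' := fun {a b} ha hb => ⟨add_mem ha.1 hb.1, fun y hy => by
        rw [lie_add, ha.2 y hy, hb.2 y hy, add_zero]⟩
      zero_mem' := ⟨zero_mem _, fun y _ => lie_zero y⟩
      smul_mem' := fun c a ha => ⟨Submodule.smul_mem _ c ha.1, fun y hy => by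
        rw [lie_smul, ha.2 y hy, smul_zero]⟩ }
  rcases G.irr i W (fun v hv => hv.1) (fun x hx w hw => by
    rw [hw.2 x hx]; exact zero_mem _) with h | h
  · left
    intro v hv hs
    have : v ∈ W := ⟨hv, hs⟩
    rw [h] at this; exact this
  · right
    have ht : ∀ x ∈ s, ∀ v ∈ V i, ⁅x, v⁆ = 0 := by
      intro x hx v hv
      rw [← h] at hv
      exact hv.2 x hx
    exact ⟨finrank_one_of_trivial (G.ne_bot i) (G.irr i) ht, ht⟩

lemma Good.act_inj (G : Good g s V) (i : Fin 4) (h : NoInv s (V i)) :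
    Function.Injective (act (G.inv i)) := by
  have := G.levi.1
  rcases rep_zero_or_inj (act (G.inv i)) (act_lie _) with h0 | h1
  · exfalso
    apply G.ne_bot i
    rw [eq_bot_iff]
    intro v hv
    refine h v hv fun y hy => ?_
    have := congrArg (fun f => ((f ⟨y, hy⟩ ⟨v, hv⟩ : V i) : g)) h0
    simpa using this
  · exact h1

lemma Good.nontriv (G : Good g s V) (i : Fin 4) : Nontrivial (V i) :=
  Submodule.nontrivial_iff_ne_bot.mpr (G.ne_bot i)

lemma Good.dim_bound [FiniteDimensional ℂ g] (G : Good g s V) (i : Fin 4) (h : NoInv s (V i)) :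
    finrank ℂ s + 1 ≤ finrank ℂ (V i) * finrank ℂ (V i) := by
  have := G.levi.1
  have := G.nontriv i
  exact rep_dim (act (G.inv i)) (act_lie _) (G.act_inj i h)

/-- a module which is not a bracket has no invariants, by perfectness -/
lemma Good.noInv_gen (G : Good g s V) (a : Fin 4) (ha : ∀ i j, lieSpan2 g (V i) (V j) ≠ V a) :
    NoInv s (V a) := by
  rcases G.noInv_or a with h | ⟨-, ht⟩
  · exact h
  exfalso
  let N : Submodule ℂ g := s.toSubmodule ⊔ ⨆ j, ⨆ (_ : j ≠ a), V j
  have hs : ∀ x ∈ s, x ∈ N := fun x hx => Submodule.mem_sup_left hx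
  have hV : ∀ j, j ≠ a → ∀ x ∈ V j, x ∈ N := fun j hj x hx =>
    Submodule.mem_sup_right ((le_iSup₂_of_le (f := fun j (_ : j ≠ a) => V j) j hj le_rfl) hx)
  have hsV : ∀ x ∈ s, ∀ j, ∀ y ∈ V j, ⁅x, y⁆ ∈ N := by
    intro x hx j y hy
    by_cases hj : j = a
    · subst hj; rw [ht x hx y hy]; exact zero_mem _
    · exact hV j hj _ (G.inv j x hx y hy)
  have hp : ∀ o o', ∀ x ∈ pieces s V o, ∀ y ∈ pieces s V o', ⁅x, y⁆ ∈ N := by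
    rintro (_ | i) (_ | j) x hx y hy
    · exact hs _ (s.lie_mem hx hy)
    · exact hsV x hx j y hy
    · rw [← lie_skew]; exact Submodule.neg_mem _ (hsV y hy i x hx)
    · by_cases hb : lieSpan2 g (V i) (V j) = ⊥
      · have := lie_mem_span2 (show x ∈ V i from hx) (show y ∈ V j from hy)
        rw [hb] at this
        have h0 : ⁅x, y⁆ = 0 := this
        rw [h0]; exact zero_mem _
      · obtain ⟨q, hq, -⟩ := G.conv i j hb
        have := lie_mem_span2 (show x ∈ V i from hx) (show y ∈ V j from hy)
        rw [hq] at this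
        exact hV q (by rintro rfl; exact ha i j hq) _ this
  have hl : ∀ x y : g, ⁅x, y⁆ ∈ N := by
    intro x y
    have hx : x ∈ ⨆ o, pieces s V o := by rw [G.pieces_sup]; trivial
    have hy : y ∈ ⨆ o, pieces s V o := by rw [G.pieces_sup]; trivial
    induction hx using Submodule.iSup_induction' with
    | mem o x hx =>
      induction hy using Submodule.iSup_induction' with
      | mem o' y hy => exact hp o o' x hx y hy
      | zero => simp
      | add y y' _ _ e e' => rw [lie_add]; exact add_mem e e'
    | zero => simp
    | add x x' _ _ e e' => rw [add_lie]; exact add_mem e e'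
  have hN := perfect_induction G.symp.2.1 N hl
  obtain ⟨v, hv, hv0⟩ := Submodule.exists_mem_ne_zero_of_ne_bot (G.ne_bot a)
  have hvN : v ∈ N := by rw [hN]; trivial
  obtain ⟨x, hx, r, hr, hxr⟩ := Submodule.mem_sup.mp hvN
  have hr' : r ∈ (radical ℂ g).toSubmodule :=
    (iSup₂_le fun j _ => G.le_rad j) hr
  have hx0 : x = 0 := by
    refine (Submodule.disjoint_def.mp G.levi.2.disjoint) x hx ?_
    rw [eq_sub_of_add_eq hxr]
    exact Submodule.sub_mem _ (G.le_rad a hv) hr'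
  rw [hx0, zero_add] at hxr
  rw [hxr] at hr
  exact hv0 ((Submodule.disjoint_def.mp (G.dec.2.1 a)) v hv hr)

/-- a module commuting with all others has no invariants, since the centre is trivial -/
lemma Good.noInv_cent (G : Good g s V) (d : Fin 4) (hd : ∀ i, lieSpan2 g (V i) (V d) = ⊥) :
    NoInv s (V d) := by
  intro v hv hs
  have : v ∈ LieAlgebra.center ℂ g := by
    rw [LieModule.mem_maxTrivSubmodule]
    intro x
    have hx : x ∈ ⨆ o, pieces s V o := by rw [G.pieces_sup]; trivial
    induction hx using Submodule.iSup_induction' with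
    | mem o x hx =>
      rcases o with _ | i
      · exact hs x hx
      · have := lie_mem_span2 (show x ∈ V i from hx) hv
        rw [hd i] at this
        exact this
    | zero => simp
    | add x x' _ _ e e' => rw [add_lie, e, e', add_zero]
  rw [G.symp.1] at this
  exact this

end
end Symp

namespace Symp
open Module LieAlgebra LieModule

section
variable {g : Type*} [LieRing g] [LieAlgebra ℂ g] {s : LieSubalgebra ℂ g}
  {V : Fin 4 → Submodule ℂ g}

lemma Good.mem_of (G : Good g s V) {i j q} (h : tab V i j = some q) {x y : g} (hx : x ∈ V i)
    (hy : y ∈ V j) : ⁅x, y⁆ ∈ V q := by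
  rw [← (G.tab_some i j q).mp h]; exact lie_mem_span2 hx hy

lemma Good.zero_of (G : Good g s V) {i j} (h : tab V i j = none) {x y : g} (hx : x ∈ V i)
    (hy : y ∈ V j) : ⁅x, y⁆ = 0 := by
  have := lie_mem_span2 hx hy
  rw [(G.tab_none i j).mp h] at this; exact this

lemma Good.exists_ne (G : Good g s V) {i j q} (h : tab V i j = some q) :
    ∃ x ∈ V i, ∃ y ∈ V j, ⁅x, y⁆ ≠ 0 := by
  by_contra hcon
  push Not at hcon
  apply G.ne_bot q
  rw [← (G.tab_some i j q).mp h, eq_bot_iff]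
  refine Submodule.span_le.mpr ?_
  rintro _ ⟨x, hx, y, hy, rfl⟩
  exact hcon x hx y hy

lemma Good.noInv0 (G : Good g s V) (hT : Tgt (tab V)) : NoInv s (V 0) :=
  G.noInv_gen 0 fun i j h => (hT.2.2.2.2.1 i j).1 ((G.tab_some i j 0).mpr h)
lemma Good.noInv1 (G : Good g s V) (hT : Tgt (tab V)) : NoInv s (V 1) :=
  G.noInv_gen 1 fun i j h => (hT.2.2.2.2.1 i j).2 ((G.tab_some i j 1).mpr h)
lemma Good.noInv3 (G : Good g s V) (hT : Tgt (tab V)) : NoInv s (V 3) :=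
  G.noInv_cent 3 fun i => (G.tab_none i 3).mp (hT.2.2.1 i)

lemma Good.three_le [FiniteDimensional ℂ g] (G : Good g s V) : 3 ≤ finrank ℂ s := by
  have := G.levi.1
  rcases simple_dichotomy s with h | h <;> omega

lemma Good.two_le [FiniteDimensional ℂ g] (G : Good g s V) {i} (h : NoInv s (V i)) :
    2 ≤ finrank ℂ (V i) := by
  have h1 := G.dim_bound i h
  have h2 := G.three_le
  by_contra h3
  have : finrank ℂ (V i) ≤ 1 := by omega
  have := Nat.mul_le_mul this this
  omega

lemma Good.noInv2_or [FiniteDimensional ℂ g] (G : Good g s V) (hT : Tgt (tab V)) :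
    NoInv s (V 2) ∨ (finrank ℂ (V 0) = 2 ∧ finrank ℂ (V 3) = 2 ∧ tab V 1 1 = some 3) := by
  rcases G.noInv_or 2 with h | ⟨h1, ht⟩
  · exact Or.inl h
  right
  obtain ⟨⟨c, hc⟩, hc0, hcs⟩ := finrank_eq_one_iff'.mp h1
  have hc0' : c ≠ 0 := fun h => hc0 (Subtype.ext h)
  have hcs' : ∀ w ∈ V 2, ∃ a : ℂ, w = a • c := by
    intro w hw
    obtain ⟨a, ha⟩ := hcs ⟨w, hw⟩
    exact ⟨a, (congrArg Subtype.val ha).symm⟩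
  have d0 := G.two_le (G.noInv0 hT)
  -- injectivity of bracketing with `c`
  have hinj : ∀ x ∈ V 0, ⁅x, c⁆ = 0 → x = 0 := by
    let K : Submodule ℂ g :=
      { carrier := {x | x ∈ V 0 ∧ ⁅x, c⁆ = 0}
        add_mem' := fun {a b} ha hb => ⟨add_mem ha.1 hb.1, by rw [add_lie, ha.2, hb.2, add_zero]⟩
        zero_mem' := ⟨zero_mem _, zero_lie _⟩
        smul_mem' := fun t a ha => ⟨Submodule.smul_mem _ t ha.1, by rw [smul_lie, ha.2, smul_zero]⟩ }
    rcases G.irr 0 K (fun v hv => hv.1) (fun x hx w hw => ⟨G.inv 0 x hx w hw.1, by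
      rw [lie_lie, hw.2, ht x hx c hc]; simp⟩) with h | h
    · intro x hx hxc
      have : x ∈ K := ⟨hx, hxc⟩
      rw [h] at this; exact this
    · exfalso
      obtain ⟨x, hx, y, hy, hxy⟩ := G.exists_ne hT.1
      obtain ⟨a, rfl⟩ := hcs' y hy
      rw [← h] at hx
      apply hxy
      rw [lie_smul, hx.2, smul_zero]
  have hD : finrank ℂ (V 0) = finrank ℂ (V 3) := by
    let φ : V 0 →ₗ[ℂ] V 3 :=
      { toFun := fun x => ⟨⁅(x : g), c⁆, G.mem_of hT.1 x.2 hc⟩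
        map_add' := fun a b => Subtype.ext (by simp)
        map_smul' := fun c a => Subtype.ext (by simp) }
    have h1 : Function.Injective φ := by
      rw [← LinearMap.ker_eq_bot, LinearMap.ker_eq_bot']
      intro x hx
      exact Subtype.ext (hinj x x.2 (congrArg Subtype.val hx))
    have h2 : Function.Surjective φ := by
      have : V 3 ≤ (LinearMap.range φ).map (V 3).subtype := by
        refine ((G.tab_some 0 2 3).mp hT.1).ge.trans (Submodule.span_le.mpr ?_)
        rintro _ ⟨x, hx, y, hy, rfl⟩
        obtain ⟨a, rfl⟩ := hcs' y hy
        refine ⟨φ (a • ⟨x, hx⟩), ⟨_, rfl⟩, ?_⟩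
        simp [φ]
      rintro ⟨v, hv⟩
      obtain ⟨_, ⟨u, rfl⟩, hu⟩ := this hv
      exact ⟨u, Subtype.ext hu⟩
    exact (LinearEquiv.ofBijective φ ⟨h1, h2⟩).finrank_eq
  rcases hT.2.2.2.2.2 with ⟨h00, h11, -⟩ | ⟨h01, h00, -⟩
  · suffices finrank ℂ (V 0) ≤ 2 by exact ⟨by omega, by omega, h11⟩
    obtain ⟨x, hx, y, hy, hxy⟩ := G.exists_ne h00
    have hle : V 0 ≤ Submodule.span ℂ {x, y} := by
      intro z hz
      obtain ⟨a, ha⟩ := hcs' _ (G.mem_of h00 hx hy)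
      obtain ⟨a1, ha1⟩ := hcs' _ (G.mem_of h00 hy hz)
      obtain ⟨a2, ha2⟩ := hcs' _ (G.mem_of h00 hz hx)
      have ha0 : a ≠ 0 := by rintro rfl; rw [zero_smul] at ha; exact hxy ha
      have hj := lie_jacobi x y z
      rw [ha1, ha2, ha, lie_smul, lie_smul, lie_smul, ← smul_lie, ← smul_lie, ← smul_lie, ← add_lie,
        ← add_lie] at hj
      have hm : a1 • x + a2 • y + a • z ∈ V 0 :=
        add_mem (add_mem (Submodule.smul_mem _ _ hx) (Submodule.smul_mem _ _ hy)) (Submodule.smul_mem _ _ hz)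
      have h0 := hinj _ hm hj
      have : z = (-(a⁻¹ * a1)) • x + (-(a⁻¹ * a2)) • y := by
        have h3 : a • z = -(a1 • x + a2 • y) := eq_neg_of_add_eq_zero_right h0
        rw [← inv_smul_smul₀ ha0 z, h3]
        module
      rw [this]
      exact add_mem (Submodule.smul_mem _ _ (Submodule.subset_span (by simp)))
        (Submodule.smul_mem _ _ (Submodule.subset_span (by simp)))
    classical
    refine (Submodule.finrank_mono hle).trans ?_
    have := finrank_span_finset_le_card (R := ℂ) (M := g) {x, y}
    rw [Finset.coe_pair] at this
    exact this.trans Finset.card_le_two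
  · exfalso
    obtain ⟨x, hx, y, hy, hxy⟩ := G.exists_ne h01
    have hle : V 0 ≤ Submodule.span ℂ {x} := by
      intro z hz
      obtain ⟨a, ha⟩ := hcs' _ (G.mem_of h01 hx hy)
      obtain ⟨a1, ha1⟩ := hcs' _ (G.mem_of h01 hz hy)
      have ha0 : a ≠ 0 := by rintro rfl; rw [zero_smul] at ha; exact hxy ha
      have h1 : ⁅⁅x, z⁆, y⁆ = 0 := by
        rw [← lie_skew, G.zero_of (hT.2.2.1 1) hy (G.mem_of h00 hx hz), neg_zero]
      rw [lie_lie, ha, ha1, lie_smul, lie_smul, ← smul_lie, ← smul_lie, ← sub_lie] at h1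
      have hm : a1 • x - a • z ∈ V 0 :=
        sub_mem (Submodule.smul_mem _ _ hx) (Submodule.smul_mem _ _ hz)
      have h0 := hinj _ hm h1
      have : z = (a⁻¹ * a1) • x := by
        rw [← inv_smul_smul₀ ha0 z, ← sub_eq_zero.mp h0, mul_smul]
      rw [this]
      exact (Submodule.smul_mem _ _ (Submodule.subset_span (by simp)))
    have h2 := Submodule.finrank_mono hle
    have h3 := finrank_span_le_card (R := ℂ) (M := g) {x}
    simp at h3
    omega
end
end Symp

namespace Symp
open Module LieAlgebra LieModule

section
variable {g : Type*} [LieRing g] [LieAlgebra ℂ g] {s : LieSubalgebra ℂ g}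
  {V : Fin 4 → Submodule ℂ g}

/-- vectors whose `t`-eigenvalues lie in `l + ℤ` -/
noncomputable def cls (t : g) (l : ℂ) : Submodule ℂ g :=
  Submodule.span ℂ {v | ∃ n : ℤ, ⁅t, v⁆ = (l + n) • v}

lemma cls_lie {t : g} {l m : ℂ} {x y : g} (hx : x ∈ cls t l) (hy : y ∈ cls t m) :
    ⁅x, y⁆ ∈ cls t (l + m) := by
  induction hx using Submodule.span_induction with
  | mem x h =>
    obtain ⟨n, hn⟩ := h
    induction hy using Submodule.span_induction with
    | mem y h =>
      obtain ⟨n', hn'⟩ := h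
      refine Submodule.subset_span ⟨n + n', ?_⟩
      rw [leibniz_lie, hn, hn', smul_lie, lie_smul, ← add_smul]
      push_cast
      congr 1; ring
    | zero => simp
    | add y y' _ _ e e' => rw [lie_add]; exact add_mem e e'
    | smul c y _ e => rw [lie_smul]; exact Submodule.smul_mem _ _ e
  | zero => simp
  | add x x' _ _ e e' => rw [add_lie]; exact add_mem e e'
  | smul c x _ e => rw [smul_lie]; exact Submodule.smul_mem _ _ e

lemma cls_unique {t : g} {l m : ℂ} {v : g} (hv : v ≠ 0) (h1 : v ∈ cls t l) (h2 : v ∈ cls t m) :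
    ∃ n : ℤ, l - m = n := by
  by_contra hcon
  push Not at hcon
  let A : Set ℂ := {a | ∃ n : ℤ, a = l + n}
  let B : Set ℂ := {a | ∃ n : ℤ, a = m + n}
  have hAB : Disjoint A B := by
    rw [Set.disjoint_left]
    rintro a ⟨n, hn⟩ ⟨n', hn'⟩
    apply hcon (n' - n)
    push_cast
    linear_combination hn' - hn
  have hd := (Module.End.eigenspaces_iSupIndep (toEnd ℂ g g t)).disjoint_biSup_biSup hAB
  have hle : ∀ l : ℂ, cls t l ≤ ⨆ a ∈ {a : ℂ | ∃ n : ℤ, a = l + n}, (toEnd ℂ g g t).eigenspace a := by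
    intro l
    refine Submodule.span_le.mpr ?_
    rintro v ⟨n, hn⟩
    refine Submodule.mem_iSup_of_mem (l + n) (Submodule.mem_iSup_of_mem ⟨n, rfl⟩ ?_)
    rw [Module.End.mem_eigenspace_iff]
    exact hn
  exact hv (Submodule.disjoint_def.mp hd v (hle l h1) (hle m h2))

lemma cls_inv {t : g} (h3 : ∀ x ∈ s, ⁅t, ⁅t, ⁅t, x⁆⁆⁆ = ⁅t, x⁆) {x : g} (hx : x ∈ s) :
    x ∈ cls t 0 := by
  have e : x = (x - ⁅t, ⁅t, x⁆⁆) + ((1/2 : ℂ) • (⁅t, ⁅t, x⁆⁆ + ⁅t, x⁆) + (1/2 : ℂ) • (⁅t, ⁅t, x⁆⁆ - ⁅t, x⁆)) := by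
    module
  rw [e]
  refine add_mem (Submodule.subset_span ⟨0, ?_⟩) (add_mem (Submodule.subset_span ⟨1, ?_⟩)
    (Submodule.subset_span ⟨-1, ?_⟩))
  · rw [lie_sub, h3 x hx]; simp
  · rw [lie_smul, lie_add, h3 x hx]; push_cast; module
  · rw [lie_smul, lie_sub, h3 x hx]; push_cast; module

lemma Good.cls_exists [FiniteDimensional ℂ g] (G : Good g s V) {t : g} (ht : t ∈ s)
    (h3 : ∀ x ∈ s, ⁅t, ⁅t, ⁅t, x⁆⁆⁆ = ⁅t, x⁆) (i : Fin 4) : ∃ l, V i ≤ cls t l := by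
  have := G.nontriv i
  obtain ⟨l, hl⟩ := Module.End.exists_eigenvalue (act (G.inv i) ⟨t, ht⟩)
  obtain ⟨v, hv⟩ := hl.exists_hasEigenvector
  refine ⟨l, ?_⟩
  have hv1 : ⁅t, (v : g)⁆ = l • (v : g) := congrArg Subtype.val hv.apply_eq_smul
  rcases G.irr i (V i ⊓ cls t l) inf_le_left (by
    intro x hx w hw
    refine ⟨G.inv i x hx w hw.1, ?_⟩
    have := cls_lie (cls_inv h3 hx) hw.2
    rwa [zero_add] at this) with h | h
  · exfalso
    have : (v : g) ∈ V i ⊓ cls t l := ⟨v.2, Submodule.subset_span ⟨0, by simpa using hv1⟩⟩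
    rw [h] at this
    exact hv.2 (Subtype.ext this)
  · exact inf_eq_left.mp h

lemma Good.no_three [FiniteDimensional ℂ g] (G : Good g s V) (hT : Tgt (tab V)) (h8 : 8 ≤ finrank ℂ s)
    (j : Fin 4) (hj : NoInv s (V j)) : finrank ℂ (V j) ≠ 3 := by
  intro h3
  have := G.levi.1
  have := G.nontriv j
  have hb := G.dim_bound j hj
  rw [h3] at hb
  obtain ⟨v0, hv0⟩ := _root_.exists_ne (0 : V j)
  obtain ⟨φ, hφ⟩ := Module.Projective.exists_dual_eq_one ℂ hv0
  let P : End ℂ (V j) := LinearMap.smulRight φ v0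
  have hP : P * P = P := by
    ext v; simp [P, hφ]
  have hPv : P v0 = v0 := by simp [P, hφ]
  have htr : LinearMap.trace ℂ (V j) (P - (1/3 : ℂ) • 1) = 0 := by
    rw [map_sub, map_smul, LinearMap.trace_one, h3]
    simp [P, LinearMap.trace_smulRight, hφ]
  obtain ⟨⟨t, ht⟩, htP⟩ := rep_surj (act (G.inv j)) (act_lie _) (G.act_inj j hj) (by rw [h3]; omega)
    (P - (1/3 : ℂ) • 1) htr
  have hcube : ∀ x ∈ s, ⁅t, ⁅t, ⁅t, x⁆⁆⁆ = ⁅t, x⁆ := by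
    intro x hx
    have : ⁅(⟨t, ht⟩ : s), ⁅(⟨t, ht⟩ : s), ⁅(⟨t, ht⟩ : s), (⟨x, hx⟩ : s)⁆⁆⁆ = ⁅(⟨t, ht⟩ : s), (⟨x, hx⟩ : s)⁆ := by
      apply G.act_inj j hj
      simp only [act_lie]
      rw [htP]
      generalize act (G.inv j) ⟨x, hx⟩ = X
      have e : ∀ Y : End ℂ (V j), (P - (1/3 : ℂ) • 1) * Y - Y * (P - (1/3 : ℂ) • 1) = P * Y - Y * P := by
        intro Y
        simp only [sub_mul, mul_sub, smul_mul_assoc, mul_smul_comm, one_mul, mul_one]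
        abel
      rw [e, e, e]
      have h1 : ∀ Y : End ℂ (V j), P * (P * Y) = P * Y := fun Y => by rw [← mul_assoc, hP]
      simp only [mul_sub, sub_mul, mul_assoc, hP, h1]
      abel
    exact congrArg Subtype.val this
  choose l hl using fun i => G.cls_exists ht hcube i
  have hrel : ∀ i k q, tab V i k = some q → ∃ n : ℤ, l i + l k - l q = n := by
    intro i k q h
    obtain ⟨x, hx, y, hy, hxy⟩ := G.exists_ne h
    exact cls_unique hxy (cls_lie (hl i hx) (hl k hy)) (hl q (G.mem_of h hx hy))
  have hj' : ∃ n : ℤ, l j - 2/3 = n := by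
    refine cls_unique (v := (v0 : g)) (fun h => hv0 (Subtype.ext h)) (hl j v0.2) (Submodule.subset_span ⟨0, ?_⟩)
    have : act (G.inv j) ⟨t, ht⟩ v0 = (2/3 : ℂ) • v0 := by
      rw [htP, LinearMap.sub_apply, hPv, LinearMap.smul_apply, Module.End.one_apply]
      module
    simpa using congrArg Subtype.val this
  have h2 : ∀ i, ∃ n : ℤ, 2 * l i = n := by
    obtain ⟨h02, -, -, -, -, hc⟩ := hT
    obtain ⟨a, ha⟩ := hrel _ _ _ h02
    have fin : ∀ n0 n1 n2 n3 : ℤ, 2 * l 0 = n0 → 2 * l 1 = n1 → 2 * l 2 = n2 → 2 * l 3 = n3 →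
        ∀ i, ∃ n : ℤ, 2 * l i = n := by
      intro n0 n1 n2 n3 e0 e1 e2 e3 i
      match i with
      | 0 => exact ⟨_, e0⟩
      | 1 => exact ⟨_, e1⟩
      | 2 => exact ⟨_, e2⟩
      | 3 => exact ⟨_, e3⟩
    rcases hc with ⟨h00, h11, h01⟩ | ⟨h01, h00, h11⟩
    · obtain ⟨b, hb⟩ := hrel _ _ _ h00
      obtain ⟨c, hc⟩ := hrel _ _ _ h11
      rcases h01 with ⟨h01, -⟩ | h01
      · obtain ⟨d, hd⟩ := hrel _ _ _ h01
        have e0 : l 0 = a + b - 2 * d + c := by linear_combination ha + hb - 2 * hd + hc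
        apply fin (2 * (a + b - 2 * d + c)) (2 * (c - d + (a + b - 2 * d + c)))
          (2 * (2 * (a + b - 2 * d + c) - b)) (2 * (2 * (c - d + (a + b - 2 * d + c)) - c)) <;> push_cast
        · linear_combination 2 * e0
        · linear_combination 2 * (hc - hd + e0)
        · linear_combination 2 * (-hb + 2 * e0)
        · linear_combination 2 * (-hc + 2 * (hc - hd + e0))
      · obtain ⟨d, hd⟩ := hrel _ _ _ h01
        have e0 : l 0 = a - b + 2 * d - c := by linear_combination ha - hb + 2 * hd - hc
        apply fin (2 * (a - b + 2 * d - c)) (2 * ((a - b + 2 * d - c) - b + d))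
          (2 * (2 * (a - b + 2 * d - c) - b)) (2 * (3 * (a - b + 2 * d - c) - b - a)) <;> push_cast
        · linear_combination 2 * e0
        · linear_combination 2 * (e0 - hb + hd)
        · linear_combination 2 * (-hb + 2 * e0)
        · linear_combination 2 * (3 * e0 - hb - ha)
    · obtain ⟨b, hb⟩ := hrel _ _ _ h00
      obtain ⟨d, hd⟩ := hrel _ _ _ h01
      have e1 : l 1 = a - b + d := by linear_combination ha - hb + hd
      rcases h11 with h11 | ⟨-, h12⟩
      · obtain ⟨c, hc⟩ := hrel _ _ _ h11
        apply fin (2 * (a - b + d) - c + b) (2 * (a - b + d))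
          (2 * (a - b + d) - c + b - 2 * b + 2 * a) (2 * (2 * (a - b + d) - c)) <;> push_cast
        · linear_combination hb - hc + 2 * e1
        · linear_combination 2 * e1
        · linear_combination hb - hc + 2 * e1 - 2 * hb + 2 * ha
        · linear_combination 2 * (2 * e1 - hc)
      · obtain ⟨c, hc⟩ := hrel _ _ _ h12
        have e0 : l 0 = a - b + d + a - c := by linear_combination e1 + ha - hc
        apply fin (2 * (a - b + d + a - c)) (2 * (a - b + d))
          (2 * ((a - b + d + a - c) - b + a)) (2 * (2 * (a - b + d + a - c) - b)) <;> push_cast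
        · linear_combination 2 * e0
        · linear_combination 2 * e1
        · linear_combination 2 * (e0 - hb + ha)
        · linear_combination 2 * (2 * e0 - hb)
  obtain ⟨n, hn⟩ := hj'
  obtain ⟨m, hm⟩ := h2 j
  have : (4 : ℂ) = ((3 * (m - 2 * n) : ℤ) : ℂ) := by
    push_cast; linear_combination 3 * hm - 6 * hn
  have : (4 : ℤ) = 3 * (m - 2 * n) := by exact_mod_cast this
  omega
end
end Symp

namespace Symp
open Module LieAlgebra LieModule

section
variable {g : Type*} [LieRing g] [LieAlgebra ℂ g] {s : LieSubalgebra ℂ g}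
  {V : Fin 4 → Submodule ℂ g}

/-- skew-symmetric `4 × 4` matrices -/
def Sk : Submodule ℂ (Matrix (Fin 4) (Fin 4) ℂ) where
  carrier := {M | M.transpose = -M}
  add_mem' := by
    intro a b ha hb
    simp only [Set.mem_ofPred_eq, Matrix.transpose_add] at *
    rw [ha, hb]; abel
  zero_mem' := by simp
  smul_mem' := by
    intro c a ha
    simp only [Set.mem_ofPred_eq, Matrix.transpose_smul] at *
    rw [ha]; simp

lemma mem_Sk {M} : M ∈ Sk ↔ M.transpose = -M := Iff.rfl

lemma finrank_Sk : finrank ℂ Sk = 6 := by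
  let F : Sk →ₗ[ℂ] (Fin 6 → ℂ) :=
    { toFun := fun M => ![M.1 0 1, M.1 0 2, M.1 0 3, M.1 1 2, M.1 1 3, M.1 2 3]
      map_add' := by
        intro x y
        ext i; fin_cases i <;> simp
      map_smul' := by
        intro x y
        ext i; fin_cases i <;> simp }
  have hi : Function.Injective F := by
    rw [← LinearMap.ker_eq_bot, LinearMap.ker_eq_bot']
    intro M hM
    have h := fun i => congrFun hM i
    have hs : ∀ p q, M.1 q p = - M.1 p q := fun p q => congrFun (congrFun (mem_Sk.1 M.2) p) q
    have h0 := h 0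
    have h1 := h 1
    have h2 := h 2
    have h3 := h 3
    have h4 := h 4
    have h5 := h 5
    simp [F] at h0 h1 h2 h3 h4 h5
    have hd : ∀ p, M.1 p p = 0 := fun p => by
      have := hs p p
      linear_combination this / 2
    ext p q
    fin_cases p <;> fin_cases q <;>
      simp [hd, h0, h1, h2, h3, h4, h5, hs 0 1, hs 0 2, hs 0 3, hs 1 2, hs 1 3, hs 2 3]
  have hsj : Function.Surjective F := by
    intro v
    refine ⟨⟨!![0, v 0, v 1, v 2; -v 0, 0, v 3, v 4; -v 1, -v 3, 0, v 5; -v 2, -v 4, -v 5, 0], ?_⟩, ?_⟩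
    · rw [mem_Sk]
      ext p q
      fin_cases p <;> fin_cases q <;> simp
    · ext i; fin_cases i <;> simp [F]
  rw [(LinearEquiv.ofBijective F ⟨hi, hsj⟩).finrank_eq]
  simp

lemma singular_comb (M1 M2 : Matrix (Fin 4) (Fin 4) ℂ) (h : LinearIndependent ℂ ![M1, M2]) :
    ∃ a b : ℂ, a • M1 + b • M2 ≠ 0 ∧ ∃ v, v ≠ 0 ∧ (a • M1 + b • M2).mulVec v = 0 := by
  rw [LinearIndependent.pair_iff] at h
  by_cases hd : M1.det = 0
  · obtain ⟨v, hv, hv'⟩ := Matrix.exists_mulVec_eq_zero_iff.mpr hd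
    refine ⟨1, 0, ?_, v, hv, ?_⟩
    · intro h0
      simpa using (h 1 0 h0).1
    · simpa using hv'
  · obtain ⟨l, hl⟩ := Module.End.exists_eigenvalue (Matrix.toLin' (M1⁻¹ * M2))
    obtain ⟨v, hv⟩ := hl.exists_hasEigenvector
    have e := hv.apply_eq_smul
    rw [Matrix.toLin'_apply] at e
    refine ⟨-l, 1, ?_, v, hv.2, ?_⟩
    · intro h0
      simpa using (h (-l) 1 h0).2
    · have e2 := congrArg (fun w => M1.mulVec w) e
      simp only [Matrix.mulVec_mulVec, Matrix.mulVec_smul] at e2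
      rw [← mul_assoc, Matrix.mul_nonsing_inv _ (isUnit_iff_ne_zero.mpr hd), one_mul] at e2
      rw [Matrix.add_mulVec, Matrix.smul_mulVec, Matrix.smul_mulVec, e2]
      module

lemma Good.pencil [FiniteDimensional ℂ g] (G : Good g s V) (h8 : 8 ≤ finrank ℂ s) {i q : Fin 4}
    (h : tab V i i = some q) (hi : finrank ℂ (V i) = 4) (hq : finrank ℂ (V q) = 4) : False := by
  have := G.levi.1
  let b : Basis (Fin 4) ℂ (V i) := finBasisOfFinrankEq ℂ (V i) hi
  let R : s → Matrix (Fin 4) (Fin 4) ℂ := fun x => LinearMap.toMatrix b b (act (G.inv i) x)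
  have hR : ∀ x y, R ⁅x, y⁆ = R x * R y - R y * R x := by
    intro x y
    simp only [R, act_lie, map_sub, LinearMap.toMatrix_mul]
  have hRb : ∀ (x : s) p, ⁅(x : g), (b p : g)⁆ = ∑ r, R x r p • (b r : g) := by
    intro x p
    have : act (G.inv i) x (b p) = ∑ r, R x r p • b r := by
      rw [← b.sum_repr (act (G.inv i) x (b p))]
      simp [R, LinearMap.toMatrix_apply]
    have := congrArg Subtype.val this
    simpa using this
  let Φ : Matrix (Fin 4) (Fin 4) ℂ →ₗ[ℂ] g :=
    { toFun := fun M => ∑ p, ∑ r, M p r • ⁅(b p : g), (b r : g)⁆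
      map_add' := by
        intro M N
        simp [add_smul, Finset.sum_add_distrib]
      map_smul' := by
        intro c M
        simp [mul_smul, Finset.smul_sum] }
  have hΦ : ∀ M, Φ M = ∑ p, ∑ r, M p r • ⁅(b p : g), (b r : g)⁆ := fun M => rfl
  have hequiv : ∀ (x : s) M, ⁅(x : g), Φ M⁆ = Φ (R x * M + M * (R x).transpose) := by
    intro x M
    rw [map_add, hΦ, hΦ, hΦ, lie_sum]
    simp only [lie_sum, lie_smul, leibniz_lie (x : g), hRb, sum_lie, smul_lie, smul_add,
      Finset.sum_add_distrib, Matrix.mul_apply, Matrix.transpose_apply, Finset.sum_smul,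
      Finset.smul_sum, smul_smul]
    congr 1
    · calc _ = ∑ p, ∑ r, ∑ t, (M p t * R x r p) • ⁅(b r : g), (b t : g)⁆ :=
            Finset.sum_congr rfl fun p _ => Finset.sum_comm
        _ = ∑ r, ∑ p, ∑ t, (M p t * R x r p) • ⁅(b r : g), (b t : g)⁆ := Finset.sum_comm
        _ = ∑ r, ∑ t, ∑ p, (M p t * R x r p) • ⁅(b r : g), (b t : g)⁆ :=
            Finset.sum_congr rfl fun p _ => Finset.sum_comm
        _ = _ := by simp only [mul_comm]
    · refine Finset.sum_congr rfl fun p _ => ?_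
      rw [Finset.sum_comm]
  let Ψ : Sk →ₗ[ℂ] g := Φ.domRestrict Sk
  have hrange : LinearMap.range Ψ = V q := by
    rw [← (G.tab_some i i q).1 h]
    apply le_antisymm
    · rintro _ ⟨M, rfl⟩
      change (∑ p, ∑ r, M.1 p r • ⁅(b p : g), (b r : g)⁆) ∈ _
      refine Submodule.sum_mem _ fun p _ => ?_
      refine Submodule.sum_mem _ fun r _ => Submodule.smul_mem _ _ ?_
      exact lie_mem_span2 (g := g) (A := V i) (B := V i) (b p).2 (b r).2
    · refine Submodule.span_le.mpr ?_
      rintro _ ⟨x, hx, y, hy, rfl⟩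
      let u := b.repr ⟨x, hx⟩
      let w := b.repr ⟨y, hy⟩
      have ex : x = ∑ p, u p • (b p : g) := by
        have := congrArg (V i).subtype (b.sum_repr ⟨x, hx⟩)
        rw [map_sum] at this
        exact this.symm
      have ey : y = ∑ p, w p • (b p : g) := by
        have := congrArg (V i).subtype (b.sum_repr ⟨y, hy⟩)
        rw [map_sum] at this
        exact this.symm
      have key : Φ (Matrix.of fun p r => u p * w r) = ⁅x, y⁆ := by
        rw [ex, ey, hΦ]
        simp only [sum_lie, lie_sum, Finset.smul_sum, smul_smul, smul_lie, lie_smul, Matrix.of_apply]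
        refine Eq.trans ?_ Finset.sum_comm
        refine Finset.sum_congr rfl fun p _ => Finset.sum_congr rfl fun r _ => ?_
        rw [mul_comm]
      have key2 : Φ (Matrix.of fun p r => w p * u r) = ⁅y, x⁆ := by
        rw [ex, ey, hΦ]
        simp only [sum_lie, lie_sum, Finset.smul_sum, smul_smul, smul_lie, lie_smul, Matrix.of_apply]
        refine Eq.trans ?_ Finset.sum_comm
        refine Finset.sum_congr rfl fun p _ => Finset.sum_congr rfl fun r _ => ?_
        rw [mul_comm]
      refine ⟨⟨(1/2 : ℂ) • ((Matrix.of fun p r => u p * w r) - (Matrix.of fun p r => w p * u r)), ?_⟩, ?_⟩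
      · rw [mem_Sk]
        ext p r
        simp; ring
      · change Φ _ = _
        refine (map_smul Φ _ _).trans ?_
        rw [map_sub Φ, key, key2, ← lie_skew x y]
        module
  have hk2 : finrank ℂ (LinearMap.ker Ψ) = 2 := by
    have := LinearMap.finrank_range_add_finrank_ker Ψ
    rw [hrange, hq, finrank_Sk] at this
    omega
  let K : Submodule ℂ (Matrix (Fin 4) (Fin 4) ℂ) := (LinearMap.ker Ψ).map Sk.subtype
  have hK2 : finrank ℂ K = 2 := by
    rw [← hk2]
    exact Submodule.finrank_map_subtype_eq _ _
  have hKm : ∀ M, M ∈ K ↔ M ∈ Sk ∧ Φ M = 0 := by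
    intro M
    constructor
    · rintro ⟨N, hN, rfl⟩
      exact ⟨N.2, hN⟩
    · rintro ⟨h1, h2⟩
      exact ⟨⟨M, h1⟩, h2, rfl⟩
  have hinv : ∀ x : s, ∀ M ∈ K, R x * M + M * (R x).transpose ∈ K := by
    intro x M hM
    rw [hKm] at hM ⊢
    refine ⟨?_, by rw [← hequiv, hM.2, lie_zero]⟩
    have := mem_Sk.1 hM.1
    rw [mem_Sk, Matrix.transpose_add, Matrix.transpose_mul, Matrix.transpose_mul, this,
      Matrix.transpose_transpose]
    simp [add_comm]
  let ρ : s →ₗ[ℂ] End ℂ K :=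
    { toFun := fun x =>
        { toFun := fun M => ⟨R x * M.1 + M.1 * (R x).transpose, hinv x M.1 M.2⟩
          map_add' := by
            intro M N
            apply Subtype.ext
            simp [mul_add, add_mul]
            abel
          map_smul' := by
            intro c M
            apply Subtype.ext
            simp }
      map_add' := by
        intro x y
        ext1 M
        apply Subtype.ext
        simp [R, mul_add, add_mul]
        abel
      map_smul' := by
        intro c x
        ext1 M
        apply Subtype.ext
        simp [R] }
  have hρ : ∀ x y, ρ ⁅x, y⁆ = ρ x * ρ y - ρ y * ρ x := by
    intro x y
    ext1 M
    apply Subtype.ext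
    change R ⁅x, y⁆ * M.1 + M.1 * (R ⁅x, y⁆).transpose =
      (R x * (R y * M.1 + M.1 * (R y).transpose) + (R y * M.1 + M.1 * (R y).transpose) * (R x).transpose)
      - (R y * (R x * M.1 + M.1 * (R x).transpose) + (R x * M.1 + M.1 * (R x).transpose) * (R y).transpose)
    rw [hR]
    simp only [Matrix.transpose_sub, Matrix.transpose_mul]
    noncomm_ring
  have h0 : ρ = 0 := by
    rcases rep_zero_or_inj ρ hρ with h | h
    · exact h
    · exfalso
      have := LinearMap.finrank_le_finrank_of_injective h
      rw [Module.finrank_linearMap, hK2] at this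
      omega
  have h0' : ∀ x : s, ∀ M ∈ K, R x * M + M * (R x).transpose = 0 := by
    intro x M hM
    have := congrArg Subtype.val (LinearMap.congr_fun (LinearMap.congr_fun h0 x) ⟨M, hM⟩)
    exact this
  let c : Basis (Fin 2) ℂ K := finBasisOfFinrankEq ℂ K hK2
  have hli : LinearIndependent ℂ ![(c 0).1, (c 1).1] := by
    have := c.linearIndependent.map' K.subtype K.ker_subtype
    have e : (K.subtype ∘ c : Fin 2 → _) = ![(c 0).1, (c 1).1] := by
      ext1 t
      fin_cases t <;> rfl
    rw [e] at this
    exact this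
  obtain ⟨α, β, hne, v, hv, hv0⟩ := singular_comb _ _ hli
  set M := α • (c 0).1 + β • (c 1).1 with hM
  have hMK : M ∈ K := add_mem (K.smul_mem _ (c 0).2) (K.smul_mem _ (c 1).2)
  -- the embedding of coordinates
  let E : (Fin 4 → ℂ) →ₗ[ℂ] g := (V i).subtype ∘ₗ b.equivFun.symm.toLinearMap
  have hE : ∀ w, E w = ∑ p, w p • (b p : g) := by
    intro w
    simp [E, Basis.equivFun_symm_apply]
  have hEi : Function.Injective E := by
    intro x y hxy
    exact b.equivFun.symm.injective (Subtype.ext hxy)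
  have hEx : ∀ (x : s) w, ⁅(x : g), E w⁆ = E ((R x).mulVec w) := by
    intro x w
    rw [hE, hE, lie_sum]
    simp only [lie_smul, hRb, Matrix.mulVec, dotProduct, Finset.smul_sum, Finset.sum_smul, smul_smul]
    rw [Finset.sum_comm]
    simp only [mul_comm]
  rcases G.irr i (LinearMap.range (E ∘ₗ Matrix.mulVecLin M)) (by
      rintro _ ⟨w, rfl⟩
      exact (b.equivFun.symm _).2) (by
      rintro x hx _ ⟨w, rfl⟩
      refine ⟨-(R ⟨x, hx⟩).transpose.mulVec w, ?_⟩
      have e := h0' ⟨x, hx⟩ M hMK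
      have e2 := hEx ⟨x, hx⟩ (M.mulVec w)
      simp only [LinearMap.comp_apply, Matrix.mulVecLin_apply]
      refine Eq.trans ?_ e2.symm
      congr 1
      rw [Matrix.mulVec_neg, Matrix.mulVec_mulVec, Matrix.mulVec_mulVec, eq_neg_of_add_eq_zero_left e,
        Matrix.neg_mulVec]) with hb | ht
  · apply hne
    rw [LinearMap.range_eq_bot] at hb
    ext p r
    have := LinearMap.congr_fun hb (Pi.single r 1)
    have := hEi (this.trans (map_zero E).symm)
    have := congrFun this p
    simpa using this
  · have hsurj : Function.Surjective (Matrix.mulVecLin M) := by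
      intro w
      have : E w ∈ LinearMap.range (E ∘ₗ Matrix.mulVecLin M) := by
        rw [ht]; exact (b.equivFun.symm _).2
      obtain ⟨u, hu⟩ := this
      exact ⟨u, hEi hu⟩
    have hinj := LinearMap.injective_iff_surjective.mpr hsurj
    apply hv
    apply hinj
    rw [map_zero]
    exact hv0

lemma Good.large [FiniteDimensional ℂ g] (G : Good g s V) (hT : Tgt (tab V)) (h8 : 8 ≤ finrank ℂ s) :
    25 ≤ finrank ℂ g := by
  have b0 := G.dim_bound 0 (G.noInv0 hT)
  have b1 := G.dim_bound 1 (G.noInv1 hT)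
  have b3 := G.dim_bound 3 (G.noInv3 hT)
  have n0 := G.no_three hT h8 0 (G.noInv0 hT)
  have n1 := G.no_three hT h8 1 (G.noInv1 hT)
  have n3 := G.no_three hT h8 3 (G.noInv3 hT)
  have aux : ∀ n : ℕ, finrank ℂ s + 1 ≤ n * n → n ≠ 3 → 4 ≤ n := by
    intro n h1 h2
    by_contra h
    have : n ≤ 3 := by omega
    interval_cases n <;> omega
  have c0 := aux _ b0 n0
  have c1 := aux _ b1 n1
  have c3 := aux _ b3 n3
  have i2 : NoInv s (V 2) := by
    rcases G.noInv2_or hT with h | h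
    · exact h
    · omega
  have c2 := aux _ (G.dim_bound 2 i2) (G.no_three hT h8 2 i2)
  by_contra hlt
  rw [G.finrank_eq] at hlt
  have hc := hT.2.2.2.2.2
  rcases hc with ⟨-, h, -⟩ | ⟨-, h, -⟩
  · exact G.pencil h8 h (by omega) (by omega)
  · exact G.pencil h8 h (by omega) (by omega)
end
end Symp

namespace Symp
open Module LieAlgebra LieModule

section
variable {g : Type*} [LieRing g] [LieAlgebra ℂ g] {s : LieSubalgebra ℂ g}
  {V : Fin 4 → Submodule ℂ g}

/-- `s` is spanned by an `sl₂`-triple -/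
structure Trip (s : LieSubalgebra ℂ g) (h e f : g) : Prop where
  hs : h ∈ s
  es : e ∈ s
  fs : f ∈ s
  t : IsSl2Triple h e f
  span : ∀ x ∈ s, ∃ a b c : ℂ, x = a • h + b • e + c • f

lemma trip_exists [FiniteDimensional ℂ g] (h3 : finrank ℂ s = 3) {h e f : s}
    (t : IsSl2Triple h e f) : Trip s (h : g) e f where
  hs := h.2
  es := e.2
  fs := f.2
  t :=
    { h_ne_zero := fun h0 => t.h_ne_zero (Subtype.ext h0)
      lie_e_f := congrArg Subtype.val t.lie_e_f
      lie_h_e_nsmul := congrArg Subtype.val t.lie_h_e_nsmul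
      lie_h_f_nsmul := congrArg Subtype.val t.lie_h_f_nsmul }
  span := by
    have hli : LinearIndependent ℂ ![h, e, f] := by
      refine (toEnd ℂ s s h).eigenvectors_linearIndependent' ![0, 2, -2] ?_ _ ?_
      · intro i j
        fin_cases i <;> fin_cases j <;> norm_num
      · intro i
        fin_cases i
        · exact ⟨by simp, t.h_ne_zero⟩
        · exact ⟨by simpa [Module.End.mem_eigenspace_iff] using t.lie_h_e_smul ℂ, t.e_ne_zero⟩
        · exact ⟨by simpa [Module.End.mem_eigenspace_iff] using t.lie_lie_smul_f ℂ, t.f_ne_zero⟩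
    have htop := hli.span_eq_top_of_card_eq_finrank' (by simp [h3])
    intro x hx
    have : (⟨x, hx⟩ : s) ∈ Submodule.span ℂ (Set.range ![h, e, f]) := by rw [htop]; trivial
    rw [Submodule.mem_span_range_iff_exists_fun] at this
    obtain ⟨c, hc⟩ := this
    refine ⟨c 0, c 1, c 2, ?_⟩
    have := congrArg Subtype.val hc
    simp [Fin.sum_univ_three] at this
    exact this.symm

/-- a standard string basis of an irreducible `sl₂`-module -/
structure Str (h e f : g) (W : Submodule ℂ g) (n : ℕ) (v : ℕ → g) : Prop where
  ne : ∀ i ≤ n, v i ≠ 0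
  zero : ∀ i, n < i → v i = 0
  lh : ∀ i, ⁅h, v i⁆ = ((n : ℂ) - 2 * i) • v i
  lf : ∀ i, ⁅f, v i⁆ = v (i + 1)
  le0 : ⁅e, v 0⁆ = 0
  le : ∀ i : ℕ, ⁅e, v (i + 1)⁆ = (((i : ℂ) + 1) * (n - i)) • v i
  span : W = Submodule.span ℂ (Set.range fun i : Fin (n + 1) => v i)

variable {h e f : g} {W : Submodule ℂ g} {n : ℕ} {v : ℕ → g}

lemma Str.mem (S : Str h e f W n v) (i : ℕ) : v i ∈ W := by
  by_cases hi : i ≤ n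
  · rw [S.span]
    exact Submodule.subset_span ⟨⟨i, by omega⟩, rfl⟩
  · rw [S.zero i (by omega)]; exact zero_mem _

lemma Str.li (S : Str h e f W n v) : LinearIndependent ℂ (fun i : Fin (n + 1) => v i) := by
  refine (toEnd ℂ g g h).eigenvectors_linearIndependent' (fun i : Fin (n + 1) => (n : ℂ) - 2 * (i : ℕ)) ?_ _ ?_
  · intro i j hij
    simp only [sub_right_inj, mul_eq_mul_left_iff, Nat.cast_inj, OfNat.ofNat_ne_zero, or_false] at hij
    exact Fin.ext hij
  · intro i
    refine ⟨?_, S.ne i (by omega)⟩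
    rw [Module.End.mem_eigenspace_iff]
    exact S.lh i

lemma Str.finrank (S : Str h e f W n v) : finrank ℂ W = n + 1 := by
  rw [S.span, finrank_span_eq_card S.li]; simp

lemma Str.smul (S : Str h e f W n v) {c : ℂ} (hc : c ≠ 0) : Str h e f W n (fun i => c • v i) where
  ne i hi := smul_ne_zero hc (S.ne i hi)
  zero i hi := by simp [S.zero i hi]
  lh i := by rw [lie_smul, S.lh, smul_comm]
  lf i := by rw [lie_smul, S.lf]
  le0 := by rw [lie_smul, S.le0, smul_zero]
  le i := by rw [lie_smul, S.le, smul_comm]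
  span := by
    rw [S.span]
    apply le_antisymm
    · rw [Submodule.span_le]
      rintro _ ⟨i, rfl⟩
      have : c • v i ∈ Submodule.span ℂ (Set.range fun i : Fin (n + 1) => c • v i) :=
        Submodule.subset_span ⟨i, rfl⟩
      have := Submodule.smul_mem _ c⁻¹ this
      rwa [smul_smul, inv_mul_cancel₀ hc, one_smul] at this
    · rw [Submodule.span_le]
      rintro _ ⟨i, rfl⟩
      exact Submodule.smul_mem _ _ (Submodule.subset_span ⟨i, rfl⟩)

lemma Str.eig (S : Str h e f W n v) {x : g} (hx : x ∈ W) (hx0 : x ≠ 0) {ν : ℂ} (hν : ⁅h, x⁆ = ν • x) :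
    ∃ l ≤ n, ν = n - 2 * l ∧ ∃ c : ℂ, x = c • v l := by
  rw [S.span, Submodule.mem_span_range_iff_exists_fun] at hx
  obtain ⟨c, rfl⟩ := hx
  have hz : ∑ i : Fin (n + 1), (c i * ((n : ℂ) - 2 * (i : ℕ) - ν)) • v i = 0 := by
    rw [lie_sum, Finset.smul_sum, ← sub_eq_zero, ← Finset.sum_sub_distrib] at hν
    rw [← hν]
    refine Finset.sum_congr rfl fun i _ => ?_
    rw [lie_smul, S.lh]
    module
  have hc := Fintype.linearIndependent_iff.mp S.li _ hz
  obtain ⟨i, -, hi⟩ := Finset.exists_ne_zero_of_sum_ne_zero hx0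
  have hci : c i ≠ 0 := fun h0 => hi (by rw [h0, zero_smul])
  have hν' : ν = n - 2 * (i : ℕ) := by
    have := (mul_eq_zero.mp (hc i)).resolve_left hci
    linear_combination -this
  refine ⟨i, by omega, hν', c i, ?_⟩
  refine Finset.sum_eq_single i ?_ (by simp)
  intro j _ hji
  have := hc j
  rw [hν', mul_eq_zero] at this
  rcases this with h0 | h0
  · rw [h0, zero_smul]
  · exfalso
    apply hji
    have : ((j : ℕ) : ℂ) = (i : ℕ) := by linear_combination -h0 / 2
    exact Fin.ext (by exact_mod_cast this)

lemma Good.str [FiniteDimensional ℂ g] (G : Good g s V) (T : Trip s h e f) (i : Fin 4) :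
    ∃ n v, Str h e f (V i) n v := by
  have hprim : ∃ (μ : ℂ) (m : g), m ∈ V i ∧ m ≠ 0 ∧ ⁅h, m⁆ = μ • m ∧ ⁅e, m⁆ = 0 := by
    let N : LieSubmodule ℂ s g := { V i with lie_mem := fun {x m} hm => G.inv i x x.2 m hm }
    have : Nontrivial N := G.nontriv i
    have tt : IsSl2Triple (⟨h, T.hs⟩ : s) ⟨e, T.es⟩ ⟨f, T.fs⟩ :=
      { h_ne_zero := fun h0 => T.t.h_ne_zero (congrArg Subtype.val h0)
        lie_e_f := Subtype.ext T.t.lie_e_f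
        lie_h_e_nsmul := Subtype.ext T.t.lie_h_e_nsmul
        lie_h_f_nsmul := Subtype.ext T.t.lie_h_f_nsmul }
    obtain ⟨μ, m, hm, P⟩ := IsSl2Triple.exists_hasPrimitiveVectorWith (R := ℂ) (M := N) tt
    refine ⟨μ, m, m.2, fun h0 => hm (Subtype.ext h0), ?_, ?_⟩
    · exact congrArg Subtype.val P.lie_h
    · exact congrArg Subtype.val P.lie_e
  obtain ⟨μ, m, hmV, hm0, hmh, hme⟩ := hprim
  have P : T.t.HasPrimitiveVectorWith m μ := ⟨hm0, hmh, hme⟩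
  obtain ⟨n, hn⟩ := P.exists_nat
  let v : ℕ → g := fun j => ((toEnd ℂ g g f) ^ j) m
  have hlf : ∀ j, ⁅f, v j⁆ = v (j + 1) := P.lie_f_pow_toEnd_f
  have hlh : ∀ j, ⁅h, v j⁆ = ((n : ℂ) - 2 * j) • v j := fun j => hn ▸ P.lie_h_pow_toEnd_f j
  have hle : ∀ j : ℕ, ⁅e, v (j + 1)⁆ = (((j : ℂ) + 1) * (n - j)) • v j := fun j => hn ▸ P.lie_e_pow_succ_toEnd_f j
  have hle0 : ⁅e, v 0⁆ = 0 := hme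
  have hz : ∀ j, n < j → v j = 0 := by
    intro j hj
    induction j with
    | zero => omega
    | succ j ih =>
      rcases Nat.lt_or_ge n j with h1 | h1
      · rw [← hlf, ih h1, lie_zero]
      · have : j = n := by omega
        rw [this]
        exact P.pow_toEnd_f_eq_zero_of_eq_nat hn
  have hV : ∀ j, v j ∈ V i := by
    intro j
    induction j with
    | zero => exact hmV
    | succ j ih => rw [← hlf]; exact G.inv i f T.fs _ ih
  let W := Submodule.span ℂ (Set.range fun i : Fin (n + 1) => v i)
  have hW : ∀ j, v j ∈ W := by
    intro j
    by_cases hj : j ≤ n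
    · exact Submodule.subset_span ⟨⟨j, by omega⟩, rfl⟩
    · rw [hz j (by omega)]; exact zero_mem _
  refine ⟨n, v, fun j hj => P.pow_toEnd_f_ne_zero_of_eq_nat hn hj, hz, hlh, hlf, hle0, hle, ?_⟩
  have := G.irr i W (by
    rw [Submodule.span_le]
    rintro _ ⟨j, rfl⟩
    exact hV j) (by
    intro x hx w hw
    obtain ⟨a, b, c, rfl⟩ := T.span x hx
    induction hw using Submodule.span_induction with
    | mem w hw =>
      obtain ⟨j, rfl⟩ := hw
      simp only [add_lie, smul_lie, hlh, hlf]
      refine add_mem (add_mem (W.smul_mem _ (W.smul_mem _ (hW _))) (W.smul_mem _ ?_)) (W.smul_mem _ (hW _))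
      rcases hj : (j : ℕ) with _ | j'
      · rw [hle0]; exact zero_mem _
      · rw [hle]; exact W.smul_mem _ (hW _)
    | zero => simp
    | add y y' _ _ e e' => rw [lie_add]; exact add_mem e e'
    | smul c y _ e => rw [lie_smul]; exact Submodule.smul_mem _ _ e)
  rcases this with h0 | h0
  · exfalso
    have := hW 0
    rw [h0] at this
    exact hm0 this
  · exact h0.symm

/-- Clebsch-Gordan coefficients, normalised -/
def cgc (a b c : ℕ) : ℕ → ℕ → ℕ → ℚ
  | 0, i, _ => (-1) ^ i
  | l + 1, i, j => ((i : ℚ) * (a + 1 - i) * cgc a b c l (i - 1) j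
      + (j : ℚ) * (b + 1 - j) * cgc a b c l i (j - 1)) / (((l : ℚ) + 1) * (c - l))

lemma Str.bracket {A B C : Submodule ℂ g} {a b c : ℕ} {v w u0 : ℕ → g} (hA : Str h e f A a v)
    (hB : Str h e f B b w) (hC : Str h e f C c u0) (hmem : ∀ x ∈ A, ∀ y ∈ B, ⁅x, y⁆ ∈ C)
    (hne : ∃ x ∈ A, ∃ y ∈ B, ⁅x, y⁆ ≠ 0) :
    ∃ k u, Str h e f C c u ∧ a + b = c + 2 * k ∧ k ≤ a ∧ k ≤ b ∧
      (∀ i j, i + j < k → ⁅v i, w j⁆ = 0) ∧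
      (∀ l ≤ c, ∀ i j, i + j = k + l → ⁅v i, w j⁆ = (cgc a b c l i j : ℂ) • u l) := by
  classical
  have hex : ∃ m, ∃ i j, i + j = m ∧ ⁅v i, w j⁆ ≠ 0 := by
    by_contra hcon
    push Not at hcon
    obtain ⟨x, hx, y, hy, hxy⟩ := hne
    apply hxy
    rw [hA.span] at hx
    rw [hB.span] at hy
    induction hx using Submodule.span_induction with
    | mem x hx =>
      obtain ⟨i, rfl⟩ := hx
      clear hxy
      induction hy using Submodule.span_induction with
      | mem y hy =>
        obtain ⟨j, rfl⟩ := hy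
        exact hcon _ _ _ rfl
      | zero => simp
      | add y y' _ _ e e' => rw [lie_add, e, e', add_zero]
      | smul c y _ e => rw [lie_smul, e, smul_zero]
    | zero => simp
    | add x x' _ _ e e' =>
      rw [add_lie]
      by_cases h1 : ⁅x, y⁆ = 0
      · by_cases h2 : ⁅x', y⁆ = 0
        · rw [h1, h2, add_zero]
        · exact absurd (e' h2) h2
      · exact absurd (e h1) h1
    | smul c x _ e =>
      rw [smul_lie]
      by_cases h1 : ⁅x, y⁆ = 0
      · rw [h1, smul_zero]
      · exact absurd (e h1) h1
  set k := Nat.find hex with hk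
  obtain ⟨i0, j0, hij0, hz⟩ := Nat.find_spec hex
  rw [← hk] at hij0
  have hlow : ∀ i j, i + j < k → ⁅v i, w j⁆ = 0 := by
    intro i j hij
    by_contra h0
    exact Nat.find_min hex hij ⟨i, j, rfl, h0⟩
  have hwt : ∀ i j, ⁅h, ⁅v i, w j⁆⁆ = ((a : ℂ) + b - 2 * ((i + j : ℕ) : ℂ)) • ⁅v i, w j⁆ := by
    intro i j
    rw [leibniz_lie, hA.lh, hB.lh, smul_lie, lie_smul]
    push_cast
    module
  have hm : ∀ i j, ⁅v i, w j⁆ ∈ C := fun i j => hmem _ (hA.mem i) _ (hB.mem j)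
  obtain ⟨l, hl, hν, α, hα⟩ := hC.eig (hm i0 j0) hz (hwt i0 j0)
  have hα0 : α ≠ 0 := fun h0 => hz (by rw [hα, h0, zero_smul])
  have hez : ⁅e, ⁅v i0, w j0⁆⁆ = 0 := by
    rw [leibniz_lie]
    have h1 : ⁅⁅e, v i0⁆, w j0⁆ = 0 := by
      rcases i0 with _ | i
      · rw [hA.le0, zero_lie]
      · rw [hA.le, smul_lie, hlow i j0 (by omega), smul_zero]
    have h2 : ⁅v i0, ⁅e, w j0⁆⁆ = 0 := by
      rcases j0 with _ | j
      · rw [hB.le0, lie_zero]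
      · rw [hB.le, lie_smul, hlow i0 j (by omega), smul_zero]
    rw [h1, h2, add_zero]
  have hl0 : l = 0 := by
    rcases l with _ | l
    · rfl
    · exfalso
      rw [hα, lie_smul, hC.le, smul_smul] at hez
      have h1 := (smul_eq_zero.mp hez).resolve_right (hC.ne l (by omega))
      have h2 := (mul_eq_zero.mp h1).resolve_left hα0
      have h3 := (mul_eq_zero.mp h2).resolve_left (Nat.cast_add_one_ne_zero l)
      have : (c : ℂ) = l := by linear_combination h3
      have : c = l := by exact_mod_cast this
      omega
  have hsum : a + b = c + 2 * k := by
    rw [hl0, hij0] at hν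
    have : ((a + b : ℕ) : ℂ) = ((c + 2 * k : ℕ) : ℂ) := by
      push_cast
      push_cast at hν
      linear_combination hν
    exact_mod_cast this
  have htop : ∀ i j, i + j = k → ⁅v i, w j⁆ = ((-1 : ℂ) ^ i) • ⁅v 0, w k⁆ := by
    intro i
    induction i with
    | zero => intro j hj; rw [zero_add] at hj; rw [hj]; simp
    | succ i ih =>
      intro j hj
      have h1 : ⁅f, ⁅v i, w j⁆⁆ = 0 := by rw [hlow i j (by omega), lie_zero]
      rw [leibniz_lie, hA.lf, hB.lf, ih (j + 1) (by omega)] at h1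
      rw [eq_neg_of_add_eq_zero_left h1, pow_succ]
      module
  have ht0 : ⁅v 0, w k⁆ ≠ 0 := by
    intro h0
    apply hz
    rw [htop i0 j0 hij0, h0, smul_zero]
  obtain ⟨l', hl', hν', β, hβ⟩ := hC.eig (hm 0 k) ht0 (hwt 0 k)
  have hl'0 : l' = 0 := by
    have h1 : ((a + b : ℕ) : ℂ) = ((c + 2 * k : ℕ) : ℂ) := by rw [hsum]
    push_cast at h1 hν'
    have : ((l' : ℕ) : ℂ) = (0 : ℕ) := by push_cast; linear_combination (hν' - h1) / 2
    exact_mod_cast this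
  subst hl'0
  have hβ0 : β ≠ 0 := fun h0 => ht0 (by rw [hβ, h0, zero_smul])
  have hU := hC.smul hβ0
  refine ⟨k, fun i => β • u0 i, hU, hsum, ?_, ?_, hlow, ?_⟩
  · by_contra hka
    have h1 := htop k 0 (by omega)
    rw [hA.zero k (by omega), zero_lie] at h1
    exact smul_ne_zero (pow_ne_zero _ (by norm_num)) ht0 h1.symm
  · by_contra hkb
    apply ht0
    rw [hB.zero k (by omega), lie_zero]
  · have hu0 : ⁅v 0, w k⁆ = (fun i => β • u0 i) 0 := hβ
    generalize (fun i => β • u0 i) = u at hU hu0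
    intro l
    induction l with
    | zero =>
      intro _ i j hij
      rw [htop i j hij, hu0]
      simp [cgc]
    | succ l ih =>
      intro hl i j hij
      have ih' := ih (by omega)
      have hx : ∃ x : ℂ, ⁅v i, w j⁆ = x • u (l + 1) := by
        by_cases h0 : ⁅v i, w j⁆ = 0
        · exact ⟨0, by rw [h0, zero_smul]⟩
        · obtain ⟨l', hl', hν', x, hx⟩ := hU.eig (hm i j) h0 (hwt i j)
          have : l' = l + 1 := by
            have h1 : ((a + b : ℕ) : ℂ) = ((c + 2 * k : ℕ) : ℂ) := by rw [hsum]
            rw [hij] at hν'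
            push_cast at h1 hν'
            have : ((l' : ℕ) : ℂ) = (l + 1 : ℕ) := by push_cast; linear_combination (hν' - h1) / 2
            exact_mod_cast this
          exact ⟨x, this ▸ hx⟩
      obtain ⟨x, hx⟩ := hx
      have e1 : ⁅⁅e, v i⁆, w j⁆ = ((i : ℂ) * (a + 1 - i) * (cgc a b c l (i - 1) j : ℂ)) • u l := by
        rcases i with _ | i
        · rw [hA.le0, zero_lie]; simp
        · rw [hA.le, smul_lie, ih' i j (by omega), smul_smul]
          push_cast
          congr 1; ring
      have e2 : ⁅v i, ⁅e, w j⁆⁆ = ((j : ℂ) * (b + 1 - j) * (cgc a b c l i (j - 1) : ℂ)) • u l := by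
        rcases j with _ | j
        · rw [hB.le0, lie_zero]; simp
        · rw [hB.le, lie_smul, ih' i j (by omega), smul_smul]
          push_cast
          congr 1; ring
      have e3 : ⁅e, ⁅v i, w j⁆⁆ = ⁅⁅e, v i⁆, w j⁆ + ⁅v i, ⁅e, w j⁆⁆ := leibniz_lie _ _ _
      rw [e1, e2, hx, lie_smul, hU.le, smul_smul, ← add_smul] at e3
      have e4 := smul_left_injective ℂ (hU.ne l (by omega)) e3
      rw [hx]
      congr 1
      have n1 : (l : ℂ) + 1 ≠ 0 := Nat.cast_add_one_ne_zero l
      have n2 : (c : ℂ) - l ≠ 0 := by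
        intro h0
        have : (c : ℂ) = l := by linear_combination h0
        have : c = l := by exact_mod_cast this
        omega
      simp only [cgc]
      push_cast
      rw [eq_div_iff (mul_ne_zero n1 n2)]
      exact e4
end
end Symp

namespace Symp
open Module LieAlgebra LieModule

section
variable {g : Type*} [LieRing g] [LieAlgebra ℂ g] {s : LieSubalgebra ℂ g}
  {V : Fin 4 → Submodule ℂ g} {h e f : g}

lemma Good.ne_dim [FiniteDimensional ℂ g] (G : Good g s V) (T : Trip s h e f)
    (hn : ∀ i, NoInv s (V i)) (hT : Tgt (tab V)) (a : Fin 4) (ha : ∀ i j, tab V i j ≠ some a)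
    {n m : ℕ} {v u : ℕ → g} (Sa : Str h e f (V a) n v) (Sd : Str h e f (V 3) m u) : n ≠ m := by
  rintro rfl
  obtain ⟨ψ, hψ⟩ := LinearMap.exists_extend
    ((Basis.span Sa.li).constr ℂ (fun i : Fin (n + 1) => u i))
  have hv : ∀ i, ψ (v i) = u i := by
    intro i
    by_cases hi : i ≤ n
    · have h1 := LinearMap.congr_fun hψ (Basis.span Sa.li ⟨i, by omega⟩)
      rw [Basis.constr_basis] at h1
      rw [LinearMap.comp_apply, Submodule.subtype_apply, Basis.span_apply] at h1
      exact h1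
    · rw [Sa.zero i (by omega), Sd.zero i (by omega), map_zero]
  have hmem : ∀ x ∈ V a, ψ x ∈ V 3 := by
    intro x hx
    rw [Sa.span] at hx
    induction hx using Submodule.span_induction with
    | mem x hx =>
      obtain ⟨i, rfl⟩ := hx
      rw [hv]; exact Sd.mem _
    | zero => simp
    | add y y' _ _ e e' => rw [map_add]; exact add_mem e e'
    | smul c y _ e => rw [map_smul]; exact Submodule.smul_mem _ _ e
  have heq : ∀ x ∈ s, ∀ y ∈ V a, ψ ⁅x, y⁆ = ⁅x, ψ y⁆ := by
    intro x hx y hy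
    obtain ⟨α, β, γ, rfl⟩ := T.span x hx
    rw [Sa.span] at hy
    induction hy using Submodule.span_induction with
    | mem y hy =>
      obtain ⟨i, rfl⟩ := hy
      have he : ψ ⁅e, v i⁆ = ⁅e, u i⁆ := by
        rcases (i : ℕ) with _ | j
        · rw [Sa.le0, Sd.le0, map_zero]
        · rw [Sa.le, Sd.le, map_smul, hv]
      simp only [add_lie, smul_lie, map_add, map_smul, hv, he, Sa.lh, Sd.lh, Sa.lf, Sd.lf]
    | zero => simp
    | add y y' _ _ e e' => rw [lie_add, map_add, e, e', map_add, lie_add]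
    | smul c y _ e => rw [lie_smul, map_smul, e, map_smul, lie_smul]
  have h0 := G.equivariant hn a 3 (fun i j h => ha i j ((G.tab_some i j a).mpr h))
    (fun i => (G.tab_none i 3).mp (hT.2.2.1 i)) (ψ.domRestrict (V a)) (fun x => hmem x x.2)
    (fun x hx w => heq x hx w w.2)
  apply Sd.ne 0 (Nat.zero_le _)
  rw [← hv]
  exact LinearMap.congr_fun h0 ⟨v 0, Sa.mem 0⟩

/-- top coefficient of an iterated bracket -/
def topc (a b c k' i j l : ℕ) : ℚ :=
  if i ≤ k' then (-1) ^ i * cgc a b c (k' - i) j l else 0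

lemma top2 {a b c d k k' : ℕ} {v w u t : ℕ → g} (hkc : k' ≤ c)
    (h1 : ∀ i j, i + j < k → ⁅v i, w j⁆ = 0)
    (h2 : ∀ l ≤ c, ∀ i j, i + j = k + l → ⁅v i, w j⁆ = (cgc a b c l i j : ℂ) • u l)
    (h3 : ∀ l ≤ d, ∀ i j, i + j = k' + l → ⁅v i, u j⁆ = (cgc a c d l i j : ℂ) • t l)
    {i j l : ℕ} (hs : i + j + l = k + k') :
    ⁅v i, ⁅v j, w l⁆⁆ = (topc a b c k' i j l : ℂ) • t 0 := by
  unfold topc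
  split_ifs with hi
  · rw [h2 (k' - i) (by omega) j l (by omega), lie_smul, h3 0 (by omega) i (k' - i) (by omega), smul_smul]
    simp only [cgc]
    push_cast
    rw [mul_comm]
  · rw [h1 j l (by omega)]
    simp

lemma odd_of {a c k : ℕ} {v u : ℕ → g} (hu : u 0 ≠ 0)
    (h2 : ∀ l ≤ c, ∀ i j, i + j = k + l → ⁅v i, v j⁆ = (cgc a a c l i j : ℂ) • u l) : k % 2 = 1 := by
  have e1 := h2 0 (by omega) 0 k (by omega)
  have e2 := h2 0 (by omega) k 0 (by omega)
  simp only [cgc] at e1 e2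
  push_cast at e1 e2
  by_contra hk
  have hev : Even k := by rw [Nat.even_iff]; omega
  rw [hev.neg_one_pow] at e2
  rw [← lie_skew, e1, pow_zero, one_smul] at e2
  apply hu
  have : (2 : ℂ) • u 0 = 0 := by
    rw [two_smul]
    nth_rewrite 1 [← e2]
    simp
  exact (smul_eq_zero.mp this).resolve_left (by norm_num)

/-- Clebsch-Gordan admissibility -/
def okc (a b c : ℕ) : Bool := decide ((a + b - c) % 2 = 0 ∧ c ≤ a + b ∧ (a + b - c) / 2 ≤ a ∧ (a + b - c) / 2 ≤ b)
/-- alternating admissibility -/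
def oka (a c : ℕ) : Bool := okc a a c && decide ((a + a - c) / 2 % 2 = 1)

lemma okc_of {a b c k : ℕ} (h1 : a + b = c + 2 * k) (h2 : k ≤ a) (h3 : k ≤ b) : okc a b c = true := by
  unfold okc
  rw [decide_eq_true_eq]
  omega

lemma oka_of {a c k : ℕ} (h1 : a + a = c + 2 * k) (h2 : k ≤ a) (h3 : k % 2 = 1) : oka a c = true := by
  unfold oka
  rw [okc_of h1 h2 h2, Bool.true_and, decide_eq_true_eq]
  omega

/-- conclusion of the first numerical check -/
def bad1 (a c d : ℕ) : Bool :=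
  decide (1 ≤ (a + a - c) / 2 + (a + c - d) / 2 ∧
      topc a a c ((a + c - d) / 2) 0 1 ((a + a - c) / 2 + (a + c - d) / 2 - 1)
        + topc a a c ((a + c - d) / 2) 1 ((a + a - c) / 2 + (a + c - d) / 2 - 1) 0
        + topc a a c ((a + c - d) / 2) ((a + a - c) / 2 + (a + c - d) / 2 - 1) 0 1 ≠ 0)

/-- conclusion of the second numerical check -/
def bad2 (a b c d j : ℕ) : Bool :=
  decide (j ≤ (a + b - c) / 2 + (a + c - d) / 2 ∧
      topc a b c ((a + c - d) / 2) 0 j ((a + b - c) / 2 + (a + c - d) / 2 - j)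
        ≠ topc a b c ((a + c - d) / 2) j 0 ((a + b - c) / 2 + (a + c - d) / 2 - j))

/-- hypotheses on `A, C, D` -/
def hyp0 (a c d : ℕ) : Bool :=
  decide (a + c + d ≤ 16 ∧ a ≠ d ∧ 1 ≤ a ∧ 1 ≤ c ∧ 1 ≤ d) && okc a c d

/-- hypotheses on `B` -/
def hyp1 (a b c d : ℕ) : Bool :=
  decide (a + b + c + d ≤ 17 ∧ b ≠ d ∧ 1 ≤ b)

lemma num1 : ∀ a c d : Fin 18, (hyp0 a c d && oka a c) = true →
    ∀ b : Fin 18, (hyp1 a b c d && (oka b d && (okc a b d || okc a b c))) = true → bad1 a c d = true := by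
  decide +kernel

lemma num2 : ∀ a c d : Fin 18, (hyp0 a c d && oka a d) = true →
    ∀ b : Fin 18, (hyp1 a b c d && (okc a b c && (oka b d || okc b c d))) = true →
    (bad2 a b c d 1 || bad2 a b c d 3) = true := by
  decide +kernel

lemma Good.bk (G : Good g s V) {i j q : Fin 4} (hq : tab V i j = some q) {a b c : ℕ} {v w u0 : ℕ → g}
    (hA : Str h e f (V i) a v) (hB : Str h e f (V j) b w) (hC : Str h e f (V q) c u0) :
    ∃ k u, Str h e f (V q) c u ∧ a + b = c + 2 * k ∧ k ≤ a ∧ k ≤ b ∧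
      (∀ i j, i + j < k → ⁅v i, w j⁆ = 0) ∧
      (∀ l ≤ c, ∀ i j, i + j = k + l → ⁅v i, w j⁆ = (cgc a b c l i j : ℂ) • u l) :=
  hA.bracket hB hC (fun _ hx _ hy => G.mem_of hq hx hy) (G.exists_ne hq)

lemma Good.bk_okc (G : Good g s V) {i j q : Fin 4} (hq : tab V i j = some q) {a b c : ℕ} {v w u0 : ℕ → g}
    (hA : Str h e f (V i) a v) (hB : Str h e f (V j) b w) (hC : Str h e f (V q) c u0) : okc a b c = true := by
  obtain ⟨k, u, -, h1, h2, h3, -⟩ := G.bk hq hA hB hC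
  exact okc_of h1 h2 h3

lemma Good.bk_oka (G : Good g s V) {i q : Fin 4} (hq : tab V i i = some q) {a c : ℕ} {v u0 : ℕ → g}
    (hA : Str h e f (V i) a v) (hC : Str h e f (V q) c u0) : oka a c = true := by
  obtain ⟨k, u, hU, h1, h2, h3, -, h5⟩ := G.bk hq hA hA hC
  exact oka_of h1 h2 (odd_of (hU.ne 0 (by omega)) h5)

lemma Good.small [FiniteDimensional ℂ g] (G : Good g s V) (hT : Tgt (tab V)) (T : Trip s h e f)
    (h3 : finrank ℂ s = 3) : 25 ≤ finrank ℂ g := by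
  by_contra hlt
  rw [G.finrank_eq, h3] at hlt
  obtain ⟨a, v, hA⟩ := G.str T 0
  obtain ⟨b, w, hB⟩ := G.str T 1
  obtain ⟨c, u0, hC⟩ := G.str T 2
  obtain ⟨d, t0, hD⟩ := G.str T 3
  have da := hA.finrank
  have db := hB.finrank
  have dc := hC.finrank
  have dd := hD.finrank
  rcases G.noInv2_or hT with hn2 | ⟨-, h2, h11⟩
  swap
  · obtain ⟨k, -, -, h1, -⟩ := G.bk h11 hB hB hD
    omega
  have hn : ∀ i, NoInv s (V i) := by
    intro i
    match i with
    | 0 => exact G.noInv0 hT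
    | 1 => exact G.noInv1 hT
    | 2 => exact hn2
    | 3 => exact G.noInv3 hT
  have ga := G.two_le (hn 0)
  have gb := G.two_le (hn 1)
  have gc := G.two_le (hn 2)
  have gd := G.two_le (hn 3)
  have nad : a ≠ d := G.ne_dim T hn hT 0 (fun i j => (hT.2.2.2.2.1 i j).1) hA hD
  have nbd : b ≠ d := G.ne_dim T hn hT 1 (fun i j => (hT.2.2.2.2.1 i j).2) hB hD
  have o02 := G.bk_okc hT.1 hA hC hD
  have H0 : hyp0 a c d = true := by
    rw [hyp0, o02, Bool.and_true, decide_eq_true_eq]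
    omega
  have H1 : hyp1 a b c d = true := by
    rw [hyp1, decide_eq_true_eq]
    omega
  rcases hT.2.2.2.2.2 with ⟨h00, h11, h01⟩ | ⟨h01, h00, h11⟩
  · have o00 := G.bk_oka h00 hA hC
    have o11 := G.bk_oka h11 hB hD
    have o01 : okc a b d = true ∨ okc a b c = true := by
      rcases h01 with ⟨h01, -⟩ | h01
      · exact Or.inl (G.bk_okc h01 hA hB hD)
      · exact Or.inr (G.bk_okc h01 hA hB hC)
    obtain ⟨k, u, hU, k1, k2, -, k4, k5⟩ := G.bk h00 hA hA hC
    obtain ⟨k', t, hD', m1, m2, m3, m4, m5⟩ := G.bk hT.1 hA hU hD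
    have o01' : (okc a b d || okc a b c) = true := by rw [Bool.or_eq_true]; exact o01
    have hfin := num1 ⟨a, by omega⟩ ⟨c, by omega⟩ ⟨d, by omega⟩ (by rw [H0, o00]; rfl) ⟨b, by omega⟩
      (by rw [H1, o11, o01']; rfl)
    rw [bad1, decide_eq_true_eq] at hfin
    obtain ⟨l, hl, hne⟩ : ∃ l, l + 1 = (a + a - c) / 2 + (a + c - d) / 2 ∧
      topc a a c ((a + c - d) / 2) 0 1 l + topc a a c ((a + c - d) / 2) 1 l 0
        + topc a a c ((a + c - d) / 2) l 0 1 ≠ 0 := ⟨_, Nat.sub_add_cancel hfin.1, hfin.2⟩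
    have ek : (a + a - c) / 2 = k := by omega
    have ek' : (a + c - d) / 2 = k' := by omega
    rw [ek, ek'] at hl
    rw [ek'] at hne
    have J := lie_jacobi (v 0) (v 1) (v l)
    rw [top2 m3 k4 k5 m5 (by omega), top2 m3 k4 k5 m5 (by omega), top2 m3 k4 k5 m5 (by omega),
      ← add_smul, ← add_smul] at J
    have J2 := (smul_eq_zero.mp J).resolve_right (hD'.ne 0 (by omega))
    exact hne (by exact_mod_cast J2)
  · have o00 := G.bk_oka h00 hA hD
    have o01 := G.bk_okc h01 hA hB hC
    have o11 : oka b d = true ∨ okc b c d = true := by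
      rcases h11 with h11 | ⟨-, h12⟩
      · exact Or.inl (G.bk_oka h11 hB hD)
      · exact Or.inr (G.bk_okc h12 hB hC hD)
    obtain ⟨k, u, hU, k1, k2, -, k4, k5⟩ := G.bk h01 hA hB hC
    obtain ⟨k', t, hD', m1, m2, m3, m4, m5⟩ := G.bk hT.1 hA hU hD
    have o11' : (oka b d || okc b c d) = true := by rw [Bool.or_eq_true]; exact o11
    have hfin := num2 ⟨a, by omega⟩ ⟨c, by omega⟩ ⟨d, by omega⟩ (by rw [H0, o00]; rfl) ⟨b, by omega⟩
      (by rw [H1, o01, o11']; rfl)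
    obtain ⟨j, hj⟩ : ∃ j, bad2 a b c d j = true := by
      rw [Bool.or_eq_true] at hfin
      rcases hfin with hf | hf
      · exact ⟨_, hf⟩
      · exact ⟨_, hf⟩
    rw [bad2, decide_eq_true_eq] at hj
    obtain ⟨l, hl, hne⟩ : ∃ l, j + l = (a + b - c) / 2 + (a + c - d) / 2 ∧
      topc a b c ((a + c - d) / 2) 0 j l ≠ topc a b c ((a + c - d) / 2) j 0 l :=
        ⟨_, Nat.add_sub_cancel' hj.1, hj.2⟩
    have ek : (a + b - c) / 2 = k := by omega
    have ek' : (a + c - d) / 2 = k' := by omega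
    rw [ek, ek'] at hl
    rw [ek'] at hne
    have J := leibniz_lie (v 0) (v j) (w l)
    have hz : ⁅⁅v 0, v j⁆, w l⁆ = 0 := by
      rw [← lie_skew, G.zero_of (hT.2.2.1 1) (hB.mem l) (G.mem_of h00 (hA.mem 0) (hA.mem j)), neg_zero]
    rw [hz, zero_add, top2 m3 k4 k5 m5 (by omega), top2 m3 k4 k5 m5 (by omega)] at J
    have J2 := smul_left_injective ℂ (hD'.ne 0 (by omega)) J
    exact hne (by exact_mod_cast J2)

lemma Good.main [FiniteDimensional ℂ g] (G : Good g s V) : 25 ≤ finrank ℂ g := by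
  obtain ⟨σ, hT⟩ := G.reduce
  have := G.levi.1
  rcases simple_dichotomy s with ⟨h3, h, e, f, t⟩ | h8
  · exact (G.perm σ).small hT (trip_exists h3 t) h3
  · exact (G.perm σ).large hT h8
end
end Symp

/-- A sympathetic Lie algebra with simple Levi subalgebra whose radical
decomposes into exactly 4 simple modules (satisfying the convention) has dimension ≥ 25. -/
theorem stmt0 (g : Type*) [LieRing g] [LieAlgebra ℂ g] [FiniteDimensional ℂ g]
    (hsymp : Symp.IsSympathetic g)
    (s : LieSubalgebra ℂ g) (hs : Symp.IsSimpleLevi g s)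
    (V : Fin 4 → Submodule ℂ g) (hdec : Symp.IsDecomp g s V)
    (hconv : Symp.Convention g V) :
    25 ≤ Module.finrank ℂ g := by
  exact Symp.Good.main (s := s) (V := V) ⟨hsymp, hs, hdec, hconv⟩
end

section
/- Let g = s ⋉ h be a finite-dimensional sympathetic complex Lie algebra with simple Levi subalgebra s whose radical h decomposes into simple s-modules V_1, ..., V_k. Suppose D is a derivation of g such that D vanishes on s and, for each i, the restriction of D to V_i is λ_i times the identity for some scalar λ_i. Then D is an inner derivation if and only if D vanishes on h (equivalently, all λ_i = 0). -/
open LieModule in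
theorem symp_trace_zero {g : Type*} [LieRing g] [LieAlgebra ℂ g]
    (hperf : Symp.IsPerfectLie g) (M : Type*) [AddCommGroup M] [Module ℂ M]
    [LieRingModule g M] [LieModule ℂ g M] (x : g) :
    LinearMap.trace ℂ M (toEnd ℂ g M x) = 0 := by
  have hx : x ∈ (⁅(⊤ : LieIdeal ℂ g), (⊤ : LieIdeal ℂ g)⁆ : LieIdeal ℂ g) := by
    rw [hperf]; exact LieSubmodule.mem_top x
  rw [← LieSubmodule.mem_toSubmodule, LieSubmodule.lieIdeal_oper_eq_linear_span'] at hx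
  induction hx using Submodule.span_induction with
  | mem u hu =>
    obtain ⟨a, -, b, -, rfl⟩ := hu
    simp
  | zero => simp
  | add u v _ _ hu hv => simp [hu, hv]
  | smul t u _ hu => simp [hu]

open LieModule in
theorem symp_eigenvalue_zero {g : Type*} [LieRing g] [LieAlgebra ℂ g] [FiniteDimensional ℂ g]
    (hperf : Symp.IsPerfectLie g) (x : g) (hx : x ∈ LieAlgebra.radical ℂ g) (μ : ℂ) (n : ℕ) :
    ∀ (M : Type _) [AddCommGroup M] [Module ℂ M] [FiniteDimensional ℂ M]
      [LieRingModule g M] [LieModule ℂ g M], Module.finrank ℂ M = n →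
      ∀ v : M, v ≠ 0 → ⁅x, v⁆ = μ • v → μ = 0 := by
  induction n using Nat.strong_induction_on with
  | _ n ih =>
  intro M _ _ _ _ _ hn v hv hxv
  have : Nontrivial M := nontrivial_of_ne v 0 hv
  obtain ⟨χ, hχ⟩ : ∃ χ : Module.Dual ℂ (LieAlgebra.radical ℂ g), Nontrivial (weightSpace M χ) :=
    exists_nontrivial_weightSpace_of_isSolvable ℂ (LieAlgebra.radical ℂ g) M
  let N : LieSubmodule ℂ g M := weightSpaceOfIsLieTower ℂ M χ
  have hN : Nontrivial N := hχ
  have hmem : ∀ m ∈ N, ⁅x, m⁆ = χ ⟨x, hx⟩ • m := by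
    intro m hm
    have : ∀ (y : g) (hy : y ∈ LieAlgebra.radical ℂ g), ⁅y, m⁆ = χ ⟨y, hy⟩ • m := by
      simpa [N, weightSpaceOfIsLieTower, mem_weightSpace] using hm
    exact this x hx
  by_cases hvN : v ∈ N
  · have h0 : toEnd ℂ g N x = χ ⟨x, hx⟩ • LinearMap.id := by
      ext m
      simpa using hmem m m.2
    have h1 := symp_trace_zero hperf N x
    have hpos : Module.finrank ℂ N ≠ 0 := Module.finrank_pos.ne'
    rw [h0] at h1
    have h2 : χ ⟨x, hx⟩ = 0 := by
      rw [map_smul, LinearMap.trace_id, smul_eq_mul, mul_eq_zero] at h1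
      exact h1.resolve_right (by exact_mod_cast hpos)
    have h3 := hmem v hvN
    rw [hxv, h2, zero_smul] at h3
    exact (smul_eq_zero.mp h3).resolve_right hv
  · have hfd : FiniteDimensional ℂ (M ⧸ N) :=
      inferInstanceAs (FiniteDimensional ℂ (M ⧸ N.toSubmodule))
    have hlt : Module.finrank ℂ (M ⧸ N) < n := by
      have h1 := Submodule.finrank_quotient_add_finrank N.toSubmodule
      have hpos : 0 < Module.finrank ℂ N.toSubmodule := Module.finrank_pos (M := N)
      change Module.finrank ℂ (M ⧸ N.toSubmodule) < n
      omega
    refine ih _ hlt (M ⧸ N) rfl (LieSubmodule.Quotient.mk' N v) ?_ ?_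
    · rwa [Ne, LieSubmodule.Quotient.mk_eq_zero]
    · rw [← LieModuleHom.map_lie, hxv, map_smul]

/-- a derivation vanishing on `s` and acting as a scalar on each simple module
of the radical is inner iff it vanishes on the radical. -/
theorem stmt2 (g : Type*) [LieRing g] [LieAlgebra ℂ g] [FiniteDimensional ℂ g]
    (hsymp : Symp.IsSympathetic g)
    (s : LieSubalgebra ℂ g) (hs : Symp.IsSimpleLevi g s)
    (k : ℕ) (V : Fin k → Submodule ℂ g) (hdec : Symp.IsDecomp g s V)
    (D : LieDerivation ℂ g g) (hDs : ∀ x ∈ s, D x = 0)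
    (lam : Fin k → ℂ) (hDV : ∀ i, ∀ v ∈ V i, D v = lam i • v) :
    Symp.IsInnerDer D ↔ ∀ x ∈ LieAlgebra.radical ℂ g, D x = 0 := by
  refine ⟨?_, fun _ => hsymp.2.2 D⟩
  rintro ⟨x, hx⟩
  obtain ⟨hsimple, hcompl⟩ := hs
  have hxrad : x ∈ LieAlgebra.radical ℂ g := by
    obtain ⟨a, ha, b, hb, rfl⟩ := Submodule.mem_sup.mp
      (hcompl.sup_eq_top ▸ Submodule.mem_top : x ∈ s.toSubmodule ⊔ (LieAlgebra.radical ℂ g).toSubmodule)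
    have hb' : b ∈ LieAlgebra.radical ℂ g := hb
    have hcomm : ∀ y ∈ s, ⁅a, y⁆ = 0 := by
      intro y hy
      have h0 : ⁅a, y⁆ + ⁅b, y⁆ = 0 := by rw [← add_lie, ← hx, hDs y hy]
      have h1 : ⁅a, y⁆ ∈ s.toSubmodule := s.lie_mem ha hy
      have h2 : ⁅b, y⁆ ∈ LieAlgebra.radical ℂ g := lie_mem_left ℂ g _ b y hb'
      have h3 : ⁅a, y⁆ ∈ (LieAlgebra.radical ℂ g).toSubmodule := by
        rw [eq_neg_of_add_eq_zero_left h0]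
        exact neg_mem h2
      exact Submodule.disjoint_def.mp hcompl.disjoint _ h1 h3
    have hc : (⟨a, ha⟩ : s) ∈ LieAlgebra.center ℂ s := by
      rw [LieModule.mem_maxTrivSubmodule]
      intro y
      rw [← lie_skew, neg_eq_zero]
      exact Subtype.ext (hcomm y y.2)
    rw [LieAlgebra.center_eq_bot, LieSubmodule.mem_bot] at hc
    have ha0 : a = 0 := congrArg Subtype.val hc
    rw [ha0, zero_add]
    exact hb'
  have hlam : ∀ i, lam i = 0 := by
    intro i
    obtain ⟨v, hv, hv0⟩ := Submodule.exists_mem_ne_zero_of_ne_bot (hdec.1 i).1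
    exact symp_eigenvalue_zero hsymp.2.1 x hxrad (lam i) _ g rfl v hv0 (by rw [← hx, hDV i v hv])
  intro y hy
  have hy' : y ∈ ⨆ i, V i := by rw [hdec.2.2]; exact hy
  have hle : (⨆ i, V i) ≤ LinearMap.ker (D : g →ₗ[ℂ] g) := by
    refine iSup_le fun i v hv => ?_
    have : D v = 0 := by rw [hDV i v hv, hlam i, zero_smul]
    exact this
  exact hle hy'
end

section
/- Let g = s ⋉ h be a finite-dimensional perfect complex Lie algebra with simple Levi subalgebra s whose radical h decomposes into at most 2 simple s-modules (i.e. h is either an irreducible s-module or the direct sum of two irreducible s-submodules). Then g is not sympathetic. -/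
namespace SympAux

open LieAlgebra

/-- The radical of a perfect Lie algebra acts trivially on every minimal ideal. -/
lemma radical_acts_zero (g : Type*) [LieRing g] [LieAlgebra ℂ g] [FiniteDimensional ℂ g]
    (hperf : Symp.IsPerfectLie g) (N : LieIdeal ℂ g)
    (hN : ∀ I : LieIdeal ℂ g, I ≤ N → I = ⊥ ∨ I = N)
    (x : g) (hx : x ∈ radical ℂ g) (n : g) (hn : n ∈ N) : ⁅x, n⁆ = 0 := by
  by_cases hbot : N = ⊥
  · subst hbot
    rw [(LieSubmodule.mem_bot n).1 hn, lie_zero]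
  have hnt : Nontrivial N := (LieSubmodule.nontrivial_iff_ne_bot ℂ g g).2 hbot
  obtain ⟨χ, hχ⟩ := LieModule.exists_nontrivial_weightSpace_of_isSolvable ℂ (radical ℂ g) N
  let P : LieSubmodule ℂ g N := LieModule.weightSpaceOfIsLieTower ℂ N χ
  have hP : ∀ v : N, v ∈ P ↔ ∀ a : radical ℂ g, ⁅a, v⁆ = χ a • v := by
    intro v
    exact LieModule.mem_weightSpace (M := N) (χ := χ) v
  have hmem : ∀ v : N, v ∈ P := by
    have hle : P.map (LieSubmodule.incl N) ≤ N := by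
      intro y hy
      obtain ⟨v, _, rfl⟩ := (LieSubmodule.mem_map _).1 hy
      exact v.2
    rcases hN (P.map (LieSubmodule.incl N)) hle with h | h
    · exfalso
      obtain ⟨⟨v, hv⟩, hv0⟩ := exists_ne (0 : LieModule.weightSpace N χ)
      apply hv0
      have h1 : LieSubmodule.incl N v ∈ P.map (LieSubmodule.incl N) := LieSubmodule.mem_map_of_mem (show v ∈ P from hv)
      rw [h, LieSubmodule.mem_bot] at h1
      have h2 : v = 0 := Subtype.ext h1
      exact Subtype.ext h2
    · intro v
      have h1 : (v : g) ∈ P.map (LieSubmodule.incl N) := by rw [h]; exact v.2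
      obtain ⟨w, hw, hwv⟩ := (LieSubmodule.mem_map _).1 h1
      have : w = v := Subtype.ext hwv
      exact this ▸ hw
  have htr : ∀ y : g, LinearMap.trace ℂ N (LieModule.toEnd ℂ g N y) = 0 := by
    intro y
    have hy : y ∈ (⁅(⊤ : LieIdeal ℂ g), (⊤ : LieIdeal ℂ g)⁆ : LieIdeal ℂ g) := by
      rw [show ⁅(⊤ : LieIdeal ℂ g), (⊤ : LieIdeal ℂ g)⁆ = ⊤ from hperf]; trivial
    rw [← LieSubmodule.mem_toSubmodule, LieSubmodule.lieIdeal_oper_eq_linear_span'] at hy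
    induction hy using Submodule.span_induction with
    | mem z hz =>
      obtain ⟨a, _, b, _, rfl⟩ := hz
      have : LieModule.toEnd ℂ g N ⁅a, b⁆ = LieModule.toEnd ℂ g N a * LieModule.toEnd ℂ g N b -
          LieModule.toEnd ℂ g N b * LieModule.toEnd ℂ g N a := by
        ext v
        simp
      rw [this, map_sub, LinearMap.trace_mul_comm, sub_self]
    | zero => simp
    | add a b _ _ ha hb => rw [map_add, map_add, ha, hb, add_zero]
    | smul c a _ ha => rw [map_smul, map_smul, ha, smul_zero]
  have hsc : LieModule.toEnd ℂ g N x = χ ⟨x, hx⟩ • LinearMap.id := by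
    ext v
    have := (hP v).1 (hmem v) ⟨x, hx⟩
    exact congrArg Subtype.val this
  have h0 : χ ⟨x, hx⟩ = 0 := by
    have h1 := htr x
    rw [hsc, map_smul, LinearMap.trace_id, smul_eq_mul] at h1
    rcases mul_eq_zero.1 h1 with h | h
    · exact h
    · exfalso
      have : 0 < Module.finrank ℂ N := Module.finrank_pos
      have h' : Module.finrank ℂ N = 0 := by exact_mod_cast h
      omega
  have h2 := congrArg Subtype.val ((hP ⟨n, hn⟩).1 (hmem ⟨n, hn⟩) ⟨x, hx⟩)
  rw [h0, zero_smul] at h2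
  exact h2

lemma derived_ne (g : Type*) [LieRing g] [LieAlgebra ℂ g] [FiniteDimensional ℂ g]
    (hR : radical ℂ g ≠ ⊥) : ⁅radical ℂ g, radical ℂ g⁆ ≠ radical ℂ g := by
  intro h
  have key : ∀ n, derivedSeriesOfIdeal ℂ g n (radical ℂ g) = radical ℂ g := by
    intro n
    induction n with
    | zero => rfl
    | succ n ih => rw [derivedSeriesOfIdeal_succ, ih, h]
  obtain ⟨k, hk⟩ := IsSolvable.solvable ℂ (radical ℂ g)
  rw [LieIdeal.derivedSeries_eq_bot_iff] at hk
  exact hR ((key k).symm.trans hk)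

/-- Grading argument: existence of an outer derivation. -/
lemma not_symp (g : Type*) [LieRing g] [LieAlgebra ℂ g] [FiniteDimensional ℂ g]
    (s : LieSubalgebra ℂ g) (hs : Symp.IsSimpleLevi g s)
    (U : Submodule ℂ g) (hU0 : U ≠ ⊥) (hUi : Symp.Invariant g s U)
    (hdis : U ⊓ (⁅radical ℂ g, radical ℂ g⁆ : LieIdeal ℂ g).toSubmodule = ⊥)
    (hsup : U ⊔ (⁅radical ℂ g, radical ℂ g⁆ : LieIdeal ℂ g).toSubmodule =
      (radical ℂ g).toSubmodule)
    (hact : ∀ x ∈ radical ℂ g, ∀ n ∈ (⁅radical ℂ g, radical ℂ g⁆ : LieIdeal ℂ g), ⁅x, n⁆ = 0) :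
    ¬ Symp.IsSympathetic g := by
  rintro ⟨-, -, hder⟩
  obtain ⟨hsimple, hcompl⟩ := hs
  set R := radical ℂ g with hRdef
  set N : LieIdeal ℂ g := ⁅R, R⁆ with hNdef
  have hNR : ∀ n ∈ N, n ∈ R := fun n hn => LieSubmodule.lie_le_right R R hn
  have hUR : ∀ u ∈ U, u ∈ R := fun u hu =>
    (hsup.le : _ ≤ R.toSubmodule) (Submodule.mem_sup_left hu)
  have hdisj : ∀ a ∈ s, a ∈ R → a = 0 := by
    intro a ha haR
    have : a ∈ s.toSubmodule ⊓ R.toSubmodule := ⟨ha, haR⟩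
    rw [hcompl.inf_eq_bot] at this
    exact (Submodule.mem_bot ℂ).1 this
  have hdisj2 : ∀ a ∈ U, a ∈ N → a = 0 := by
    intro a ha haR
    have : a ∈ U ⊓ N.toSubmodule := ⟨ha, haR⟩
    rw [hdis] at this
    exact (Submodule.mem_bot ℂ).1 this
  have hdecR : ∀ x ∈ R, ∃ u ∈ U, ∃ n ∈ N, u + n = x := by
    intro x hx
    have : x ∈ U ⊔ N.toSubmodule := by rw [hsup]; exact hx
    exact Submodule.mem_sup.1 this
  have hdec : ∀ x : g, ∃ a ∈ s, ∃ u ∈ U, ∃ n ∈ N, x = a + u + n := by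
    intro x
    have : x ∈ s.toSubmodule ⊔ R.toSubmodule := by rw [hcompl.sup_eq_top]; trivial
    obtain ⟨a, ha, r, hr, rfl⟩ := Submodule.mem_sup.1 this
    obtain ⟨u, hu, n, hn, rfl⟩ := hdecR r hr
    exact ⟨a, ha, u, hu, n, hn, by abel⟩
  have hc2 : IsCompl N.toSubmodule (s.toSubmodule ⊔ U) := by
    constructor
    · rw [Submodule.disjoint_def]
      intro x hx hx'
      obtain ⟨a, ha, u, hu, rfl⟩ := Submodule.mem_sup.1 hx'
      have haR : a ∈ R := by
        have := sub_mem (hNR _ hx) (hUR u hu)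
        simpa using this
      have := hdisj a ha haR
      subst this
      simp only [zero_add] at hx ⊢
      exact hdisj2 u hu hx
    · rw [codisjoint_iff, sup_comm, sup_assoc, hsup, hcompl.sup_eq_top]
  let p : g →ₗ[ℂ] g := R.toSubmodule.projection s.toSubmodule hcompl.symm
  let q : g →ₗ[ℂ] g := N.toSubmodule.projection (s.toSubmodule ⊔ U) hc2
  let D : g →ₗ[ℂ] g := p + q
  have hDs : ∀ a ∈ s, D a = 0 := by
    intro a ha
    have h1 : p a = 0 := (Submodule.projection_apply_eq_zero_iff _).2 ha
    have h2 : q a = 0 := (Submodule.projection_apply_eq_zero_iff _).2 (Submodule.mem_sup_left ha)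
    simp [D, h1, h2]
  have hDU : ∀ a ∈ U, D a = a := by
    intro a ha
    have h1 : p a = a := Submodule.projection_apply_of_mem_left _ (hUR a ha)
    have h2 : q a = 0 := (Submodule.projection_apply_eq_zero_iff _).2 (Submodule.mem_sup_right ha)
    simp [D, h1, h2]
  have hDN : ∀ a ∈ N, D a = a + a := by
    intro a ha
    have h1 : p a = a := Submodule.projection_apply_of_mem_left _ (hNR a ha)
    have h2 : q a = a := Submodule.projection_apply_of_mem_left _ ha
    simp [D, h1, h2]
  have hleib : ∀ x y : g, D ⁅x, y⁆ = ⁅x, D y⁆ - ⁅y, D x⁆ := by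
    intro x y
    obtain ⟨a, ha, u, hu, n, hn, rfl⟩ := hdec x
    obtain ⟨b, hb, v, hv, m, hm, rfl⟩ := hdec y
    have e1 : ⁅u, m⁆ = 0 := hact u (hUR u hu) m hm
    have e2 : ⁅n, m⁆ = 0 := hact n (hNR n hn) m hm
    have e3 : ⁅v, n⁆ = 0 := hact v (hUR v hv) n hn
    have e3' : ⁅n, v⁆ = 0 := by rw [← lie_skew, e3, neg_zero]
    have e4 : ⁅m, n⁆ = 0 := hact m (hNR m hm) n hn
    have e5 : ⁅m, u⁆ = 0 := by rw [← lie_skew, e1, neg_zero]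
    have f1 : D ⁅a, b⁆ = 0 := hDs _ (s.lie_mem ha hb)
    have f2 : D ⁅a, v⁆ = ⁅a, v⁆ := hDU _ (hUi a ha v hv)
    have f3 : D ⁅b, u⁆ = ⁅b, u⁆ := hDU _ (hUi b hb u hu)
    have f4 : D ⁅u, v⁆ = ⁅u, v⁆ + ⁅u, v⁆ :=
      hDN _ (LieSubmodule.lie_mem_lie (hUR u hu) (hUR v hv))
    have f5 : D ⁅a, m⁆ = ⁅a, m⁆ + ⁅a, m⁆ := hDN _ (N.lie_mem hm)
    have f6 : D ⁅b, n⁆ = ⁅b, n⁆ + ⁅b, n⁆ := hDN _ (N.lie_mem hn)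
    have k1 : ⁅u, b⁆ = -⁅b, u⁆ := (lie_skew u b).symm
    have k2 : ⁅n, b⁆ = -⁅b, n⁆ := (lie_skew n b).symm
    have k3 : ⁅v, u⁆ = -⁅u, v⁆ := (lie_skew v u).symm
    have k4 : ⁅v, a⁆ = -⁅a, v⁆ := (lie_skew v a).symm
    have k5 : ⁅m, a⁆ = -⁅a, m⁆ := (lie_skew m a).symm
    simp only [map_add, map_neg, add_lie, lie_add, hDs a ha, hDs b hb, hDU u hu, hDU v hv,
      hDN n hn, hDN m hm, k1, k2, k3, e1, e2, e3, e3', e4, e5, f1, f2, f3, f4, f5, f6, lie_zero,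
      map_zero]
    abel
  obtain ⟨z, hz⟩ := hder ⟨D, hleib⟩
  have hz' : ∀ y, D y = ⁅z, y⁆ := hz
  obtain ⟨a, ha, u, hu, n, hn, rfl⟩ := hdec z
  -- the Levi component centralises `s`
  have hac : ∀ b ∈ s, ⁅a, b⁆ = 0 := by
    intro b hb
    apply hdisj _ (s.lie_mem ha hb)
    have h1 := hz' b
    rw [hDs b hb, add_lie, add_lie] at h1
    have h2 : ⁅a, b⁆ = -(⁅u, b⁆ + ⁅n, b⁆) := by
      rw [eq_neg_iff_add_eq_zero, ← add_assoc]; exact h1.symm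
    rw [h2]
    refine neg_mem (add_mem ?_ ?_)
    · exact lie_mem_left ℂ g R u b (hUR u hu)
    · exact lie_mem_left ℂ g R n b (hNR n hn)
  have ha0 : a = 0 := by
    have hc : (⟨a, ha⟩ : s) ∈ center ℂ s := by
      rw [LieModule.mem_maxTrivSubmodule]
      intro b
      apply Subtype.ext
      change ⁅(b : g), a⁆ = 0
      rw [← lie_skew, hac b b.2, neg_zero]
    rw [center_eq_bot] at hc
    exact congrArg Subtype.val ((LieSubmodule.mem_bot _).1 hc)
  subst ha0
  apply hU0
  rw [Submodule.eq_bot_iff]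
  intro w hw
  apply hdisj2 w hw
  have h1 := hz' w
  rw [hDU w hw] at h1
  rw [h1, zero_add]
  exact LieSubmodule.lie_mem_lie (add_mem (hUR u hu) (hNR n hn)) (hUR w hw)

lemma inv_sup {g : Type*} [LieRing g] [LieAlgebra ℂ g] {s : LieSubalgebra ℂ g}
    {A B : Submodule ℂ g} (hA : Symp.Invariant g s A) (hB : Symp.Invariant g s B) :
    Symp.Invariant g s (A ⊔ B) := by
  intro x hx w hw
  obtain ⟨a, ha, b, hb, rfl⟩ := Submodule.mem_sup.1 hw
  rw [lie_add]
  exact Submodule.add_mem_sup (hA x hx a ha) (hB x hx b hb)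

lemma inv_inf {g : Type*} [LieRing g] [LieAlgebra ℂ g] {s : LieSubalgebra ℂ g}
    {A B : Submodule ℂ g} (hA : Symp.Invariant g s A) (hB : Symp.Invariant g s B) :
    Symp.Invariant g s (A ⊓ B) :=
  fun x hx w hw => ⟨hA x hx w hw.1, hB x hx w hw.2⟩

lemma inv_ideal {g : Type*} [LieRing g] [LieAlgebra ℂ g] (s : LieSubalgebra ℂ g)
    (I : LieIdeal ℂ g) : Symp.Invariant g s I.toSubmodule :=
  fun _ _ _ hw => I.lie_mem hw

/-- An invariant subspace of `A ⊕ B` with `A`, `B` irreducible, if proper, is zero, or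
is irreducible with an invariant nonzero complement. -/
lemma two_summands {g : Type*} [LieRing g] [LieAlgebra ℂ g] {s : LieSubalgebra ℂ g}
    {A B N : Submodule ℂ g} (hA : Symp.IsIrreducibleSMod g s A)
    (hB : Symp.IsIrreducibleSMod g s B) (hAB : A ⊓ B = ⊥) (hN : Symp.Invariant g s N)
    (hle : N ≤ A ⊔ B) (hne : N ≠ A ⊔ B) :
    ∃ U : Submodule ℂ g, U ≠ ⊥ ∧ Symp.Invariant g s U ∧ U ⊓ N = ⊥ ∧ U ⊔ N = A ⊔ B ∧
      ∀ W ≤ N, Symp.Invariant g s W → W = ⊥ ∨ W = N := by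
  obtain ⟨hA0, hAi, hAirr⟩ := hA
  obtain ⟨hB0, hBi, hBirr⟩ := hB
  -- any invariant subspace between `A` and `A ⊔ B` is one of the two
  have mid : ∀ X : Submodule ℂ g, Symp.Invariant g s X → A ≤ X → X ≤ A ⊔ B →
      X = A ∨ X = A ⊔ B := by
    intro X hX hAX hXle
    have hmod : A ⊔ B ⊓ X = X := by
      rw [← sup_inf_assoc_of_le B hAX]; exact inf_eq_right.2 hXle
    rcases hBirr (B ⊓ X) inf_le_left (inv_inf hBi hX) with h | h
    · left; rw [h, sup_bot_eq] at hmod; exact hmod.symm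
    · right; rw [h] at hmod; exact hmod.symm
  rcases hAirr (A ⊓ N) inf_le_left (inv_inf hAi hN) with h | h
  · rcases mid (A ⊔ N) (inv_sup hAi hN) le_sup_left (sup_le le_sup_left hle) with h' | h'
    · have hNA : N ≤ A := by rw [← h']; exact le_sup_right
      have hN0 : N = ⊥ := by rw [← h]; exact (inf_eq_right.2 hNA).symm
      subst hN0
      refine ⟨A ⊔ B, ?_, inv_sup hAi hBi, by simp, by simp, fun W hW _ => Or.inl (le_bot_iff.1 hW)⟩
      intro h0
      exact hA0 (le_bot_iff.1 (h0 ▸ le_sup_left))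
    · refine ⟨A, hA0, hAi, h, h', ?_⟩
      intro W hW hWi
      have hmod : W ⊔ A ⊓ N = (W ⊔ A) ⊓ N := (sup_inf_assoc_of_le A hW).symm
      rw [h, sup_bot_eq] at hmod
      rcases mid (A ⊔ W) (inv_sup hAi hWi) le_sup_left (sup_le le_sup_left (hW.trans hle))
        with h2 | h2
      · left
        rw [hmod, sup_comm, h2, h]
      · right
        rw [hmod, sup_comm, h2]; exact inf_eq_right.2 hle
  · have hAN : A ≤ N := inf_eq_left.1 h
    rcases mid N hN hAN hle with h' | h'
    · subst h'
      exact ⟨B, hB0, hBi, by rw [inf_comm]; exact hAB, sup_comm _ _, fun W hW hWi => hAirr W hW hWi⟩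
    · exact absurd h' hne

end SympAux

/-- a perfect Lie algebra with simple Levi subalgebra whose radical decomposes
into at most 2 simple modules is not sympathetic. -/
theorem stmt4 (g : Type*) [LieRing g] [LieAlgebra ℂ g] [FiniteDimensional ℂ g]
    (hperf : Symp.IsPerfectLie g)
    (s : LieSubalgebra ℂ g) (hs : Symp.IsSimpleLevi g s)
    (k : ℕ) (hk : k = 1 ∨ k = 2)
    (V : Fin k → Submodule ℂ g) (hdec : Symp.IsDecomp g s V) :
    ¬ Symp.IsSympathetic g := by
  obtain ⟨hirr, hind, hsup⟩ := hdec
  have hR0 : LieAlgebra.radical ℂ g ≠ ⊥ := by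
    intro h
    have h0 : 0 < k := by omega
    apply (hirr ⟨0, h0⟩).1
    rw [h, LieSubmodule.bot_toSubmodule] at hsup
    exact le_bot_iff.1 (hsup ▸ le_iSup V ⟨0, h0⟩)
  have hne := SympAux.derived_ne g hR0
  have hne' : (⁅LieAlgebra.radical ℂ g, LieAlgebra.radical ℂ g⁆ : LieIdeal ℂ g).toSubmodule ≠
      (LieAlgebra.radical ℂ g).toSubmodule := fun h => hne (LieSubmodule.toSubmodule_injective h)
  have hle : (⁅LieAlgebra.radical ℂ g, LieAlgebra.radical ℂ g⁆ : LieIdeal ℂ g).toSubmodule ≤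
      (LieAlgebra.radical ℂ g).toSubmodule := fun n hn => LieSubmodule.lie_le_right _ _ hn
  have hinv := SympAux.inv_ideal s (⁅LieAlgebra.radical ℂ g, LieAlgebra.radical ℂ g⁆)
  obtain ⟨U, hU0, hUi, hUinf, hUsup, hmin⟩ : ∃ U : Submodule ℂ g, U ≠ ⊥ ∧ Symp.Invariant g s U ∧
      U ⊓ (⁅LieAlgebra.radical ℂ g, LieAlgebra.radical ℂ g⁆ : LieIdeal ℂ g).toSubmodule = ⊥ ∧
      U ⊔ (⁅LieAlgebra.radical ℂ g, LieAlgebra.radical ℂ g⁆ : LieIdeal ℂ g).toSubmodule =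
        (LieAlgebra.radical ℂ g).toSubmodule ∧
      ∀ W ≤ (⁅LieAlgebra.radical ℂ g, LieAlgebra.radical ℂ g⁆ : LieIdeal ℂ g).toSubmodule,
        Symp.Invariant g s W → W = ⊥ ∨
        W = (⁅LieAlgebra.radical ℂ g, LieAlgebra.radical ℂ g⁆ : LieIdeal ℂ g).toSubmodule := by
    rcases hk with rfl | rfl
    · have hV : V 0 = (LieAlgebra.radical ℂ g).toSubmodule := by
        rw [← hsup]; exact (ciSup_unique (s := V)).symm
      obtain ⟨h0, h1, h2⟩ := hirr 0
      rw [hV] at h0 h1 h2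
      rcases h2 _ hle hinv with h | h
      · refine ⟨_, h0, h1, ?_, ?_, ?_⟩
        · rw [h, inf_bot_eq]
        · rw [h, sup_bot_eq]
        · intro W hW _
          rw [h] at hW
          exact Or.inl (le_bot_iff.1 hW)
      · exact absurd h hne'
    · have hV : V 0 ⊔ V 1 = (LieAlgebra.radical ℂ g).toSubmodule := by
        rw [← hsup]
        apply le_antisymm
        · exact sup_le (le_iSup V 0) (le_iSup V 1)
        · refine iSup_le fun i => ?_
          fin_cases i
          · exact le_sup_left
          · exact le_sup_right
      have hd : V 0 ⊓ V 1 = ⊥ :=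
        (hind.pairwiseDisjoint (show (0 : Fin 2) ≠ 1 by decide)).eq_bot
      have := SympAux.two_summands (hirr 0) (hirr 1) hd hinv (hV ▸ hle) (hV ▸ hne')
      rw [hV] at this
      exact this
  refine SympAux.not_symp g s hs U hU0 hUi hUinf hUsup ?_
  intro x hx n hn
  refine SympAux.radical_acts_zero g hperf _ ?_ x hx n hn
  intro I hI
  rcases hmin I.toSubmodule hI (SympAux.inv_ideal s I) with h | h
  · left; exact LieSubmodule.toSubmodule_injective (by rw [h, LieSubmodule.bot_toSubmodule])
  · right; exact LieSubmodule.toSubmodule_injective h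
end

section
/- Let g = s ⋉ h be a finite-dimensional perfect complex Lie algebra with Z(g) = 0 and simple Levi subalgebra s, whose radical h decomposes into exactly 3 simple s-modules satisfying the convention. Then g is not sympathetic (g admits a derivation that is not inner). -/
namespace Symp5

open LieModule LieAlgebra

/-- In a perfect Lie algebra the radical acts trivially on irreducible modules. -/
theorem rad_acts_zero {g : Type*} [LieRing g] [LieAlgebra ℂ g] [FiniteDimensional ℂ g]
    (hperf : Symp.IsPerfectLie g) (M : Type*) [AddCommGroup M] [Module ℂ M] [LieRingModule g M]
    [LieModule ℂ g M] [FiniteDimensional ℂ M] [LieModule.IsIrreducible ℂ g M]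
    (x : g) (hx : x ∈ radical ℂ g) (m : M) : ⁅x, m⁆ = 0 := by
  have _i := nontrivial_of_isIrreducible ℂ g M
  obtain ⟨χ, hχ⟩ : ∃ χ : Module.Dual ℂ (radical ℂ g), Nontrivial (weightSpace M χ) :=
    exists_nontrivial_weightSpace_of_isSolvable ℂ (radical ℂ g) M
  let N : LieSubmodule ℂ g M := weightSpaceOfIsLieTower ℂ M χ
  replace hχ : Nontrivial N := hχ
  replace hχ : N = ⊤ := N.eq_top_of_isIrreducible ℂ g M
  have hm : ∀ m : M, ∀ (y : g) (hy : y ∈ radical ℂ g), ⁅y, m⁆ = χ ⟨y, hy⟩ • m := by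
    intro m
    simpa [N, weightSpaceOfIsLieTower, mem_weightSpace] using (hχ ▸ LieSubmodule.mem_top _ : m ∈ N)
  have hend : toEnd ℂ g M x = χ ⟨x, hx⟩ • LinearMap.id := by
    ext m
    simpa using hm m x hx
  have htr : ∀ y : g, LinearMap.trace ℂ _ (toEnd ℂ g M y) = 0 := by
    intro y
    have hy : y ∈ ⁅(⊤ : LieIdeal ℂ g), (⊤ : LieIdeal ℂ g)⁆ := by
      rw [show ⁅(⊤ : LieIdeal ℂ g), (⊤ : LieIdeal ℂ g)⁆ = ⊤ from hperf]; trivial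
    rw [← LieSubmodule.mem_toSubmodule, LieSubmodule.lieIdeal_oper_eq_linear_span'] at hy
    induction hy using Submodule.span_induction with
    | mem u hu => obtain ⟨a, -, b, -, rfl⟩ := hu; simp
    | zero => simp
    | add u v _ _ hu hv => simp [hu, hv]
    | smul t u _ hu => simp [hu]
  have h1 := htr x
  have : Module.finrank ℂ M ≠ 0 := (Module.finrank_pos_iff.mpr ‹_›).ne'
  rw [hend] at h1
  have h2 : χ ⟨x, hx⟩ = 0 := by simpa [this] using h1
  rw [hm m x hx, h2, zero_smul]

theorem subsingleton_of_rad {g : Type*} [LieRing g] [LieAlgebra ℂ g] [FiniteDimensional ℂ g]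
    (hperf : Symp.IsPerfectLie g) (n : ℕ) : ∀ (M : Type _) [AddCommGroup M] [Module ℂ M]
    [LieRingModule g M] [LieModule ℂ g M] [FiniteDimensional ℂ M],
    Module.finrank ℂ M ≤ n → ⁅radical ℂ g, (⊤ : LieSubmodule ℂ g M)⁆ = ⊤ → Subsingleton M := by
  induction n with
  | zero =>
    intro M _ _ _ _ _ hn _
    exact Module.finrank_zero_iff.mp (Nat.le_zero.mp hn)
  | succ n ih =>
    intro M _ _ _ _ _ hn htop
    by_contra hns
    rw [not_subsingleton_iff_nontrivial] at hns
    by_cases hirr : ∀ N : LieSubmodule ℂ g M, N ≠ ⊥ → N = ⊤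
    · have := LieModule.IsIrreducible.mk hirr
      have hb : ⁅radical ℂ g, (⊤ : LieSubmodule ℂ g M)⁆ = ⊥ := by
        rw [LieSubmodule.lie_eq_bot_iff]
        intro x hx m _
        exact rad_acts_zero hperf M x hx m
      rw [hb] at htop
      exact bot_ne_top htop
    · push Not at hirr
      obtain ⟨N, hN, hN'⟩ := hirr
      have hlt : Module.finrank ℂ (M ⧸ N) < Module.finrank ℂ M := by
        have h1 := Submodule.finrank_quotient_add_finrank N.toSubmodule
        have h2 : Module.finrank ℂ N.toSubmodule ≠ 0 := by
          rw [Ne, Submodule.finrank_eq_zero, LieSubmodule.toSubmodule_eq_bot]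
          exact hN
        have h3 : Module.finrank ℂ (M ⧸ N) = Module.finrank ℂ (M ⧸ N.toSubmodule) := rfl
        omega
      have hs := ih (M ⧸ N) (by omega) (by
        have h4 := congrArg (LieSubmodule.map (LieSubmodule.Quotient.mk' N)) htop
        rw [LieSubmodule.map_bracket_eq] at h4
        have h5 : LieSubmodule.map (LieSubmodule.Quotient.mk' N) ⊤ = ⊤ := by
          rw [LieModuleHom.map_top, LieModuleHom.range_eq_top]
          exact LieSubmodule.Quotient.surjective_mk' N
        rwa [h5] at h4)
      apply hN'
      rw [← LieSubmodule.toSubmodule_eq_top]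
      exact Submodule.Quotient.subsingleton_iff.mp hs

theorem ideal_eq_bot {g : Type*} [LieRing g] [LieAlgebra ℂ g] [FiniteDimensional ℂ g]
    (hperf : Symp.IsPerfectLie g) (I : LieIdeal ℂ g) (h : ⁅radical ℂ g, I⁆ = I) : I = ⊥ := by
  have hs := subsingleton_of_rad hperf _ I le_rfl (by
    apply LieSubmodule.map_injective_of_injective (f := LieSubmodule.incl I) Subtype.val_injective
    rw [LieSubmodule.map_bracket_eq]
    simpa using h)
  rw [LieSubmodule.eq_bot_iff]
  intro x hx
  exact congrArg Subtype.val (Subsingleton.elim (⟨x, hx⟩ : I) 0)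

/-- The descending series of ideals `L 0 = g`, `L (n+1) = [Rad g, L n]`. -/
noncomputable def L (g : Type*) [LieRing g] [LieAlgebra ℂ g] : ℕ → LieIdeal ℂ g
  | 0 => ⊤
  | n + 1 => ⁅radical ℂ g, L g n⁆

theorem L_eventually {g : Type*} [LieRing g] [LieAlgebra ℂ g] [FiniteDimensional ℂ g]
    (hperf : Symp.IsPerfectLie g) : ∃ n, L g n = ⊥ := by
  have hanti : Antitone (L g) := antitone_nat_of_succ_le fun n => LieSubmodule.lie_le_right _ _
  have hart := LieSubmodule.wellFoundedLT_of_isArtinian ℂ g g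
  obtain ⟨n, hn⟩ := WellFoundedLT.antitone_chain_condition hanti
  refine ⟨n, ideal_eq_bot hperf _ ?_⟩
  exact (hn (n+1) (Nat.le_succ n)).symm

/-- The combinatorial heart, for a sorted rank function. -/
theorem comb_sorted (P : Fin 3 → Fin 3 → Fin 3 → Prop) (r : Fin 3 → ℕ) (hmono : Monotone r)
    (hsymm : ∀ i j q, P i j q → P j i q)
    (hfun : ∀ i j q q', P i j q → P i j q' → q = q')
    (hr : ∀ i j q, P i j q → r i < r q)
    (hjac : ∀ a b c, P a a b → P a b c → P b b c → ∃ q, P a c q) :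
    ∃ d : Fin 3 → ℂ, d ≠ 0 ∧ ∀ i j q, P i j q → d i + d j = d q := by
  have hlt : ∀ i j q, P i j q → i < q ∧ j < q := fun i j q h =>
    ⟨hmono.reflect_lt (hr i j q h), hmono.reflect_lt (hr j i q (hsymm _ _ _ h))⟩
  have hred : ∀ d : Fin 3 → ℂ, (P 0 0 1 → d 0 + d 0 = d 1) → (P 0 0 2 → d 0 + d 0 = d 2) →
      (P 0 1 2 → d 0 + d 1 = d 2) → (P 1 1 2 → d 1 + d 1 = d 2) →
      ∀ i j q, P i j q → d i + d j = d q := by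
    intro d h1 h2 h3 h4 i j q h
    have h' := hlt i j q h
    have hs := hsymm i j q h
    fin_cases i <;> fin_cases j <;> fin_cases q <;> simp at h' <;> first
      | exact h1 h
      | exact h2 h
      | exact h3 h
      | exact h4 h
      | (rw [add_comm]; exact h3 hs)
  by_cases h1 : P 0 0 1
  · have h2 : ¬ P 0 0 2 := fun h => by simpa using hfun _ _ _ _ h1 h
    by_cases h3 : P 0 1 2
    · have h4 : ¬ P 1 1 2 := fun h => by
        obtain ⟨q, hq⟩ := hjac _ _ _ h1 h3 h
        have := (hlt _ _ _ hq).2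
        fin_cases q <;> simp at this
      refine ⟨![1, 2, 3], fun h => by simpa using congrFun h 0, hred _ ?_ ?_ ?_ ?_⟩ <;>
        intro h <;> first | contradiction | (simp only [Matrix.cons_val]; norm_num)
    · refine ⟨![1, 2, 4], fun h => by simpa using congrFun h 0, hred _ ?_ ?_ ?_ ?_⟩ <;>
        intro h <;> first | contradiction | (simp only [Matrix.cons_val]; norm_num)
  · refine ⟨![1, 1, 2], fun h => by simpa using congrFun h 0, hred _ ?_ ?_ ?_ ?_⟩ <;>
      intro h <;> first | contradiction | (simp only [Matrix.cons_val]; norm_num)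

theorem comb (P : Fin 3 → Fin 3 → Fin 3 → Prop) (r : Fin 3 → ℕ)
    (hsymm : ∀ i j q, P i j q → P j i q)
    (hfun : ∀ i j q q', P i j q → P i j q' → q = q')
    (hr : ∀ i j q, P i j q → r i < r q)
    (hjac : ∀ a b c, P a a b → P a b c → P b b c → ∃ q, P a c q) :
    ∃ d : Fin 3 → ℂ, d ≠ 0 ∧ ∀ i j q, P i j q → d i + d j = d q := by
  let e := Tuple.sort r
  obtain ⟨d, hd, h⟩ := comb_sorted (fun i j q => P (e i) (e j) (e q)) (r ∘ e)
    (Tuple.monotone_sort r) (fun i j q h => hsymm _ _ _ h)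
    (fun i j q q' h h' => e.injective (hfun _ _ _ _ h h')) (fun i j q h => hr _ _ _ h)
    (fun a b c h1 h2 h3 => by
      obtain ⟨q, hq⟩ := hjac _ _ _ h1 h2 h3
      exact ⟨e.symm q, by simpa using hq⟩)
  refine ⟨d ∘ e.symm, fun h0 => hd ?_, fun i j q hP => h _ _ _ (by simpa using hP)⟩
  funext i
  simpa using congrFun h0 (e i)

theorem lieSpan2_comm {g : Type*} [LieRing g] [LieAlgebra ℂ g] (A B : Submodule ℂ g) :
    Symp.lieSpan2 g A B = Symp.lieSpan2 g B A := by
  have key : ∀ A B : Submodule ℂ g, Symp.lieSpan2 g A B ≤ Symp.lieSpan2 g B A := by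
    intro A B
    refine Submodule.span_le.mpr ?_
    rintro z ⟨x, hx, y, hy, rfl⟩
    rw [← lie_skew]
    exact neg_mem (Submodule.subset_span ⟨y, hy, x, hx, rfl⟩)
  exact le_antisymm (key _ _) (key _ _)

theorem lie_mem_span2 {g : Type*} [LieRing g] [LieAlgebra ℂ g] {A B : Submodule ℂ g} {x y : g}
    (hx : x ∈ A) (hy : y ∈ B) : ⁅x, y⁆ ∈ Symp.lieSpan2 g A B :=
  Submodule.subset_span ⟨x, hx, y, hy, rfl⟩

theorem jacobi_aux {g : Type*} [LieRing g] [LieAlgebra ℂ g] {A B C : Submodule ℂ g}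
    (h1 : Symp.lieSpan2 g A A = B) (h2 : Symp.lieSpan2 g A B = C) (h3 : Symp.lieSpan2 g B B = C)
    (h4 : Symp.lieSpan2 g A C = ⊥) : C = ⊥ := by
  rw [← h3, eq_bot_iff]
  refine Submodule.span_le.mpr ?_
  rintro z ⟨x, hx, y, hy, rfl⟩
  have hz : ∀ a ∈ A, ∀ c ∈ C, ⁅a, c⁆ = 0 := fun a ha c hc => by
    simpa [h4] using lie_mem_span2 ha hc
  rw [← h1] at hx
  simp only [Submodule.bot_coe, Set.mem_singleton_iff]
  unfold Symp.lieSpan2 at hx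
  induction hx using Submodule.span_induction with
  | mem w hw =>
    obtain ⟨u, hu, v, hv, rfl⟩ := hw
    rw [lie_lie, hz u hu _ (h2 ▸ lie_mem_span2 hv hy), hz v hv _ (h2 ▸ lie_mem_span2 hu hy),
      sub_zero]
  | zero => simp
  | add a b _ _ ha hb => rw [add_lie, ha, hb, add_zero]
  | smul t a _ ha => rw [smul_lie, ha, smul_zero]

theorem main (g : Type*) [LieRing g] [LieAlgebra ℂ g] [FiniteDimensional ℂ g]
    (hperf : Symp.IsPerfectLie g)
    (s : LieSubalgebra ℂ g) (hs : Symp.IsSimpleLevi g s)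
    (V : Fin 3 → Submodule ℂ g) (hdec : Symp.IsDecomp g s V)
    (hconv : Symp.Convention g V) :
    ∃ D : LieDerivation ℂ g g, ¬ Symp.IsInnerDer D := by
  obtain ⟨hsimple, hcompl⟩ := hs
  obtain ⟨hirr, hind, hsup⟩ := hdec
  obtain ⟨N, hN⟩ := L_eventually hperf
  have hVrad : ∀ i, ∀ x ∈ V i, x ∈ radical ℂ g := fun i x hx => by
    have : V i ≤ (radical ℂ g).toSubmodule := hsup ▸ le_iSup V i
    exact this hx
  have hne : ∀ i, V i ≠ ⊥ := fun i => (hirr i).1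
  -- ranks
  have hex : ∀ i, ∃ k, ¬ V i ≤ (L g k).toSubmodule := fun i => ⟨N, by
    rw [hN]; simpa using hne i⟩
  classical
  let r : Fin 3 → ℕ := fun i => Nat.find (hex i)
  have hlieL : ∀ x ∈ radical ℂ g, ∀ k, ∀ y ∈ L g k, ⁅x, y⁆ ∈ L g (k + 1) := fun x hx k y hy =>
    LieSubmodule.lie_mem_lie hx hy
  have hr : ∀ i j q, Symp.lieSpan2 g (V i) (V j) = V q → r i < r q := by
    intro i j q h
    refine (Nat.lt_find_iff _ _).mpr fun m hm => not_not.mpr ?_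
    cases m with
    | zero => exact fun x _ => LieSubmodule.mem_top x
    | succ k =>
      have hi : V i ≤ (L g k).toSubmodule :=
        not_not.mp (Nat.find_min (hex i) (show k < Nat.find (hex i) from hm))
      rw [← h, lieSpan2_comm]
      refine Submodule.span_le.mpr ?_
      rintro z ⟨x, hx, y, hy, rfl⟩
      exact hlieL x (hVrad j x hx) k y (hi hy)
  obtain ⟨d, hd0, hd⟩ := comb (fun i j q => Symp.lieSpan2 g (V i) (V j) = V q) r
    (fun i j q h => by rw [lieSpan2_comm]; exact h)
    (fun i j q q' h h' => (hconv i j (h ▸ hne q)).unique h h') hr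
    (fun a b c h1 h2 h3 => (hconv a c fun h4 => hne c (jacobi_aux h1 h2 h3 h4)).exists)
  -- the projections
  have hc : ∀ i, IsCompl (V i) ((⨆ j, ⨆ (_ : j ≠ i), V j) ⊔ s.toSubmodule) := by
    intro i
    have h1 : V i ⊔ (⨆ j, ⨆ (_ : j ≠ i), V j) = (radical ℂ g).toSubmodule := by
      rw [← hsup]
      exact (iSup_split_single V i).symm
    refine ⟨(hind i).disjoint_sup_right_of_disjoint_sup_left ?_, ?_⟩
    · rw [h1]; exact hcompl.disjoint.symm
    · rw [codisjoint_iff, ← sup_assoc, h1]; exact hcompl.symm.sup_eq_top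
  let D : g →ₗ[ℂ] g := ∑ i, d i • Submodule.projection _ _ (hc i)
  have hDs : ∀ x ∈ s, D x = 0 := by
    intro x hx
    simp only [D, LinearMap.sum_apply, LinearMap.smul_apply]
    refine Finset.sum_eq_zero fun i _ => ?_
    rw [(Submodule.projection_apply_eq_zero_iff (hc i)).mpr (Submodule.mem_sup_right hx),
      smul_zero]
  have hDV : ∀ i, ∀ x ∈ V i, D x = d i • x := by
    intro i x hx
    simp only [D, LinearMap.sum_apply, LinearMap.smul_apply]
    rw [Finset.sum_eq_single i]
    · rw [Submodule.projection_apply_of_mem_left (hc i) hx]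
    · intro j _ hj
      rw [(Submodule.projection_apply_eq_zero_iff (hc j)).mpr (Submodule.mem_sup_left ?_),
        smul_zero]
      exact Submodule.mem_iSup_of_mem i (Submodule.mem_iSup_of_mem hj.symm hx)
    · simp
  have hinduct : ∀ p : g → Prop, (∀ x ∈ s, p x) → (∀ i, ∀ x ∈ V i, p x) →
      (∀ x y, p x → p y → p (x + y)) → ∀ x, p x := by
    intro p h1 h2 h3 x
    have hx : x ∈ s.toSubmodule ⊔ (radical ℂ g).toSubmodule := by
      rw [hcompl.sup_eq_top]; trivial
    obtain ⟨a, ha, b, hb, rfl⟩ := Submodule.mem_sup.mp hx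
    refine h3 _ _ (h1 a ha) ?_
    rw [← hsup] at hb
    exact Submodule.iSup_induction V (motive := p) hb h2 (h1 0 s.zero_mem) h3
  have hleib : ∀ x y, D ⁅x, y⁆ = ⁅x, D y⁆ - ⁅y, D x⁆ := by
    intro x
    refine hinduct _ ?_ ?_ ?_
    · revert x
      refine hinduct _ ?_ ?_ ?_
      · intro x hx y hy
        rw [hDs _ (s.lie_mem hx hy), hDs x hx, hDs y hy]; simp
      · intro i x hx y hy
        have : ⁅x, y⁆ ∈ V i := by
          rw [← lie_skew]; exact neg_mem ((hirr i).2.1 y hy x hx)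
        rw [hDV i _ this, hDV i x hx, hDs y hy, lie_zero, zero_sub, lie_smul, ← smul_neg, lie_skew]
      · intro x x' h h' y hy
        rw [add_lie, map_add, h y hy, h' y hy, map_add, lie_add, add_lie]; abel
    · revert x
      refine hinduct _ ?_ ?_ ?_
      · intro x hx i y hy
        rw [hDV i _ ((hirr i).2.1 x hx y hy), hDs x hx, hDV i y hy]; simp
      · intro i x hx j y hy
        rw [hDV i x hx, hDV j y hy]
        have hm := lie_mem_span2 hx hy
        by_cases hb : Symp.lieSpan2 g (V i) (V j) = ⊥
        · have h0 : ⁅x, y⁆ = 0 := by simpa [hb] using hm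
          have h0' : ⁅y, x⁆ = 0 := by rw [← lie_skew, h0, neg_zero]
          simp [h0, h0']
        · obtain ⟨q, hq⟩ := (hconv i j hb).exists
          rw [hq] at hm
          rw [hDV q _ hm, ← hd i j q hq, lie_smul, lie_smul, ← lie_skew x y, add_smul]
          simp only [smul_neg]
          abel
      · intro x x' h h' i y hy
        rw [add_lie, map_add, h i y hy, h' i y hy, map_add, lie_add, add_lie]; abel
    · intro y y' h h'
      rw [lie_add, map_add, h, h', map_add, lie_add, add_lie]; abel
  refine ⟨⟨D, hleib⟩, ?_⟩
  rintro ⟨x, hx⟩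
  replace hx : ∀ y, D y = ⁅x, y⁆ := hx
  -- x lies in the radical
  have hxr : x ∈ radical ℂ g := by
    have hx' : x ∈ s.toSubmodule ⊔ (radical ℂ g).toSubmodule := by
      rw [hcompl.sup_eq_top]; trivial
    obtain ⟨a, ha, b, hb, rfl⟩ := Submodule.mem_sup.mp hx'
    have hcen : (⟨a, ha⟩ : s) ∈ center ℂ s := by
      rw [LieModule.mem_maxTrivSubmodule]
      rintro ⟨y, hy⟩
      have h0 := hx y
      rw [hDs y hy, add_lie] at h0
      have h1 : ⁅y, a⁆ ∈ s.toSubmodule := s.lie_mem hy ha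
      have h2 : ⁅y, a⁆ ∈ (radical ℂ g).toSubmodule := by
        have : ⁅y, a⁆ = ⁅b, y⁆ := by rw [← lie_skew, neg_eq_iff_add_eq_zero, ← h0]
        rw [this, ← lie_skew]
        exact neg_mem ((radical ℂ g).lie_mem hb)
      have h3 := (Submodule.disjoint_def.mp hcompl.disjoint) _ h1 h2
      exact Subtype.ext h3
    have hc0 : center ℂ s = ⊥ := LieAlgebra.center_eq_bot ℂ s
    rw [hc0, LieSubmodule.mem_bot] at hcen
    have : a = 0 := congrArg Subtype.val hcen
    rw [this, zero_add]
    exact hb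
  apply hd0
  funext i
  by_contra hi
  obtain ⟨v, hv, hv0⟩ := (Submodule.ne_bot_iff _).mp (hne i)
  have hvL : ∀ k, v ∈ L g k := by
    intro k
    induction k with
    | zero => exact LieSubmodule.mem_top v
    | succ k ih =>
      have h1 := hlieL x hxr k v ih
      rw [← hx, hDV i v hv] at h1
      have h2 := (L g (k + 1)).smul_mem (d i)⁻¹ h1
      rwa [smul_smul, inv_mul_cancel₀ hi, one_smul] at h2
  have := hvL N
  rw [hN, LieSubmodule.mem_bot] at this
  exact hv0 this

end Symp5

/-- perfect, centreless, radical decomposing into exactly 3 simple modules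
(with the convention) implies not sympathetic. -/
theorem stmt5 (g : Type*) [LieRing g] [LieAlgebra ℂ g] [FiniteDimensional ℂ g]
    (hperf : Symp.IsPerfectLie g)
    (hZg : LieAlgebra.center ℂ g = ⊥)
    (s : LieSubalgebra ℂ g) (hs : Symp.IsSimpleLevi g s)
    (V : Fin 3 → Submodule ℂ g) (hdec : Symp.IsDecomp g s V)
    (hconv : Symp.Convention g V) :
    (∃ D : LieDerivation ℂ g g, ¬ Symp.IsInnerDer D) ∧ ¬ Symp.IsSympathetic g := by
  have h := Symp5.main g hperf s hs V hdec hconv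
  refine ⟨h, fun hsym => ?_⟩
  obtain ⟨D, hD⟩ := h
  exact hD (hsym.2.2 D)
end

section
/- Let g = s ⋉ h be a finite-dimensional perfect complex Lie algebra with simple Levi subalgebra s, whose radical h decomposes into 4 simple s-modules V_n, V_m, V_p, V_k with Z(h) = V_k and [h,h] = V_p ⊕ V_k, and whose bracket satisfies [V_n,V_n] = V_p, [V_n,V_p] = V_k, [V_m,V_m] = V_k, and all other brackets among the four modules are zero. Then g admits a diagonalizable derivation that is not inner; in particular g is not sympathetic. -/
namespace SympAux

lemma indep_cons {M : Type*} [AddCommGroup M] [Module ℂ M] {n : ℕ} (S R : Submodule ℂ M)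
    (V : Fin n → Submodule ℂ M) (hV : iSupIndep V) (hR : (⨆ i, V i) = R) (h : IsCompl S R) :
    iSupIndep (Fin.cons S V : Fin (n + 1) → Submodule ℂ M) := by
  rw [iSupIndep_iff_finsetSum_eq_zero_imp_eq_zero] at hV ⊢
  intro t v hv hsum
  classical
  set u : Fin (n + 1) → M := fun i => if i ∈ t then v i else 0 with hu
  have humem : ∀ i, u i ∈ (Fin.cons S V : Fin (n + 1) → Submodule ℂ M) i := by
    intro i
    by_cases hi : i ∈ t
    · simpa [hu, hi] using hv i hi
    · simp [hu, hi]
  have husum : ∑ i, u i = 0 := by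
    rw [← hsum]; simp [hu]
  rw [Fin.sum_univ_succ] at husum
  have h0 : u 0 ∈ S := humem 0
  have h1 : ∀ i : Fin n, u i.succ ∈ V i := fun i => humem i.succ
  have h2 : ∑ i : Fin n, u i.succ ∈ R := by
    rw [← hR]
    exact Submodule.sum_mem _ fun i _ => Submodule.mem_iSup_of_mem i (h1 i)
  have h3 : u 0 = 0 := by
    refine (Submodule.disjoint_def.1 h.disjoint) _ h0 ?_
    rw [eq_neg_of_add_eq_zero_left husum]
    exact R.neg_mem h2
  rw [h3, zero_add] at husum
  have h4 := hV Finset.univ (fun i => u i.succ) (fun i _ => h1 i) husum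
  intro i hi
  have : u i = v i := by simp [hu, hi]
  rw [← this]
  refine Fin.cases h3 (fun j => h4 j (Finset.mem_univ _)) i

lemma top_cons {M : Type*} [AddCommGroup M] [Module ℂ M] {n : ℕ} (S R : Submodule ℂ M)
    (V : Fin n → Submodule ℂ M) (hR : (⨆ i, V i) = R) (h : IsCompl S R) :
    (⨆ i, (Fin.cons S V : Fin (n + 1) → Submodule ℂ M) i) = ⊤ := by
  rw [eq_top_iff, ← h.sup_eq_top, ← hR]
  refine sup_le ?_ (iSup_le fun i => ?_)
  · exact le_iSup (Fin.cons S V : Fin (n + 1) → Submodule ℂ M) 0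
  · exact le_iSup (Fin.cons S V : Fin (n + 1) → Submodule ℂ M) i.succ

lemma exists_scale {M : Type*} [AddCommGroup M] [Module ℂ M] {n : ℕ}
    (W : Fin n → Submodule ℂ M) (hW : iSupIndep W) (hT : (⨆ i, W i) = ⊤) (w : Fin n → ℂ) :
    ∃ D : M →ₗ[ℂ] M, ∀ i, ∀ x ∈ W i, D x = w i • x := by
  have hI := DirectSum.isInternal_submodule_of_iSupIndep_of_iSup_eq_top hW hT
  let e := LinearEquiv.ofBijective (DirectSum.coeLinearMap W) hI
  refine ⟨(DirectSum.toModule ℂ (Fin n) M fun i => w i • (W i).subtype) ∘ₗ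
    e.symm.toLinearMap, fun i x hx => ?_⟩
  have : e.symm x = DirectSum.lof ℂ (Fin n) (fun i => W i) i ⟨x, hx⟩ := by
    rw [LinearEquiv.symm_apply_eq]
    exact (DirectSum.coeLinearMap_lof W i ⟨x, hx⟩).symm
  simp [this, DirectSum.toModule_lof]

lemma semisimple_scale {M : Type*} [AddCommGroup M] [Module ℂ M] [FiniteDimensional ℂ M] {n : ℕ}
    (W : Fin n → Submodule ℂ M) (hT : (⨆ i, W i) = ⊤) (w : Fin n → ℂ)
    (hw : Function.Injective w) (D : Module.End ℂ M) (hD : ∀ i, ∀ x ∈ W i, D x = w i • x) :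
    D.IsSemisimple := by
  have hsq : Squarefree (∏ i, (Polynomial.X - Polynomial.C (w i))) :=
    (Polynomial.separable_prod_X_sub_C_iff.2 hw).squarefree
  refine Module.End.isSemisimple_of_squarefree_aeval_eq_zero hsq ?_
  have hle : (⨆ i, W i) ≤ LinearMap.ker (Polynomial.aeval D
      (∏ i, (Polynomial.X - Polynomial.C (w i)))) := by
    refine iSup_le fun i x hx => ?_
    rw [LinearMap.mem_ker, ← Finset.prod_erase_mul _ _ (Finset.mem_univ i), map_mul,
      Module.End.mul_apply]
    have : (Polynomial.aeval D (Polynomial.X - Polynomial.C (w i))) x = 0 := by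
      simp [hD i x hx, Module.algebraMap_end_apply]
    rw [this, map_zero]
  rw [hT, top_le_iff, LinearMap.ker_eq_top] at hle
  exact hle

end SympAux

/-- the bracket table `[V_n,V_n] = V_p`, `[V_n,V_p] = V_k`, `[V_m,V_m] = V_k`
(all other products zero) forces a diagonalizable non-inner derivation; `g` is not
sympathetic. Here `V 0 = V_n`, `V 1 = V_m`, `V 2 = V_p`, `V 3 = V_k`. -/
theorem stmt8 (g : Type*) [LieRing g] [LieAlgebra ℂ g] [FiniteDimensional ℂ g]
    (hperf : Symp.IsPerfectLie g)
    (s : LieSubalgebra ℂ g) (hs : Symp.IsSimpleLevi g s)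
    (V : Fin 4 → Submodule ℂ g) (hdec : Symp.IsDecomp g s V)
    (hZ : Symp.centerRad g = V 3)
    (hder : Symp.derivedRad g = V 2 ⊔ V 3)
    (h00 : Symp.lieSpan2 g (V 0) (V 0) = V 2)
    (h02 : Symp.lieSpan2 g (V 0) (V 2) = V 3)
    (h11 : Symp.lieSpan2 g (V 1) (V 1) = V 3)
    (h01 : Symp.lieSpan2 g (V 0) (V 1) = ⊥)
    (h03 : Symp.lieSpan2 g (V 0) (V 3) = ⊥)
    (h12 : Symp.lieSpan2 g (V 1) (V 2) = ⊥)
    (h13 : Symp.lieSpan2 g (V 1) (V 3) = ⊥)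
    (h22 : Symp.lieSpan2 g (V 2) (V 2) = ⊥)
    (h23 : Symp.lieSpan2 g (V 2) (V 3) = ⊥)
    (h33 : Symp.lieSpan2 g (V 3) (V 3) = ⊥) :
    (∃ D : LieDerivation ℂ g g,
       Module.End.IsSemisimple (D.toLinearMap : Module.End ℂ g) ∧ ¬ Symp.IsInnerDer D) ∧
    ¬ Symp.IsSympathetic g := by
  obtain ⟨hirr, hind, hsup⟩ := hdec
  obtain ⟨hsim, hcompl⟩ := hs
  set W : Fin 5 → Submodule ℂ g := Fin.cons s.toSubmodule V with hWdef
  have hW : iSupIndep W := SympAux.indep_cons _ _ V hind hsup hcompl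
  have hT : (⨆ i, W i) = ⊤ := SympAux.top_cons _ _ V hsup hcompl
  let w : Fin 5 → ℂ := ![0, 2, 3, 4, 6]
  have hw : Function.Injective w := by
    intro i j hij
    fin_cases i <;> fin_cases j <;> first | rfl | (exfalso; norm_num [w] at hij)
  obtain ⟨D, hD⟩ := SympAux.exists_scale W hW hT w
  have hss := SympAux.semisimple_scale W hT w hw D hD
  have D0 : ∀ x ∈ s, D x = 0 := fun x hx => by simpa [w] using hD 0 x hx
  have D1 : ∀ x ∈ V 0, D x = (2 : ℂ) • x := fun x hx => hD 1 x hx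
  have D2 : ∀ x ∈ V 1, D x = (3 : ℂ) • x := fun x hx => hD 2 x hx
  have D3 : ∀ x ∈ V 2, D x = (4 : ℂ) • x := fun x hx => hD 3 x hx
  have D4 : ∀ x ∈ V 3, D x = (6 : ℂ) • x := fun x hx => hD 4 x hx
  have mem : ∀ {A B C : Submodule ℂ g}, Symp.lieSpan2 g A B = C →
      ∀ a ∈ A, ∀ b ∈ B, ⁅a, b⁆ ∈ C := by
    intro A B C h a ha b hb
    rw [← h]
    exact Submodule.subset_span ⟨a, ha, b, hb, rfl⟩
  have zer : ∀ {A B : Submodule ℂ g}, Symp.lieSpan2 g A B = ⊥ →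
      ∀ a ∈ A, ∀ b ∈ B, ⁅a, b⁆ = 0 := fun h a ha b hb =>
    (Submodule.mem_bot ℂ).1 (mem h a ha b hb)
  -- the key weight computation, for `i ≤ j`
  have key : ∀ i j : Fin 5, i ≤ j → ∀ a ∈ W i, ∀ b ∈ W j, D ⁅a, b⁆ = (w i + w j) • ⁅a, b⁆ := by
    intro i j hij
    have inv : ∀ i : Fin 4, ∀ a ∈ s, ∀ b ∈ V i, ⁅a, b⁆ ∈ V i := fun i => (hirr i).2.1
    fin_cases i <;> fin_cases j <;> first | (exfalso; revert hij; decide) | intro a ha b hb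
    · rw [D0 _ (s.lie_mem ha hb)]; simp [w]
    · rw [D1 _ (inv 0 a ha b hb)]; simp [w]
    · rw [D2 _ (inv 1 a ha b hb)]; simp [w]
    · rw [D3 _ (inv 2 a ha b hb)]; simp [w]
    · rw [D4 _ (inv 3 a ha b hb)]; simp [w]
    · rw [D3 _ (mem h00 a ha b hb)]; norm_num [w]
    · rw [zer h01 a ha b hb]; simp
    · rw [D4 _ (mem h02 a ha b hb)]; norm_num [w]
    · rw [zer h03 a ha b hb]; simp
    · rw [D4 _ (mem h11 a ha b hb)]; norm_num [w]
    · rw [zer h12 a ha b hb]; simp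
    · rw [zer h13 a ha b hb]; simp
    · rw [zer h22 a ha b hb]; simp
    · rw [zer h23 a ha b hb]; simp
    · rw [zer h33 a ha b hb]; simp
  have key2 : ∀ i j : Fin 5, ∀ a ∈ W i, ∀ b ∈ W j, D ⁅a, b⁆ = (w i + w j) • ⁅a, b⁆ := by
    intro i j a ha b hb
    rcases le_total i j with h | h
    · exact key i j h a ha b hb
    · rw [← lie_skew, map_neg, key j i h b hb a ha, add_comm, smul_neg]
  have top_ind : ∀ p : g → Prop, (∀ i, ∀ x ∈ W i, p x) → p 0 →
      (∀ x y, p x → p y → p (x + y)) → ∀ x, p x := by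
    intro p h1 h2 h3 x
    exact Submodule.iSup_induction W (motive := p) (x := x) (by rw [hT]; trivial) h1 h2 h3
  have leib : ∀ a b : g, D ⁅a, b⁆ = ⁅a, D b⁆ - ⁅b, D a⁆ := by
    intro a b
    refine top_ind (fun a => D ⁅a, b⁆ = ⁅a, D b⁆ - ⁅b, D a⁆) ?_ (by simp) ?_ a
    · intro i a ha
      refine top_ind (fun b => D ⁅a, b⁆ = ⁅a, D b⁆ - ⁅b, D a⁆) ?_ (by simp) ?_ b
      · intro j b hb
        rw [key2 i j a ha b hb, hD i a ha, hD j b hb, lie_smul, lie_smul, ← lie_skew a b,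
          add_smul, smul_neg, smul_neg]
        abel
      · intro x y hx hy
        rw [lie_add, map_add, map_add, hx, hy, lie_add, add_lie]
        abel
    · intro x y hx hy
      rw [add_lie, map_add, map_add, hx, hy, lie_add, add_lie]
      abel
  let D' : LieDerivation ℂ g g := { D with leibniz' := leib }
  have hD' : ∀ x, D' x = D x := fun x => rfl
  have hnot : ¬ Symp.IsInnerDer D' := by
    rintro ⟨x, hx⟩
    have hDx : D x = 0 := by rw [← hD', hx, lie_self]
    -- `x` lies in `s`
    have hxs : x ∈ s := by
      have hxT : x ∈ ⨆ i, W i := by rw [hT]; trivial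
      obtain ⟨f, hf, hfx⟩ := (Submodule.mem_iSup_iff_exists_finsupp W x).1 hxT
      rw [Finsupp.sum_fintype _ _ (fun _ => rfl)] at hfx
      have hsum : ∑ i, w i • f i = 0 := by
        rw [← hDx, ← hfx, map_sum]
        exact Finset.sum_congr rfl fun i _ => (hD i _ (hf i)).symm
      have hz := (iSupIndep_iff_finsetSum_eq_zero_imp_eq_zero W).1 hW Finset.univ
        (fun i => w i • f i) (fun i _ => (W i).smul_mem _ (hf i)) hsum
      have hz' : ∀ i : Fin 5, i ≠ 0 → f i = 0 := by
        intro i hi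
        have h := hz i (Finset.mem_univ i)
        refine (smul_eq_zero.1 h).resolve_left fun h0 => hi (hw ?_)
        rw [h0]; rfl
      rw [Finset.sum_eq_single 0 (fun i _ hi => hz' i hi) (by simp)] at hfx
      rw [← hfx]
      exact hf 0
    have hxc : (⟨x, hxs⟩ : s) ∈ LieAlgebra.center ℂ s := by
      rw [LieModule.mem_maxTrivSubmodule]
      intro y
      apply Subtype.ext
      have : ⁅x, (y : g)⁆ = 0 := by rw [← hx, hD', D0 _ y.2]
      rw [LieSubalgebra.coe_bracket, ← lie_skew, this, neg_zero]
      rfl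
    have hx0 : x = 0 := by
      rw [LieAlgebra.center_eq_bot, LieSubmodule.mem_bot] at hxc
      exact congrArg Subtype.val hxc
    apply (hirr 0).1
    rw [eq_bot_iff]
    intro v hv
    have h := D1 v hv
    rw [← hD', hx, hx0, zero_lie] at h
    rw [Submodule.mem_bot]
    exact (smul_eq_zero.1 h.symm).resolve_left (by norm_num)
  exact ⟨⟨D', hss, hnot⟩, fun h => hnot (h.2.2 D')⟩
end
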